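/- arXiv:2504.05123 — 6 statements merged into one kernel-verified Lean document; each statement's English description precedes it below -/
import Mathlib

section
/- Let n ≥ 2. For every integer k ≥ 0, the number of connected compatible partitions of Ĉ_{2n} with exactly k+2 blocks equals, as a rational number, δ_k + Σ_{i=2}^{2n} Σ_{m=1}^{⌊i/2⌋} (2n/i) · C(i, 2m) · C(n+m−1, i−1) · C(2m, i−k), where i−k is computed in ℤ and C(a, b) = 0 whenever b < 0, and where δ_0 = 2, δ_1 = 1, and δ_k = 0 for k > 1. (By Stanley's correspondence between faces of the order polytope and CCPs of the poset with 0̂ and 1̂ adjoined, this number is the number f_k of k-dimensional faces of the order polytope O(C_{2n}).) -/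
/-- Cover relations of the crown poset `C_{2n}` on `{1,…,2n}`:
`2i−1 ≺ 2i` for `1 ≤ i ≤ n`, `2i+1 ≺ 2i` for `1 ≤ i ≤ n−1`, and `1 ≺ 2n`. -/
def crownCover (n x y : ℕ) : Prop :=
  Odd x ∧ Even y ∧ (y = x + 1 ∨ x = y + 1 ∨ (x = 1 ∧ y = 2 * n))

/-- The order relation of the crown poset `C_{2n}` (restricted to `{1,…,2n}`). -/
def crownLe (n x y : ℕ) : Prop := x = y ∨ crownCover n x y

/-- The ground set `{1,…,2n}` of the crown poset. -/
def crownGround (n : ℕ) : Finset ℕ := Finset.Icc 1 (2 * n)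

/-- `π` is a partition of the finite set `s`: blocks are nonempty subsets of `s`
and each element of `s` lies in exactly one block. -/
def IsPartitionOn (s : Finset ℕ) (π : Finset (Finset ℕ)) : Prop :=
  (∀ B ∈ π, B.Nonempty) ∧ (∀ B ∈ π, B ⊆ s) ∧ ∀ x ∈ s, ∃! B, B ∈ π ∧ x ∈ B

/-- A block is connected if it induces a connected subgraph of `G`. -/
def BlockConnected (G : SimpleGraph ℕ) (B : Finset ℕ) : Prop :=
  (G.induce (B : Set ℕ)).Connected

/-- A connected partition of `s` with respect to the graph `G`. -/
def IsConnectedPartition (s : Finset ℕ) (G : SimpleGraph ℕ) (π : Finset (Finset ℕ)) : Prop :=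
  IsPartitionOn s π ∧ ∀ B ∈ π, BlockConnected G B

/-- The comparability graph of the relation `le`. -/
def compGraph (le : ℕ → ℕ → Prop) : SimpleGraph ℕ := SimpleGraph.fromRel le

/-- The relation `B ≤_π B'` on blocks of `π`: both are blocks and there are
`x ∈ B`, `y ∈ B'` with `x ≤ y`. -/
def blockRel (le : ℕ → ℕ → Prop) (π : Finset (Finset ℕ)) (B B' : Finset ℕ) : Prop :=
  B ∈ π ∧ B' ∈ π ∧ ∃ x ∈ B, ∃ y ∈ B', le x y

/-- `π` is compatible: the transitive closure of `≤_π` is antisymmetric. -/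
def IsCompatible (le : ℕ → ℕ → Prop) (π : Finset (Finset ℕ)) : Prop :=
  ∀ B ∈ π, ∀ B' ∈ π, Relation.TransGen (blockRel le π) B B' →
    Relation.TransGen (blockRel le π) B' B → B = B'

/-- A connected and compatible partition (CCP) of the poset with ground set `s`
and order relation `le`. -/
def IsCCP (s : Finset ℕ) (le : ℕ → ℕ → Prop) (π : Finset (Finset ℕ)) : Prop :=
  IsConnectedPartition s (compGraph le) π ∧ IsCompatible le π

/-- The order relation of `Ĉ_{2n}`, the crown poset with a minimum `0̂ = 0` and a
maximum `1̂ = 2n+1` adjoined; ground set `{0,1,…,2n+1}`. -/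
def hatCrownLe (n x y : ℕ) : Prop :=
  x = y ∨ x = 0 ∨ y = 2 * n + 1 ∨
    (x ∈ crownGround n ∧ y ∈ crownGround n ∧ crownCover n x y)

/-- The ground set `{0,…,2n+1}` of `Ĉ_{2n}`. -/
def hatCrownGround (n : ℕ) : Finset ℕ := Finset.Icc 0 (2 * n + 1)

/-- The set of CCPs of `Ĉ_{2n}` with exactly `k` blocks. -/
def hatCCPs (n k : ℕ) : Set (Finset (Finset ℕ)) :=
  {π | IsCCP (hatCrownGround n) (hatCrownLe n) π ∧ π.card = k}

/-- cyclic predecessor -/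
def pr (S : Finset ℕ) (v : ℕ) : ℕ :=
  if (S.filter (· < v)).Nonempty then (S.filter (· < v)).sup id else S.sup id

lemma fv_sup_spec (S : Finset ℕ) (h : S.Nonempty) : S.sup id ∈ S ∧ ∀ t ∈ S, t ≤ S.sup id := by
  refine ⟨?_, fun t ht => Finset.le_sup (f := id) ht⟩
  have := Finset.exists_mem_eq_sup S h id
  obtain ⟨i, hi, e⟩ := this
  rw [e]; exact hi

lemma pr_spec (S : Finset ℕ) (h : S.Nonempty) (v : ℕ) :
    pr S v ∈ S ∧ ((pr S v < v ∧ ∀ t ∈ S, t < v → t ≤ pr S v) ∨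
      ((∀ t ∈ S, v ≤ t) ∧ ∀ t ∈ S, t ≤ pr S v)) := by
  unfold pr
  split_ifs with h1
  · have := fv_sup_spec _ h1
    simp only [Finset.mem_filter] at this
    refine ⟨this.1.1, Or.inl ⟨this.1.2, fun t ht htv => this.2 t ⟨ht, htv⟩⟩⟩
  · have := fv_sup_spec _ h
    refine ⟨this.1, Or.inr ⟨fun t ht => ?_, this.2⟩⟩
    by_contra hlt
    exact h1 ⟨t, by simp [ht]; omega⟩

lemma pr_unique (S : Finset ℕ) (v w : ℕ) (hw : w ∈ S)
    (h : (w < v ∧ ∀ t ∈ S, t < v → t ≤ w) ∨ ((∀ t ∈ S, v ≤ t) ∧ ∀ t ∈ S, t ≤ w)) :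
    pr S v = w := by
  obtain ⟨h1, h2⟩ := pr_spec S ⟨w, hw⟩ v
  rcases h with ⟨a, b⟩ | ⟨a, b⟩ <;> rcases h2 with ⟨c, d⟩ | ⟨c, d⟩
  · have := b _ h1 c; have := d _ hw a; omega
  · have := c _ hw; omega
  · have := a _ h1; omega
  · have := b _ h1; have := d _ hw; omega

lemma pr_injOn (S : Finset ℕ) : Set.InjOn (pr S) S := by
  have key : ∀ a ∈ S, ∀ b ∈ S, a < b → pr S a ≠ pr S b := by
    intro a ha b hb hab
    obtain ⟨h1, h2⟩ := pr_spec S ⟨a, ha⟩ a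
    obtain ⟨h3, h4⟩ := pr_spec S ⟨a, ha⟩ b
    rcases h2 with ⟨c, d⟩ | ⟨c, d⟩ <;> rcases h4 with ⟨e, f⟩ | ⟨e, f⟩
    · have := f a ha hab; omega
    · have := e a ha; omega
    · have := d b hb; omega
    · have := e a ha; omega
  intro a ha b hb hab
  rcases lt_trichotomy a b with h | h | h
  · exact absurd hab (key a ha b hb h)
  · exact h
  · exact absurd hab.symm (key b hb a ha h)

lemma pr_surj (S : Finset ℕ) (s : ℕ) (hs : s ∈ S) : ∃ t ∈ S, pr S t = s := by
  have hm : Set.MapsTo (pr S) S S := fun t ht => (pr_spec S ⟨t, ht⟩ t).1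
  have := Finset.surjOn_of_injOn_of_card_le (pr S) hm (pr_injOn S) le_rfl
  obtain ⟨t, ht, e⟩ := this hs
  exact ⟨t, ht, e⟩

/-- right ends of odd arcs -/
def oddR (S : Finset ℕ) : Finset ℕ := S.filter (fun t => pr S t % 2 ≠ t % 2)
/-- left ends of odd arcs -/
def oddL (S : Finset ℕ) : Finset ℕ := (oddR S).image (pr S)

lemma card_oddL (S : Finset ℕ) : (oddL S).card = (oddR S).card := by
  apply Finset.card_image_of_injOn
  intro a ha b hb
  exact pr_injOn S (Finset.mem_filter.1 ha).1 (Finset.mem_filter.1 hb).1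

lemma oddL_sub (S : Finset ℕ) : oddL S ⊆ S := by
  intro s hs
  obtain ⟨t, ht, rfl⟩ := Finset.mem_image.1 hs
  have ht := (Finset.mem_filter.1 ht).1
  exact (pr_spec S ⟨t, ht⟩ t).1

lemma mem_oddL (S : Finset ℕ) (t : ℕ) (ht : t ∈ S) (h : pr S t ∈ oddL S) :
    pr S t % 2 ≠ t % 2 := by
  obtain ⟨u, hu, e⟩ := Finset.mem_image.1 h
  have hu := Finset.mem_filter.1 hu
  have := pr_injOn S hu.1 ht e
  subst this; exact hu.2

lemma oddR_nonempty (S : Finset ℕ) (a b : ℕ) (ha : a ∈ S) (hb : b ∈ S) (ha' : a % 2 = 0)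
    (hb' : b % 2 = 1) : (oddR S).Nonempty := by
  by_contra hne
  rw [Finset.not_nonempty_iff_eq_empty] at hne
  have h : ∀ t ∈ S, pr S t % 2 = t % 2 := by
    intro t ht
    by_contra hc
    have : t ∈ oddR S := Finset.mem_filter.2 ⟨ht, hc⟩
    rw [hne] at this; simp at this
  obtain ⟨hM, hM'⟩ := fv_sup_spec S ⟨a, ha⟩
  have key : ∀ t, t ∈ S → t % 2 = (S.sup id) % 2 := by
    intro t
    induction t using Nat.strong_induction_on with
    | _ t ih =>
      intro ht
      obtain ⟨h1, h2⟩ := pr_spec S ⟨t, ht⟩ t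
      have h3 := h t ht
      rcases h2 with ⟨c, d⟩ | ⟨c, d⟩
      · have := ih _ c h1; omega
      · have := d _ hM
        have := hM' _ h1
        have : pr S t = S.sup id := by omega
        rw [← h3, this]
  have := key a ha; have := key b hb; omega

/-- linear parity changes -/
def lin (S : Finset ℕ) : Finset ℕ :=
  S.filter (fun t => (∃ u ∈ S, u < t) ∧ pr S t % 2 ≠ t % 2)

/-- minimum has parity r -/
def st (r : ℕ) (S : Finset ℕ) : Prop := ∃ x ∈ S, (∀ y ∈ S, x ≤ y) ∧ x % 2 = r

lemma pr_insert (S : Finset ℕ) (a t : ℕ) (h : ∀ x ∈ S, x < a) (ht : t ∈ S) (hu : ∃ u ∈ S, u < t) :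
    pr (insert a S) t = pr S t := by
  obtain ⟨h1, h2⟩ := pr_spec S ⟨t, ht⟩ t
  apply pr_unique
  · exact Finset.mem_insert_of_mem h1
  · left
    rcases h2 with ⟨c, d⟩ | ⟨c, d⟩
    · refine ⟨c, fun u hu hut => ?_⟩
      rcases Finset.mem_insert.1 hu with rfl | hu
      · have := h t ht; omega
      · exact d u hu hut
    · obtain ⟨u, hu, hut⟩ := hu
      have := c u hu; omega

lemma lin_insert (S : Finset ℕ) (hS : S.Nonempty) (a : ℕ) (h : ∀ x ∈ S, x < a) :
    (lin (insert a S)).card = (lin S).card + if S.sup id % 2 = a % 2 then 0 else 1 := by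
  obtain ⟨hM, hM'⟩ := fv_sup_spec S hS
  have hpa : pr (insert a S) a = S.sup id := by
    apply pr_unique _ _ _ (Finset.mem_insert_of_mem hM)
    left
    refine ⟨h _ hM, fun t ht hta => ?_⟩
    rcases Finset.mem_insert.1 ht with rfl | ht
    · omega
    · exact hM' t ht
  have haS : a ∉ S := fun ha => by have := h a ha; omega
  have e1 : ∀ t ∈ S, (((∃ u ∈ insert a S, u < t) ∧ pr (insert a S) t % 2 ≠ t % 2) ↔
      ((∃ u ∈ S, u < t) ∧ pr S t % 2 ≠ t % 2)) := by
    intro t ht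
    have e2 : (∃ u ∈ insert a S, u < t) ↔ (∃ u ∈ S, u < t) := by
      constructor
      · rintro ⟨u, hu, hut⟩
        rcases Finset.mem_insert.1 hu with rfl | hu
        · have := h t ht; omega
        · exact ⟨u, hu, hut⟩
      · rintro ⟨u, hu, hut⟩
        exact ⟨u, Finset.mem_insert_of_mem hu, hut⟩
    rw [e2]
    apply and_congr_right
    intro hu
    rw [pr_insert S a t h ht hu]
  unfold lin
  rw [Finset.filter_insert, Finset.filter_congr e1, hpa]
  split_ifs with h1 h2 h2
  · exact absurd h2 h1.2
  · rw [Finset.card_insert_of_notMem]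
    simp [haS]
  · rfl
  · exact absurd ⟨⟨_, Finset.mem_insert_of_mem hM, h _ hM⟩, h2⟩ h1

lemma st_insert (S : Finset ℕ) (hS : S.Nonempty) (a r : ℕ) (h : ∀ x ∈ S, x < a) :
    st r (insert a S) ↔ st r S := by
  constructor
  · rintro ⟨x, hx, hy, hr⟩
    rcases Finset.mem_insert.1 hx with rfl | hx
    · obtain ⟨z, hz⟩ := hS
      have := hy z (Finset.mem_insert_of_mem hz); have := h z hz; omega
    · exact ⟨x, hx, fun y hyS => hy y (Finset.mem_insert_of_mem hyS), hr⟩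
  · rintro ⟨x, hx, hy, hr⟩
    refine ⟨x, Finset.mem_insert_of_mem hx, fun y h' => ?_, hr⟩
    rcases Finset.mem_insert.1 h' with rfl | h'
    · exact (h x hx).le
    · exact hy y h'

lemma st_nonempty {r : ℕ} {S : Finset ℕ} (h : st r S) : S.Nonempty := by
  obtain ⟨x, hx, _⟩ := h; exact ⟨x, hx⟩

lemma sup_insert_max (S : Finset ℕ) (a : ℕ) (h : ∀ x ∈ S, x < a) : (insert a S).sup id = a := by
  rw [Finset.sup_insert]
  apply sup_of_le_left
  exact Finset.sup_le fun x hx => (h x hx).le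

lemma lin_singleton (a : ℕ) : lin {a} = ∅ := by
  unfold lin
  apply Finset.filter_eq_empty_iff.2
  simp

lemma lin_parity (r : ℕ) (S : Finset ℕ) : st r S → S.sup id % 2 = (r + (lin S).card) % 2 := by
  induction S using Finset.induction_on_max with
  | empty => rintro ⟨x, hx, _⟩; simp at hx
  | insert a S h ih =>
    intro hs
    rw [sup_insert_max S a h]
    rcases S.eq_empty_or_nonempty with rfl | hS
    · obtain ⟨x, hx, _, hr⟩ := hs
      simp at hx
      subst hx
      simp [lin_singleton]; omega
    · rw [st_insert S hS a r h] at hs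
      rw [lin_insert S hS a h]
      have := ih hs
      split_ifs <;> omega

lemma card_oddR (r : ℕ) (S : Finset ℕ) (hs : st r S) :
    (oddR S).card = (lin S).card + (lin S).card % 2 := by
  have hp := lin_parity r S hs
  obtain ⟨x, hx, hy, hr⟩ := hs
  obtain ⟨hM, hM'⟩ := fv_sup_spec S ⟨x, hx⟩
  have hpx : pr S x = S.sup id := pr_unique _ _ _ hM (Or.inr ⟨hy, hM'⟩)
  by_cases hc : (lin S).card % 2 = 0
  · rw [hc, add_zero]
    congr 1
    unfold oddR lin
    apply Finset.filter_congr
    intro t ht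
    refine ⟨fun h => ⟨?_, h⟩, fun h => h.2⟩
    by_contra hne
    push Not at hne
    have h1 := hne x hx
    have h2 := hy t ht
    have : t = x := by omega
    subst this
    apply h; rw [hpx]; omega
  · have : (lin S).card % 2 = 1 := by omega
    rw [this]
    have hxl : x ∉ lin S := by
      intro h
      obtain ⟨_, ⟨u, hu, hux⟩, _⟩ := Finset.mem_filter.1 h
      have := hy u hu; omega
    rw [← Finset.card_insert_of_notMem hxl]
    congr 1
    ext t
    simp only [oddR, lin, Finset.mem_insert, Finset.mem_filter]
    constructor
    · rintro ⟨ht, h⟩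
      by_cases htx : t = x
      · exact Or.inl htx
      · exact Or.inr ⟨ht, ⟨x, hx, by have := hy t ht; omega⟩, h⟩
    · rintro (rfl | ⟨ht, _, h⟩)
      · refine ⟨hx, ?_⟩; rw [hpx]; omega
      · exact ⟨ht, h⟩
open Classical in
/-- number of subsets of [1,N] with given statistics -/
noncomputable def cnt (r N i c : ℕ) : ℕ :=
  ∑ S ∈ (Finset.Icc 1 N).powerset, if S.card = i ∧ st r S ∧ (lin S).card = c then 1 else 0

lemma fv_icc_succ (N : ℕ) : Finset.Icc 1 (N+1) = insert (N+1) (Finset.Icc 1 N) := by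
  ext x; simp; omega

open Classical in
lemma cnt_succ (r N j c : ℕ) (hr : r < 2) :
    cnt r (N+1) (j+1) c = cnt r N (j+1) c + if (r + c) % 2 = (N+1) % 2 then
      (if j = 0 then (if c = 0 then 1 else 0) else
        cnt r N j c + if c = 0 then 0 else cnt r N j (c-1)) else 0 := by
  unfold cnt
  rw [fv_icc_succ, Finset.sum_powerset_insert (by simp)]
  congr 1
  have hlt : ∀ S ∈ (Finset.Icc 1 N).powerset, ∀ x ∈ S, x < N+1 := by
    intro S hS x hx
    have := Finset.mem_Icc.1 (Finset.mem_powerset.1 hS hx); omega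
  have hcard : ∀ S ∈ (Finset.Icc 1 N).powerset, (insert (N+1) S).card = S.card + 1 := by
    intro S hS
    apply Finset.card_insert_of_notMem
    intro h; have := hlt S hS _ h; omega
  have hst0 : ∀ r, ¬ st r ∅ := by rintro r ⟨x, hx, _⟩; simp at hx
  have hmain : ∀ S ∈ (Finset.Icc 1 N).powerset, S.Nonempty →
      (((insert (N+1) S).card = j+1 ∧ st r (insert (N+1) S) ∧ (lin (insert (N+1) S)).card = c) ↔
        (r + c) % 2 = (N+1) % 2 ∧ ((S.card = j ∧ st r S ∧ (lin S).card = c) ∨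
          (c ≠ 0 ∧ S.card = j ∧ st r S ∧ (lin S).card = c - 1))) := by
    intro S hS hne
    rw [hcard S hS, st_insert S hne _ _ (hlt S hS), lin_insert S hne _ (hlt S hS)]
    by_cases hs : st r S
    · have := lin_parity r S hs
      simp only [hs, true_and]
      split_ifs <;> omega
    · simp [hs]
  by_cases hj : j = 0
  · subst hj
    rw [Finset.sum_eq_single ∅]
    · have h1 : st r (insert (N+1) ∅) ↔ (N+1) % 2 = r := by simp [st]
      have h2 : (lin (insert (N+1) ∅)).card = 0 := by
        rw [insert_empty_eq, lin_singleton]; rfl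
      rw [h1, h2, hcard ∅ (by simp)]
      simp only [Finset.card_empty, zero_add, true_and, if_true]
      split_ifs <;> omega
    · intro S hS hne
      rw [if_neg]
      rw [hcard S hS]
      rintro ⟨h, _⟩
      apply hne
      apply Finset.card_eq_zero.1; omega
    · simp
  · rw [if_neg hj]
    have : ∀ S ∈ (Finset.Icc 1 N).powerset,
      (if ((insert (N+1) S).card = j+1 ∧ st r (insert (N+1) S) ∧ (lin (insert (N+1) S)).card = c)
        then 1 else 0) = if (r + c) % 2 = (N+1) % 2 then
          ((if S.card = j ∧ st r S ∧ (lin S).card = c then 1 else 0) +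
          if c = 0 then 0 else (if S.card = j ∧ st r S ∧ (lin S).card = c-1 then 1 else 0)) else 0 := by
      intro S hS
      rcases S.eq_empty_or_nonempty with rfl | hne
      · rw [hcard _ hS]
        have : ¬ (0 = j) := fun h => hj h.symm
        simp [this, hj, hst0]
      · rw [if_congr (hmain S hS hne) rfl rfl]
        by_cases hs : st r S
        · by_cases hc : S.card = j
          · simp only [hs, hc, true_and]
            split_ifs <;> omega
          · simp [hc]
        · simp [hs]
    rw [Finset.sum_congr rfl this]
    split_ifs
    · simp
    · rw [Finset.sum_add_distrib]
    · simp

lemma cnt_eq (r N j c : ℕ) (hr : r < 2) :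
    cnt r N (j+1) c = j.choose c * ((N + r + c) / 2).choose (j+1) := by
  induction N generalizing j c with
  | zero =>
    have h0 : cnt r 0 (j+1) c = 0 := by
      unfold cnt; simp
    rw [h0]
    by_cases h : c ≤ j
    · rw [Nat.choose_eq_zero_of_lt (by omega : (0 + r + c)/2 < j+1)]; simp
    · rw [Nat.choose_eq_zero_of_lt (by omega : j < c)]; simp
  | succ N ih =>
    rw [cnt_succ r N j c hr, ih]
    split_ifs with h1 h2 h3 h4
    · subst h2 h3
      have : (N + 1 + r + 0)/2 = (N + r + 0)/2 + 1 := by omega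
      rw [this]; simp
    · subst h2
      obtain ⟨c, rfl⟩ := Nat.exists_eq_succ_of_ne_zero h3
      simp
    · subst h4
      obtain ⟨j, rfl⟩ := Nat.exists_eq_succ_of_ne_zero h2
      have : (N + 1 + r + 0)/2 = (N + r + 0)/2 + 1 := by omega
      rw [Nat.succ_eq_add_one, this, ih, Nat.choose_succ_succ ((N + r + 0)/2)]
      simp; ring
    · obtain ⟨j, rfl⟩ := Nat.exists_eq_succ_of_ne_zero h2
      obtain ⟨c, rfl⟩ := Nat.exists_eq_succ_of_ne_zero h4
      simp only [Nat.succ_eq_add_one, Nat.add_sub_cancel] at *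
      have e1 : (N + 1 + r + (c+1))/2 = (N + r + (c+1))/2 + 1 := by omega
      have e2 : (N + r + c)/2 = (N + r + (c+1))/2 := by omega
      rw [ih, ih, e1, e2, Nat.choose_succ_succ ((N + r + (c+1))/2), Nat.choose_succ_succ j c]
      ring
    · have : (N + 1 + r + c)/2 = (N + r + c)/2 := by omega
      rw [this]; simp

open Classical in
lemma count_odd (n i m : ℕ) (hm : 1 ≤ m) :
    (((Finset.Icc 1 (2*n)).powerset.filter (fun S => S.card = i ∧ (oddL S).card = 2*m)).card) =
      cnt 0 (2*n) i (2*m) + cnt 0 (2*n) i (2*m-1) + cnt 1 (2*n) i (2*m) + cnt 1 (2*n) i (2*m-1) := by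
  unfold cnt
  rw [Finset.card_filter, ← Finset.sum_add_distrib, ← Finset.sum_add_distrib,
    ← Finset.sum_add_distrib]
  apply Finset.sum_congr rfl
  intro S _
  rw [card_oddL]
  rcases S.eq_empty_or_nonempty with rfl | ⟨a, ha⟩
  · have hst0 : ∀ r, ¬ st r ∅ := by rintro r ⟨x, hx, _⟩; simp at hx
    have : (oddR ∅).card = 0 := by simp [oddR]
    rw [this]
    simp [hst0]; omega
  · have hx : ∃ x ∈ S, ∀ y ∈ S, x ≤ y := by
      obtain ⟨x, hx, h⟩ := Finset.exists_min_image S id ⟨a, ha⟩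
      exact ⟨x, hx, h⟩
    obtain ⟨x, hx, hy⟩ := hx
    have hst : ∀ r, st r S ↔ x % 2 = r := by
      intro r
      constructor
      · rintro ⟨x', hx', hy', h⟩
        have := hy _ hx'; have := hy' _ hx
        have : x = x' := by omega
        subst this; exact h
      · intro h; exact ⟨x, hx, hy, h⟩
    have h := card_oddR (x % 2) S ((hst _).2 rfl)
    rw [hst, hst, h]
    by_cases hi : S.card = i
    · simp only [hi, true_and]
      split_ifs <;> omega
    · simp [hi]

open Classical in
lemma count_formula (n i m : ℕ) (hi : 2 ≤ i) (hm : 1 ≤ m) (hn : 1 ≤ n) :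
    ((((Finset.Icc 1 (2*n)).powerset.filter (fun S => S.card = i ∧ (oddL S).card = 2*m)).card : ℕ) : ℚ)
      = (2 * n : ℚ) / i * (i.choose (2 * m) : ℚ) * ((n + m - 1).choose (i - 1) : ℚ) := by
  rw [count_odd n i m hm]
  obtain ⟨j, rfl⟩ : ∃ j, i = j + 1 := ⟨i-1, by omega⟩
  obtain ⟨q, rfl⟩ : ∃ q, m = q + 1 := ⟨m-1, by omega⟩
  rw [cnt_eq _ _ _ _ (by omega), cnt_eq _ _ _ _ (by omega), cnt_eq _ _ _ _ (by omega),
    cnt_eq _ _ _ _ (by omega)]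
  have e1 : (2*n + 0 + 2*(q+1))/2 = n + q + 1 := by omega
  have e2 : (2*n + 0 + (2*(q+1)-1))/2 = n + q := by omega
  have e3 : (2*n + 1 + 2*(q+1))/2 = n + q + 1 := by omega
  have e4 : (2*n + 1 + (2*(q+1)-1))/2 = n + q + 1 := by omega
  have e5 : 2*(q+1)-1 = 2*q+1 := by omega
  have e6 : n + (q+1) - 1 = n + q := by omega
  rw [e1, e2, e3, e4, e5, e6, Nat.add_sub_cancel, show 2*(q+1) = (2*q+1)+1 by ring]
  have h1 : (((j+1).choose (2*q+1+1) : ℕ) : ℚ) * (2*q+2) = (j+1) * (j.choose (2*q+1) : ℕ) := by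
    have := Nat.add_one_mul_choose_eq j (2*q+1)
    have h := congrArg (Nat.cast : ℕ → ℚ) this
    push_cast at h
    linarith
  have h2 : (((j+1).choose (2*q+1+1) : ℕ) : ℚ) = (j.choose (2*q+1) : ℕ) + (j.choose (2*q+1+1) : ℕ) := by
    rw [Nat.choose_succ_succ]; push_cast; rfl
  have h3 : (((n+q+1).choose (j+1) : ℕ) : ℚ) = ((n+q).choose j : ℕ) + ((n+q).choose (j+1) : ℕ) := by
    rw [Nat.choose_succ_succ]; push_cast; rfl
  have h4 : (((n+q+1).choose (j+1) : ℕ) : ℚ) * (j+1) = (n+q+1) * ((n+q).choose j : ℕ) := by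
    have := Nat.add_one_mul_choose_eq (n+q) j
    have h := congrArg (Nat.cast : ℕ → ℚ) this
    push_cast at h
    linarith
  push_cast
  have hj : (j + 1 : ℚ) ≠ 0 := by positivity
  rw [div_mul_eq_mul_div, div_mul_eq_mul_div, eq_div_iff hj]
  generalize (((j+1).choose (2*q+1+1) : ℕ) : ℚ) = A at *
  generalize ((j.choose (2*q+1) : ℕ) : ℚ) = B at *
  generalize ((j.choose (2*q+1+1) : ℕ) : ℚ) = C at *
  generalize (((n+q+1).choose (j+1) : ℕ) : ℚ) = D at *
  generalize (((n+q).choose j : ℕ) : ℚ) = E at *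
  generalize (((n+q).choose (j+1) : ℕ) : ℚ) = F at *
  have hC : C = A - B := by linarith
  have hF : F = D - E := by linarith
  subst hC hF
  linear_combination (2*A) * h4 + E * h1
/-- fiber of a labelling -/
def fib (n : ℕ) (g : ℕ → ℕ) (x : ℕ) : Finset ℕ := (hatCrownGround n).filter (fun y => g y = g x)
/-- partition into fibers -/
def PP (n : ℕ) (g : ℕ → ℕ) : Finset (Finset ℕ) := (hatCrownGround n).image (fib n g)

lemma mem_gnd (n x : ℕ) : x ∈ hatCrownGround n ↔ x ≤ 2*n+1 := by simp [hatCrownGround]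

lemma mem_fib (n : ℕ) (g : ℕ → ℕ) (x y : ℕ) : y ∈ fib n g x ↔ y ≤ 2*n+1 ∧ g y = g x := by
  simp [fib, mem_gnd]

lemma mem_PP (n : ℕ) (g : ℕ → ℕ) (B : Finset ℕ) : B ∈ PP n g ↔ ∃ x ≤ 2*n+1, fib n g x = B := by
  simp [PP, mem_gnd]

lemma PP_part (n : ℕ) (g : ℕ → ℕ) : IsPartitionOn (hatCrownGround n) (PP n g) := by
  refine ⟨?_, ?_, ?_⟩
  · intro B hB
    obtain ⟨x, hx, rfl⟩ := (mem_PP _ _ _).1 hB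
    exact ⟨x, (mem_fib _ _ _ _).2 ⟨hx, rfl⟩⟩
  · intro B hB
    obtain ⟨x, hx, rfl⟩ := (mem_PP _ _ _).1 hB
    exact Finset.filter_subset _ _
  · intro x hx
    rw [mem_gnd] at hx
    refine ⟨fib n g x, ⟨(mem_PP _ _ _).2 ⟨x, hx, rfl⟩, (mem_fib _ _ _ _).2 ⟨hx, rfl⟩⟩, ?_⟩
    rintro B ⟨hB, hxB⟩
    obtain ⟨y, hy, rfl⟩ := (mem_PP _ _ _).1 hB
    rw [mem_fib] at hxB
    ext z
    rw [mem_fib, mem_fib, hxB.2]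

lemma PP_ccp (n : ℕ) (g : ℕ → ℕ) (H : ℕ → ℤ)
    (hc : ∀ x ≤ 2*n+1, BlockConnected (compGraph (hatCrownLe n)) (fib n g x))
    (hm : ∀ x ≤ 2*n+1, ∀ y ≤ 2*n+1, hatCrownLe n x y → g x = g y ∨ H (g x) < H (g y)) :
    IsCCP (hatCrownGround n) (hatCrownLe n) (PP n g) := by
  refine ⟨⟨PP_part n g, ?_⟩, ?_⟩
  · intro B hB
    obtain ⟨x, hx, rfl⟩ := (mem_PP _ _ _).1 hB
    exact hc x hx
  · have key : ∀ B B', Relation.TransGen (blockRel (hatCrownLe n) (PP n g)) B B' →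
        ∀ x ∈ B, ∀ y ∈ B', B ∈ PP n g → B' ∈ PP n g → g x = g y ∨ H (g x) < H (g y) := by
      have one : ∀ B B', (blockRel (hatCrownLe n) (PP n g)) B B' →
        ∀ x ∈ B, ∀ y ∈ B', g x = g y ∨ H (g x) < H (g y) := by
        rintro B B' ⟨hB, hB', x, hx, y, hy, hle⟩ x' hx' y' hy'
        obtain ⟨u, hu, rfl⟩ := (mem_PP _ _ _).1 hB
        obtain ⟨v, hv, rfl⟩ := (mem_PP _ _ _).1 hB'
        rw [mem_fib] at *
        have := hm x hx.1 y hy.1 hle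
        rw [hx'.2, hy'.2, ← hx.2, ← hy.2]
        exact this
      intro B B' h
      induction h with
      | single h => intro x hx y hy _ _; exact one _ _ h x hx y hy
      | @tail C D h1 h2 ih =>
        intro x hx y hy hB hD
        have hC := h2.1
        obtain ⟨u, hu, rfl⟩ := (mem_PP _ _ _).1 hC
        have hu' : u ∈ fib n g u := (mem_fib _ _ _ _).2 ⟨hu, rfl⟩
        have a := ih x hx u hu' hB hC
        have b := one _ _ h2 u hu' y hy
        rcases a with a | a <;> rcases b with b | b
        · left; rw [a, b]
        · right; rw [a]; exact b
        · right; rw [← b]; exact a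
        · right; exact a.trans b
    intro B hB B' hB' h h'
    obtain ⟨u, hu, rfl⟩ := (mem_PP _ _ _).1 hB
    obtain ⟨v, hv, rfl⟩ := (mem_PP _ _ _).1 hB'
    have hu' : u ∈ fib n g u := (mem_fib _ _ _ _).2 ⟨hu, rfl⟩
    have hv' : v ∈ fib n g v := (mem_fib _ _ _ _).2 ⟨hv, rfl⟩
    have a := key _ _ h u hu' v hv' hB hB'
    have b := key _ _ h' v hv' u hu' hB' hB
    have e : g u = g v := by
      rcases a with a | a
      · exact a
      · rcases b with b | b
        · exact b.symm
        · omega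
    ext z
    rw [mem_fib, mem_fib, e]

lemma card_PP (n : ℕ) (g : ℕ → ℕ) : (PP n g).card = ((hatCrownGround n).image g).card := by
  have : PP n g = ((hatCrownGround n).image g).image
      (fun l => (hatCrownGround n).filter (fun y => g y = l)) := by
    rw [Finset.image_image]; rfl
  rw [this]
  apply Finset.card_image_of_injOn
  intro a ha b hb hab
  simp only [Finset.coe_image, Set.mem_image, Finset.mem_coe] at ha
  obtain ⟨x, hx, rfl⟩ := ha
  have : x ∈ (hatCrownGround n).filter (fun y => g y = g x) := by simp [hx]
  simp only at hab
  rw [hab] at this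
  exact (Finset.mem_filter.1 this).2

lemma PP_rel (n : ℕ) (g : ℕ → ℕ) (x y : ℕ) (hx : x ≤ 2*n+1) (hy : y ≤ 2*n+1) :
    (∃ B ∈ PP n g, x ∈ B ∧ y ∈ B) ↔ g x = g y := by
  constructor
  · rintro ⟨B, hB, h1, h2⟩
    obtain ⟨u, hu, rfl⟩ := (mem_PP _ _ _).1 hB
    rw [mem_fib] at h1 h2
    rw [h1.2, h2.2]
  · intro h
    exact ⟨fib n g x, (mem_PP _ _ _).2 ⟨x, hx, rfl⟩, (mem_fib _ _ _ _).2 ⟨hx, rfl⟩,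
      (mem_fib _ _ _ _).2 ⟨hy, h.symm⟩⟩

lemma PP_inj (n : ℕ) (g g' : ℕ → ℕ) (h : PP n g = PP n g') (x y : ℕ) (hx : x ≤ 2*n+1)
    (hy : y ≤ 2*n+1) : g x = g y ↔ g' x = g' y := by
  rw [← PP_rel n g x y hx hy, h, PP_rel n g' x y hx hy]

lemma eq_PP (n : ℕ) (g : ℕ → ℕ) (π : Finset (Finset ℕ)) (hp : IsPartitionOn (hatCrownGround n) π)
    (h : ∀ x ≤ 2*n+1, ∀ y ≤ 2*n+1, ((∃ B ∈ π, x ∈ B ∧ y ∈ B) ↔ g x = g y)) : π = PP n g := by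
  obtain ⟨h1, h2, h3⟩ := hp
  have key : ∀ B ∈ π, ∀ x ∈ B, B = fib n g x := by
    intro B hB x hx
    have hxg := (mem_gnd _ _).1 (h2 B hB hx)
    ext z
    rw [mem_fib]
    constructor
    · intro hz
      have hzg := (mem_gnd _ _).1 (h2 B hB hz)
      exact ⟨hzg, (h z hzg x hxg).1 ⟨B, hB, hz, hx⟩⟩
    · rintro ⟨hzg, e⟩
      obtain ⟨B', hB', hz, hx'⟩ := (h z hzg x hxg).2 e
      have := (h3 x ((mem_gnd _ _).2 hxg)).unique ⟨hB, hx⟩ ⟨hB', hx'⟩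
      rw [this]; exact hz
  ext B
  rw [mem_PP]
  constructor
  · intro hB
    obtain ⟨x, hx⟩ := h1 B hB
    exact ⟨x, (mem_gnd _ _).1 (h2 B hB hx), (key B hB x hx).symm⟩
  · rintro ⟨x, hx, rfl⟩
    obtain ⟨B, ⟨hB, hxB⟩, _⟩ := h3 x ((mem_gnd _ _).2 hx)
    rw [← key B hB x hxB]; exact hB

/-- cyclic successor of vertices -/
def sc (n v : ℕ) : ℕ := if v = 2*n then 1 else v+1

lemma le_edge (n x y : ℕ) (hx : 1 ≤ x) (hx' : x ≤ 2*n) (hy : 1 ≤ y) (hy' : y ≤ 2*n)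
    (hxy : x ≠ y) (h : hatCrownLe n x y) : ∃ e, 1 ≤ e ∧ e ≤ 2*n ∧
      ((e % 2 = 1 ∧ x = e ∧ y = sc n e) ∨ (e % 2 = 0 ∧ x = sc n e ∧ y = e)) := by
  unfold hatCrownLe crownCover at h
  rcases h with h | h | h | ⟨_, _, ho, he, h⟩
  · exact absurd h hxy
  · omega
  · omega
  · rw [Nat.odd_iff] at ho
    rw [Nat.even_iff] at he
    unfold sc
    rcases h with h | h | ⟨h, h'⟩
    · refine ⟨x, hx, hx', Or.inl ⟨ho, rfl, ?_⟩⟩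
      split_ifs <;> omega
    · refine ⟨y, hy, hy', Or.inr ⟨he, ?_, rfl⟩⟩
      split_ifs <;> omega
    · refine ⟨y, hy, hy', Or.inr ⟨he, ?_, rfl⟩⟩
      split_ifs; omega

lemma sc_range (n v : ℕ) (h : 1 ≤ v) (h' : v ≤ 2*n) : 1 ≤ sc n v ∧ sc n v ≤ 2*n := by
  unfold sc; split_ifs <;> omega

lemma edge_le_odd (n e : ℕ) (h1 : 1 ≤ e) (h2 : e ≤ 2*n) (ho : e % 2 = 1) :
    hatCrownLe n e (sc n e) := by
  have := sc_range n e h1 h2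
  right; right; right
  refine ⟨by simp [crownGround]; omega, by simp [crownGround]; omega, ?_⟩
  unfold crownCover sc
  rw [Nat.odd_iff, Nat.even_iff]
  split_ifs <;> omega

lemma edge_le_even (n e : ℕ) (h1 : 1 ≤ e) (h2 : e ≤ 2*n) (ho : e % 2 = 0) :
    hatCrownLe n (sc n e) e := by
  have := sc_range n e h1 h2
  right; right; right
  refine ⟨by simp [crownGround]; omega, by simp [crownGround]; omega, ?_⟩
  unfold crownCover sc
  rw [Nat.odd_iff, Nat.even_iff]
  split_ifs <;> omega

lemma edge_adj (n e : ℕ) (h1 : 1 ≤ e) (h2 : e ≤ 2*n) : (compGraph (hatCrownLe n)).Adj e (sc n e) := by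
  unfold compGraph
  rw [SimpleGraph.fromRel_adj]
  refine ⟨by unfold sc; split_ifs <;> omega, ?_⟩
  rcases Nat.mod_two_eq_zero_or_one e with h | h
  · right; exact edge_le_even n e h1 h2 h
  · left; exact edge_le_odd n e h1 h2 h

lemma pr_sc_mem (n : ℕ) (S : Finset ℕ) (hS : ∀ s ∈ S, 1 ≤ s ∧ s ≤ 2*n) (v : ℕ) (hv : v ∈ S) :
    pr S (sc n v) = v := by
  apply pr_unique _ _ _ hv
  unfold sc
  have := hS v hv
  split_ifs with h
  · right
    exact ⟨fun t ht => (hS t ht).1, fun t ht => by have := hS t ht; omega⟩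
  · left
    exact ⟨by omega, fun t ht h => by omega⟩

lemma pr_sc_notMem (n : ℕ) (S : Finset ℕ) (hS : ∀ s ∈ S, 1 ≤ s ∧ s ≤ 2*n) (hne : S.Nonempty)
    (v : ℕ) (hv' : v ≤ 2*n) (hv : v ∉ S) :
    pr S (sc n v) = pr S v := by
  obtain ⟨h1, h2⟩ := pr_spec S hne v
  apply pr_unique _ _ _ h1
  unfold sc
  have hne' : ∀ t ∈ S, t ≠ v := fun t ht h => hv (h ▸ ht)
  split_ifs with h
  · right
    refine ⟨fun t ht => (hS t ht).1, fun t ht => ?_⟩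
    rcases h2 with ⟨c, d⟩ | ⟨c, d⟩
    · apply d t ht
      have := hS t ht; have := hne' t ht; omega
    · exact d t ht
  · rcases h2 with ⟨c, d⟩ | ⟨c, d⟩
    · left
      refine ⟨by omega, fun t ht h => d t ht ?_⟩
      have := hne' t ht; omega
    · right
      refine ⟨fun t ht => ?_, d⟩
      have := hne' t ht; have := c t ht; omega

lemma arc_ind (n : ℕ) (S : Finset ℕ) (hS : ∀ s ∈ S, 1 ≤ s ∧ s ≤ 2*n) (s : ℕ) (hs : s ∈ S)
    (Q : ℕ → Prop) (h0 : Q (sc n s))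
    (hstep : ∀ v, 1 ≤ v → v ≤ 2*n → v ∉ S → pr S v = s → Q v → Q (sc n v)) :
    ∀ v, 1 ≤ v → v ≤ 2*n → pr S v = s → Q v := by
  have hsr := hS s hs
  have A : ∀ v, s < v → v ≤ 2*n → pr S v = s → Q v := by
    intro v
    induction v with
    | zero => intro h; omega
    | succ v ih =>
      intro h1 h2 h3
      have e : sc n v = v + 1 := by unfold sc; split_ifs <;> omega
      by_cases hv : v ∈ S
      · rw [← e, pr_sc_mem n S hS v hv] at h3
        rw [h3] at e
        rw [h3, ← e]; exact h0
      · rw [← e, pr_sc_notMem n S hS ⟨s, hs⟩ v (by omega) hv] at h3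
        have hvs : v ≠ s := fun h => hv (h ▸ hs)
        rw [← e]
        exact hstep v (by omega) (by omega) hv h3 (ih (by omega) (by omega) h3)
  intro v
  induction v with
  | zero => intro h; omega
  | succ v ih =>
    intro h1 h2 h3
    by_cases hvs : s < v + 1
    · exact A _ hvs h2 h3
    · by_cases hv0 : v = 0
      · subst hv0
        have e : sc n (2*n) = 0+1 := by simp [sc]
        by_cases hv : 2*n ∈ S
        · rw [← e, pr_sc_mem n S hS _ hv] at h3
          rw [← e, h3]; exact h0
        · have hs2 : s ≠ 2*n := fun h => hv (h ▸ hs)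
          rw [← e, pr_sc_notMem n S hS ⟨s, hs⟩ _ le_rfl hv] at h3
          rw [← e]
          exact hstep _ (by omega) le_rfl hv h3 (A _ (by omega) le_rfl h3)
      · have e : sc n v = v + 1 := by unfold sc; split_ifs <;> omega
        by_cases hv : v ∈ S
        · rw [← e, pr_sc_mem n S hS v hv] at h3
          omega
        · rw [← e, pr_sc_notMem n S hS ⟨s, hs⟩ v (by omega) hv] at h3
          rw [← e]
          exact hstep v (by omega) (by omega) hv h3 (ih (by omega) (by omega) h3)

lemma conn_of_star (G : SimpleGraph ℕ) (B : Finset ℕ) (a : ℕ) (ha : a ∈ B)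
    (h : ∀ b ∈ B, b ≠ a → G.Adj a b) : BlockConnected G B := by
  unfold BlockConnected
  rw [SimpleGraph.connected_iff_exists_forall_reachable]
  refine ⟨⟨a, ha⟩, ?_⟩
  rintro ⟨b, hb⟩
  by_cases hab : b = a
  · subst hab; exact SimpleGraph.Reachable.refl _
  · exact SimpleGraph.Adj.reachable (h b hb hab)

lemma const_of_conn (G : SimpleGraph ℕ) (B : Finset ℕ) (f : ℕ → ℕ) (hB : BlockConnected G B)
    (h : ∀ a ∈ B, ∀ b ∈ B, G.Adj a b → f a = f b) : ∀ a ∈ B, ∀ b ∈ B, f a = f b := by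
  intro a ha b hb
  obtain ⟨w⟩ := hB.preconnected ⟨a, ha⟩ ⟨b, hb⟩
  have : ∀ (u v : (B : Set ℕ)), (G.induce (B : Set ℕ)).Walk u v → f u = f v := by
    intro u v w
    induction w with
    | nil => rfl
    | @cons u v w h' p ih =>
      rw [← ih]
      exact h u u.2 v v.2 h'
  exact this _ _ w
/-- label of an arc -/
def GG (n : ℕ) (T : Finset ℕ) (s : ℕ) : ℕ := if s ∈ T then (if s % 2 = 0 then 0 else 2*n+1) else s
/-- vertex labelling -/
def gl (n : ℕ) (S T : Finset ℕ) (v : ℕ) : ℕ :=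
  if v = 0 then 0 else if v = 2*n+1 then 2*n+1 else GG n T (pr S v)

/-- potential -/
def HH (S : Finset ℕ) (s : ℕ) : ℤ :=
  ((S.filter (fun t => t % 2 = 0)).card : ℤ) * (S.filter (fun t => t % 2 = 1 ∧ t ≤ s)).card
  - ((S.filter (fun t => t % 2 = 1)).card : ℤ) * (S.filter (fun t => t % 2 = 0 ∧ t ≤ s)).card

lemma HH_step (S : Finset ℕ) (s : ℕ) (hs : s ∈ S) :
    HH S s = HH S (pr S s) + if s % 2 = 1 then ((S.filter (fun t => t % 2 = 0)).card : ℤ)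
      else - ((S.filter (fun t => t % 2 = 1)).card : ℤ) := by
  obtain ⟨h1, h2⟩ := pr_spec S ⟨s, hs⟩ s
  have key : ∀ i, ∀ j, (S.filter (fun t => t % 2 = i)).card = j →
      (((S.filter (fun t => t % 2 = i ∧ t ≤ s)).card : ℕ)
        = (S.filter (fun t => t % 2 = i ∧ t ≤ pr S s)).card + if s % 2 = i then 1 else 0) ∨
      (((S.filter (fun t => t % 2 = i ∧ t ≤ s)).card : ℕ) = (if s % 2 = i then 1 else 0) ∧
        (S.filter (fun t => t % 2 = i ∧ t ≤ pr S s)).card = j ∧ ∀ t ∈ S, s ≤ t) := by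
    rintro i j rfl
    rcases h2 with ⟨c, d⟩ | ⟨c, d⟩
    · left
      split_ifs with hi
      · rw [← Finset.card_insert_of_notMem (a := s)]
        · congr 1
          ext t
          simp only [Finset.mem_filter, Finset.mem_insert]
          constructor
          · rintro ⟨a, b, e⟩
            by_cases h : t = s
            · exact Or.inl h
            · exact Or.inr ⟨a, b, d t a (by omega)⟩
          · rintro (rfl | ⟨a, b, e⟩)
            · exact ⟨hs, hi, le_rfl⟩
            · exact ⟨a, b, by omega⟩
        · simp only [Finset.mem_filter]; omega
      · rw [add_zero]
        congr 1
        apply Finset.filter_congr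
        intro t ht
        constructor
        · rintro ⟨b, e⟩
          refine ⟨b, d t ht ?_⟩
          rcases Nat.lt_or_ge t s with h | h
          · exact h
          · have : t = s := by omega
            subst this; omega
        · rintro ⟨b, e⟩; exact ⟨b, by omega⟩
    · right
      refine ⟨?_, ?_, c⟩
      · split_ifs with hi
        · rw [Finset.card_eq_one]
          refine ⟨s, ?_⟩
          ext t
          simp only [Finset.mem_filter, Finset.mem_singleton]
          constructor
          · rintro ⟨a, b, e⟩
            have := c t a; omega
          · rintro rfl; exact ⟨hs, hi, le_rfl⟩
        · rw [Finset.card_eq_zero, Finset.filter_eq_empty_iff]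
          rintro t ht ⟨b, e⟩
          have := c t ht
          have : t = s := by omega
          subst this; omega
      · congr 1
        apply Finset.filter_congr
        intro t ht
        have := d t ht
        simp [this]
  have k0 := key 0 _ rfl
  have k1 := key 1 _ rfl
  clear key
  unfold HH
  rcases h2 with ⟨c, d⟩ | ⟨c, d⟩
  · have n0 : ¬ ∀ t ∈ S, s ≤ t := fun h => by have := h _ h1; omega
    have k0 := k0.resolve_right (fun h => n0 h.2.2)
    have k1 := k1.resolve_right (fun h => n0 h.2.2)
    rw [k0, k1]
    rcases Nat.mod_two_eq_zero_or_one s with h | h <;> simp [h] <;> ring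
  · have e0 : (S.filter (fun t => t % 2 = 0 ∧ t ≤ pr S s)).card = (S.filter (fun t => t % 2 = 0)).card := by
      congr 1
      apply Finset.filter_congr
      intro t ht
      have := d t ht
      simp [this]
    have e1 : (S.filter (fun t => t % 2 = 1 ∧ t ≤ pr S s)).card = (S.filter (fun t => t % 2 = 1)).card := by
      congr 1
      apply Finset.filter_congr
      intro t ht
      have := d t ht
      simp [this]
    have f : ∀ i, ((S.filter (fun t => t % 2 = i ∧ t ≤ s)).card : ℕ) = (if s % 2 = i then 1 else 0) := by
      intro i
      split_ifs with hi
      · rw [Finset.card_eq_one]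
        refine ⟨s, ?_⟩
        ext t
        simp only [Finset.mem_filter, Finset.mem_singleton]
        constructor
        · rintro ⟨a, b, e⟩
          have := c t a; omega
        · rintro rfl; exact ⟨hs, hi, le_rfl⟩
      · rw [Finset.card_eq_zero, Finset.filter_eq_empty_iff]
        rintro t ht ⟨b, e⟩
        have := c t ht
        have : t = s := by omega
        subst this; omega
    rw [e0, e1, f 0, f 1]
    rcases Nat.mod_two_eq_zero_or_one s with h | h <;> simp [h] <;> ring

/-- bound -/
def MM (S : Finset ℕ) : ℤ :=
  ((S.filter (fun t => t % 2 = 0)).card : ℤ) * (S.filter (fun t => t % 2 = 1)).card + 1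

lemma HH_bound (S : Finset ℕ) (s : ℕ) : - MM S < HH S s ∧ HH S s < MM S := by
  have a : (S.filter (fun t => t % 2 = 1 ∧ t ≤ s)).card ≤ (S.filter (fun t => t % 2 = 1)).card :=
    Finset.card_le_card (fun t => by simp only [Finset.mem_filter]; tauto)
  have b : (S.filter (fun t => t % 2 = 0 ∧ t ≤ s)).card ≤ (S.filter (fun t => t % 2 = 0)).card :=
    Finset.card_le_card (fun t => by simp only [Finset.mem_filter]; tauto)
  unfold HH MM
  generalize (S.filter (fun t => t % 2 = 1 ∧ t ≤ s)).card = x at *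
  generalize (S.filter (fun t => t % 2 = 0 ∧ t ≤ s)).card = y at *
  generalize (S.filter (fun t => t % 2 = 1)).card = X at *
  generalize (S.filter (fun t => t % 2 = 0)).card = Y at *
  have h1 : (Y:ℤ) * x ≤ Y * X := by gcongr
  have h2 : (X:ℤ) * y ≤ X * Y := by gcongr
  have h3 : (0:ℤ) ≤ Y * x := by positivity
  have h4 : (0:ℤ) ≤ X * y := by positivity
  have h5 : (X:ℤ) * Y = Y * X := by ring
  constructor <;> linarith

/-- full potential on labels -/
def HL (n : ℕ) (S : Finset ℕ) (l : ℕ) : ℤ := if l = 0 then - MM S else if l = 2*n+1 then MM S else HH S l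

/-- valid data -/
structure Good (n : ℕ) (S T : Finset ℕ) : Prop where
  rng : ∀ s ∈ S, 1 ≤ s ∧ s ≤ 2*n
  sub : T ⊆ oddL S
  ne : (oddL S).Nonempty

lemma Good.neS {n : ℕ} {S T : Finset ℕ} (h : Good n S T) : S.Nonempty := by
  obtain ⟨x, hx⟩ := h.ne
  exact ⟨x, oddL_sub S hx⟩

lemma Good.both {n : ℕ} {S T : Finset ℕ} (h : Good n S T) :
    (∃ a ∈ S, a % 2 = 0) ∧ (∃ b ∈ S, b % 2 = 1) := by
  obtain ⟨x, hx⟩ := h.ne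
  obtain ⟨t, ht, rfl⟩ := Finset.mem_image.1 hx
  obtain ⟨h1, h2⟩ := Finset.mem_filter.1 ht
  have h3 := (pr_spec S h.neS t).1
  rcases Nat.mod_two_eq_zero_or_one t with e | e
  · exact ⟨⟨t, h1, e⟩, ⟨_, h3, by omega⟩⟩
  · exact ⟨⟨_, h3, by omega⟩, ⟨t, h1, e⟩⟩

lemma gl_mid (n : ℕ) (S T : Finset ℕ) (v : ℕ) (h : 1 ≤ v) (h' : v ≤ 2*n) :
    gl n S T v = GG n T (pr S v) := by
  unfold gl; rw [if_neg (by omega), if_neg (by omega)]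

lemma gl_zero (n : ℕ) (S T : Finset ℕ) : gl n S T 0 = 0 := by simp [gl]
lemma gl_top (n : ℕ) (S T : Finset ℕ) : gl n S T (2*n+1) = 2*n+1 := by simp [gl]

lemma HL_zero (n : ℕ) (S : Finset ℕ) : HL n S 0 = - MM S := by simp [HL]
lemma HL_top (n : ℕ) (S : Finset ℕ) : HL n S (2*n+1) = MM S := by simp [HL]
lemma MM_pos (S : Finset ℕ) : 0 < MM S := by unfold MM; positivity
lemma HL_bound (n : ℕ) (S : Finset ℕ) (l : ℕ) : - MM S ≤ HL n S l ∧ HL n S l ≤ MM S := by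
  have := HH_bound S l
  have := MM_pos S
  unfold HL; split_ifs <;> constructor <;> linarith

lemma HL_lt (n : ℕ) (S : Finset ℕ) (l : ℕ) : (l ≠ 0 → - MM S < HL n S l) ∧ (l ≠ 2*n+1 → HL n S l < MM S) := by
  have := HH_bound S l
  have := MM_pos S
  unfold HL; split_ifs <;> constructor <;> intro _ <;> first | linarith | contradiction

lemma edge_mono {n : ℕ} {S T : Finset ℕ} (h : Good n S T) (e : ℕ) (he : e ∈ S) :
    (e % 2 = 1 → HL n S (GG n T (pr S e)) < HL n S (GG n T e)) ∧
    (e % 2 = 0 → HL n S (GG n T e) < HL n S (GG n T (pr S e))) := by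
  have hM := MM_pos S
  have hp := (pr_spec S h.neS e).1
  have hst := HH_step S e he
  have hre := h.rng e he
  have hrp := h.rng _ hp
  have b1 := HH_bound S e
  have b2 := HH_bound S (pr S e)
  have hE : 0 < ((S.filter (fun t => t % 2 = 0)).card : ℤ) := by
    obtain ⟨a, ha, ha'⟩ := h.both.1
    have : 0 < (S.filter (fun t => t % 2 = 0)).card := Finset.card_pos.2 ⟨a, by simp [ha, ha']⟩
    exact_mod_cast this
  have hO : 0 < ((S.filter (fun t => t % 2 = 1)).card : ℤ) := by
    obtain ⟨a, ha, ha'⟩ := h.both.2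
    have : 0 < (S.filter (fun t => t % 2 = 1)).card := Finset.card_pos.2 ⟨a, by simp [ha, ha']⟩
    exact_mod_cast this
  have v1 : HL n S e = HH S e := by unfold HL; rw [if_neg (by omega), if_neg (by omega)]
  have v2 : HL n S (pr S e) = HH S (pr S e) := by
    unfold HL; rw [if_neg (by omega), if_neg (by omega)]
  have hT : pr S e ∈ T → pr S e % 2 ≠ e % 2 := fun hh => mem_oddL S e he (h.sub hh)
  constructor
  · intro ho
    rw [if_pos ho] at hst
    unfold GG
    rw [if_neg (by omega : ¬ e % 2 = 0)]
    by_cases c1 : pr S e ∈ T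
    · have := hT c1
      rw [if_pos c1, if_pos (by omega), HL_zero]
      split_ifs
      · rw [HL_top]; linarith
      · linarith
    · rw [if_neg c1, v2]
      split_ifs
      · rw [HL_top]; linarith
      · linarith
  · intro ho
    rw [if_neg (by omega)] at hst
    unfold GG
    rw [if_pos ho]
    by_cases c1 : pr S e ∈ T
    · have := hT c1
      rw [if_pos c1, if_neg (by omega : ¬ pr S e % 2 = 0), HL_top]
      split_ifs
      · rw [HL_zero]; linarith
      · linarith
    · rw [if_neg c1, v2]
      split_ifs
      · rw [HL_zero]; linarith
      · linarith

lemma good_mono {n : ℕ} {S T : Finset ℕ} (h : Good n S T) (x y : ℕ) (hx : x ≤ 2*n+1)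
    (hy : y ≤ 2*n+1) (hle : hatCrownLe n x y) :
    gl n S T x = gl n S T y ∨ HL n S (gl n S T x) < HL n S (gl n S T y) := by
  by_cases hxy : x = y
  · left; rw [hxy]
  by_cases hx0 : x = 0
  · subst hx0
    rw [gl_zero, HL_zero]
    by_cases c : gl n S T y = 0
    · left; exact c.symm
    · right; exact (HL_lt n S _).1 c
  by_cases hy0 : y = 2*n+1
  · subst hy0
    rw [gl_top, HL_top]
    by_cases c : gl n S T x = 2*n+1
    · left; exact c
    · right; exact (HL_lt n S _).2 c
  have hx1 : x ≤ 2*n := by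
    by_contra hc
    unfold hatCrownLe crownGround at hle
    simp only [Finset.mem_Icc] at hle
    omega
  have hy1 : 1 ≤ y := by
    by_contra hc
    unfold hatCrownLe crownGround at hle
    simp only [Finset.mem_Icc] at hle
    omega
  obtain ⟨e, he1, he2, hh⟩ := le_edge n x y (by omega) hx1 hy1 (by omega) hxy hle
  have hsc := sc_range n e he1 he2
  by_cases heS : e ∈ S
  · right
    have := edge_mono h e heS
    rcases hh with ⟨ho, rfl, rfl⟩ | ⟨ho, rfl, rfl⟩
    · rw [gl_mid n S T _ he1 he2, gl_mid n S T _ hsc.1 hsc.2, pr_sc_mem n S h.rng _ heS]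
      exact this.1 ho
    · rw [gl_mid n S T _ he1 he2, gl_mid n S T _ hsc.1 hsc.2, pr_sc_mem n S h.rng _ heS]
      exact this.2 ho
  · left
    have : gl n S T (sc n e) = gl n S T e := by
      rw [gl_mid n S T _ he1 he2, gl_mid n S T _ hsc.1 hsc.2,
        pr_sc_notMem n S h.rng h.neS _ he2 heS]
    rcases hh with ⟨ho, rfl, rfl⟩ | ⟨ho, rfl, rfl⟩
    · exact this.symm
    · exact this

lemma adj_zero (n x : ℕ) (hx : x ≠ 0) : (compGraph (hatCrownLe n)).Adj 0 x := by
  unfold compGraph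
  rw [SimpleGraph.fromRel_adj]
  exact ⟨hx.symm, Or.inl (Or.inr (Or.inl rfl))⟩

lemma adj_top (n x : ℕ) (hx : x ≠ 2*n+1) : (compGraph (hatCrownLe n)).Adj (2*n+1) x := by
  unfold compGraph
  rw [SimpleGraph.fromRel_adj]
  exact ⟨hx.symm, Or.inr (Or.inr (Or.inr (Or.inl rfl)))⟩

lemma GG_cases (n : ℕ) (T : Finset ℕ) (s : ℕ) :
    GG n T s = 0 ∨ GG n T s = 2*n+1 ∨ (s ∉ T ∧ GG n T s = s) := by
  unfold GG; split_ifs <;> simp_all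

lemma fib_conn_end (n : ℕ) (g : ℕ → ℕ) (h0 : g 0 = 0) (h1 : g (2*n+1) = 2*n+1) (x : ℕ)
    (h : g x = 0 ∨ g x = 2*n+1) : BlockConnected (compGraph (hatCrownLe n)) (fib n g x) := by
  rcases h with h | h
  · apply conn_of_star _ _ 0
    · rw [mem_fib, h0, h]; omega
    · intro b _ hb; exact adj_zero n b hb
  · apply conn_of_star _ _ (2*n+1)
    · rw [mem_fib, h1, h]; omega
    · intro b _ hb; exact adj_top n b hb

lemma GG_eq {n : ℕ} {T : Finset ℕ} {s t : ℕ} (hs : 1 ≤ s) (hs' : s ≤ 2*n) (h : GG n T t = s) :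
    t = s := by
  unfold GG at h; split_ifs at h <;> omega

lemma good_conn {n : ℕ} {S T : Finset ℕ} (h : Good n S T) (x : ℕ) (hx : x ≤ 2*n+1) :
    BlockConnected (compGraph (hatCrownLe n)) (fib n (gl n S T) x) := by
  by_cases hend : gl n S T x = 0 ∨ gl n S T x = 2*n+1
  · exact fib_conn_end n _ (gl_zero n S T) (gl_top n S T) x hend
  push Not at hend
  have hx0 : x ≠ 0 := by rintro rfl; exact hend.1 (gl_zero n S T)
  have hx1 : x ≠ 2*n+1 := by rintro rfl; exact hend.2 (gl_top n S T)
  have hg := gl_mid n S T x (by omega) (by omega)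
  have hc := GG_cases n T (pr S x)
  rw [← hg] at hc
  obtain ⟨hsT, hgs⟩ := (hc.resolve_left hend.1).resolve_left hend.2
  have hsS := (pr_spec S h.neS x).1
  set s := pr S x with hs
  have hr := h.rng s hsS
  have hscr := sc_range n s hr.1 hr.2
  have hmem : ∀ v, v ∈ fib n (gl n S T) x ↔ (1 ≤ v ∧ v ≤ 2*n) ∧ pr S v = s := by
    intro v
    rw [mem_fib, hgs]
    constructor
    · rintro ⟨a, b⟩
      have : v ≠ 0 := by rintro rfl; rw [gl_zero] at b; omega
      have : v ≠ 2*n+1 := by rintro rfl; rw [gl_top] at b; omega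
      rw [gl_mid n S T v (by omega) (by omega)] at b
      exact ⟨by omega, GG_eq hr.1 hr.2 b⟩
    · rintro ⟨a, b⟩
      rw [gl_mid n S T v (by omega) (by omega), b]
      refine ⟨by omega, ?_⟩
      unfold GG; rw [if_neg hsT]
  have hm0 : sc n s ∈ fib n (gl n S T) x := (hmem _).2 ⟨hscr, pr_sc_mem n S h.rng s hsS⟩
  unfold BlockConnected
  rw [SimpleGraph.connected_iff_exists_forall_reachable]
  refine ⟨⟨sc n s, hm0⟩, ?_⟩
  have key := arc_ind n S h.rng s hsS (fun v => ∃ hv : v ∈ fib n (gl n S T) x,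
    ((compGraph (hatCrownLe n)).induce (fib n (gl n S T) x : Set ℕ)).Reachable ⟨sc n s, hm0⟩ ⟨v, hv⟩)
    ⟨hm0, SimpleGraph.Reachable.refl _⟩ (by
      rintro v h1 h2 h3 h4 ⟨hv, hre⟩
      have hv' : sc n v ∈ fib n (gl n S T) x :=
        (hmem _).2 ⟨sc_range n v h1 h2, by rw [pr_sc_notMem n S h.rng h.neS v h2 h3, h4]⟩
      refine ⟨hv', hre.trans (SimpleGraph.Adj.reachable ?_)⟩
      exact edge_adj n v h1 h2)
  rintro ⟨v, hv⟩
  obtain ⟨⟨a, b⟩, c⟩ := (hmem v).1 hv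
  exact (key v a b c).2

lemma good_ccp {n : ℕ} {S T : Finset ℕ} (h : Good n S T) :
    IsCCP (hatCrownGround n) (hatCrownLe n) (PP n (gl n S T)) :=
  PP_ccp n _ (HL n S) (good_conn h) (fun x hx y hy => good_mono h x y hx hy)

lemma good_card {n : ℕ} {S T : Finset ℕ} (h : Good n S T) :
    (PP n (gl n S T)).card + T.card = S.card + 2 := by
  have hTS : T ⊆ S := h.sub.trans (oddL_sub S)
  rw [card_PP]
  have : (hatCrownGround n).image (gl n S T) = insert 0 (insert (2*n+1) (S \ T)) := by
    ext l
    simp only [Finset.mem_image, mem_gnd, Finset.mem_insert, Finset.mem_sdiff]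
    constructor
    · rintro ⟨x, hx, rfl⟩
      by_cases h0 : x = 0
      · subst h0; left; exact gl_zero n S T
      by_cases h1 : x = 2*n+1
      · subst h1; right; left; exact gl_top n S T
      rw [gl_mid n S T x (by omega) (by omega)]
      rcases GG_cases n T (pr S x) with hh | hh | hh
      · left; exact hh
      · right; left; exact hh
      · right; right; rw [hh.2]; exact ⟨(pr_spec S h.neS x).1, hh.1⟩
    · rintro (rfl | rfl | ⟨h1, h2⟩)
      · exact ⟨0, by omega, gl_zero n S T⟩
      · exact ⟨2*n+1, by omega, gl_top n S T⟩
      · have hr := h.rng l h1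
        have := sc_range n l hr.1 hr.2
        refine ⟨sc n l, by omega, ?_⟩
        rw [gl_mid n S T _ this.1 this.2, pr_sc_mem n S h.rng l h1]
        unfold GG; rw [if_neg h2]
  rw [this, Finset.card_insert_of_notMem, Finset.card_insert_of_notMem, Finset.card_sdiff_of_subset hTS]
  · have := Finset.card_le_card hTS; omega
  · intro hh
    have := h.rng _ (Finset.mem_sdiff.1 hh).1
    omega
  · intro hh
    rcases Finset.mem_insert.1 hh with hh | hh
    · omega
    · have := h.rng _ (Finset.mem_sdiff.1 hh).1
      omega

lemma good_cut {n : ℕ} {S T : Finset ℕ} (h : Good n S T) (e : ℕ) (h1 : 1 ≤ e) (h2 : e ≤ 2*n) :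
    e ∈ S ↔ gl n S T e ≠ gl n S T (sc n e) := by
  have hsc := sc_range n e h1 h2
  rw [gl_mid n S T _ h1 h2, gl_mid n S T _ hsc.1 hsc.2]
  constructor
  · intro he heq
    rw [pr_sc_mem n S h.rng e he] at heq
    have := edge_mono h e he
    rw [heq] at this
    rcases Nat.mod_two_eq_zero_or_one e with hh | hh
    · exact lt_irrefl _ (this.2 hh)
    · exact lt_irrefl _ (this.1 hh)
  · intro hne
    by_contra he
    rw [pr_sc_notMem n S h.rng h.neS e h2 he] at hne
    exact hne rfl

lemma good_mark {n : ℕ} {S T : Finset ℕ} (h : Good n S T) (e : ℕ) (he : e ∈ S) :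
    e ∈ T ↔ gl n S T (sc n e) = gl n S T 0 ∨ gl n S T (sc n e) = gl n S T (2*n+1) := by
  have hr := h.rng e he
  have hsc := sc_range n e hr.1 hr.2
  rw [gl_mid n S T _ hsc.1 hsc.2, gl_zero, gl_top, pr_sc_mem n S h.rng e he]
  unfold GG
  split_ifs with a b
  · simp [a]
  · simp [a]
  · simp only [a, false_iff]; omega

lemma good_inj {n : ℕ} {S T S' T' : Finset ℕ} (h : Good n S T) (h' : Good n S' T')
    (e : PP n (gl n S T) = PP n (gl n S' T')) : S = S' ∧ T = T' := by
  have key := PP_inj n _ _ e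
  have hS : S = S' := by
    ext s
    by_cases hr : 1 ≤ s ∧ s ≤ 2*n
    · have := sc_range n s hr.1 hr.2
      rw [good_cut h s hr.1 hr.2, good_cut h' s hr.1 hr.2, Ne, Ne,
        key s (sc n s) (by omega) (by omega)]
    · exact ⟨fun hh => absurd (h.rng s hh) hr, fun hh => absurd (h'.rng s hh) hr⟩
  subst hS
  refine ⟨rfl, ?_⟩
  ext s
  by_cases hs : s ∈ S
  · have hr := h.rng s hs
    have := sc_range n s hr.1 hr.2
    rw [good_mark h s hs, good_mark h' s hs, key _ _ (by omega) (by omega),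
      key _ _ (by omega) (by omega)]
  · exact ⟨fun hh => absurd (oddL_sub _ (h.sub hh)) hs, fun hh => absurd (oddL_sub _ (h'.sub hh)) hs⟩

/-- trivial labelling -/
def tl (n c : ℕ) (v : ℕ) : ℕ := if v = 0 then 0 else if v = 2*n+1 then 2*n+1 else c

lemma tl_zero (n c : ℕ) : tl n c 0 = 0 := by simp [tl]
lemma tl_top (n c : ℕ) : tl n c (2*n+1) = 2*n+1 := by simp [tl]
lemma tl_mid (n c v : ℕ) (h : 1 ≤ v) (h' : v ≤ 2*n) : tl n c v = c := by
  unfold tl; rw [if_neg (by omega), if_neg (by omega)]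

lemma triv_ccp (n c : ℕ) (hn : 2 ≤ n) (hc : c = 0 ∨ c = 1 ∨ c = 2*n+1) :
    IsCCP (hatCrownGround n) (hatCrownLe n) (PP n (tl n c)) := by
  apply PP_ccp n _ (fun l => (l : ℤ))
  · intro x hx
    by_cases hend : tl n c x = 0 ∨ tl n c x = 2*n+1
    · exact fib_conn_end n _ (tl_zero n c) (tl_top n c) x hend
    push Not at hend
    have hx0 : x ≠ 0 := by rintro rfl; exact hend.1 (tl_zero n c)
    have hx1 : x ≠ 2*n+1 := by rintro rfl; exact hend.2 (tl_top n c)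
    have hg := tl_mid n c x (by omega) (by omega)
    rw [hg] at hend
    have hc1 : c = 1 := by tauto
    subst hc1
    have hmem : ∀ v, v ∈ fib n (tl n 1) x ↔ (1 ≤ v ∧ v ≤ 2*n) := by
      intro v
      rw [mem_fib, hg]
      by_cases h0 : v = 0
      · subst h0; simp [tl_zero]
      by_cases h1 : v = 2*n+1
      · subst h1; simp [tl_top]; omega
      by_cases h2 : v ≤ 2*n
      · rw [tl_mid n 1 v (by omega) h2]; omega
      · omega
    have hm0 : 1 ∈ fib n (tl n 1) x := (hmem _).2 (by omega)
    unfold BlockConnected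
    rw [SimpleGraph.connected_iff_exists_forall_reachable]
    refine ⟨⟨1, hm0⟩, ?_⟩
    have key : ∀ v, 1 ≤ v → v ≤ 2*n → ∃ hv : v ∈ fib n (tl n 1) x,
      ((compGraph (hatCrownLe n)).induce (fib n (tl n 1) x : Set ℕ)).Reachable ⟨1, hm0⟩ ⟨v, hv⟩ := by
      intro v h1
      induction v, h1 using Nat.le_induction with
      | base => intro _; exact ⟨hm0, SimpleGraph.Reachable.refl _⟩
      | succ v h1 ih =>
        intro h2
        obtain ⟨hv, hre⟩ := ih (by omega)
        refine ⟨(hmem _).2 (by omega), hre.trans (SimpleGraph.Adj.reachable ?_)⟩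
        have := edge_adj n v h1 (by omega)
        have e : sc n v = v + 1 := by unfold sc; split_ifs <;> omega
        rw [e] at this
        exact this
    rintro ⟨v, hv⟩
    have hh := (hmem v).1 hv
    exact (key v hh.1 hh.2).2
  · intro x hx y hy hle
    unfold hatCrownLe crownGround at hle
    simp only [Finset.mem_Icc] at hle
    simp only [Nat.cast_lt]
    unfold tl
    split_ifs <;> omega

lemma triv_card (n c : ℕ) (hn : 2 ≤ n) (hc : c = 0 ∨ c = 1 ∨ c = 2*n+1) :
    (PP n (tl n c)).card = if c = 1 then 3 else 2 := by
  rw [card_PP]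
  have : (hatCrownGround n).image (tl n c) = {0, c, 2*n+1} := by
    ext l
    simp only [Finset.mem_image, mem_gnd, Finset.mem_insert, Finset.mem_singleton]
    constructor
    · rintro ⟨x, hx, rfl⟩
      unfold tl; split_ifs <;> omega
    · rintro (rfl | rfl | rfl)
      · exact ⟨0, by omega, tl_zero n c⟩
      · exact ⟨1, by omega, tl_mid n l 1 le_rfl (by omega)⟩
      · exact ⟨2*n+1, le_rfl, tl_top n c⟩
  rw [this]
  rcases hc with rfl | rfl | rfl
  · simp
  · rw [if_pos rfl, Finset.card_eq_three]
    exact ⟨0, 1, 2*n+1, by omega, by omega, by omega, rfl⟩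
  · rw [if_neg (by omega)]
    simp

lemma triv_inj (n c c' : ℕ) (hn : 2 ≤ n) (hc : c = 0 ∨ c = 1 ∨ c = 2*n+1)
    (hc' : c' = 0 ∨ c' = 1 ∨ c' = 2*n+1) (h : PP n (tl n c) = PP n (tl n c')) : c = c' := by
  have key := PP_inj n _ _ h
  have k0 := key 0 1 (by omega) (by omega)
  have k1 := key (2*n+1) 1 (by omega) (by omega)
  rw [tl_zero, tl_zero, tl_mid n c 1 le_rfl (by omega), tl_mid n c' 1 le_rfl (by omega)] at k0
  rw [tl_top, tl_top, tl_mid n c 1 le_rfl (by omega), tl_mid n c' 1 le_rfl (by omega)] at k1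
  omega

lemma triv_good (n c : ℕ) (S T : Finset ℕ) (h : Good n S T)
    (e : PP n (gl n S T) = PP n (tl n c)) : False := by
  obtain ⟨s, hs⟩ := h.neS
  have hr := h.rng s hs
  have hsc := sc_range n s hr.1 hr.2
  apply (good_cut h s hr.1 hr.2).1 hs
  rw [PP_inj n _ _ e s (sc n s) (by omega) (by omega), tl_mid n c s hr.1 hr.2,
    tl_mid n c _ hsc.1 hsc.2]
lemma cls (n : ℕ) (π : Finset (Finset ℕ)) (hp : IsPartitionOn (hatCrownGround n) π)
    (b : ℕ → Finset ℕ) (hb : ∀ x ≤ 2*n+1, b x ∈ π ∧ x ∈ b x) (g : ℕ → ℕ) (h0 : g 0 = 0)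
    (h1 : g (2*n+1) = 2*n+1)
    (hz : ∀ v, 1 ≤ v → v ≤ 2*n → (b v = b 0 ↔ g v = 0))
    (ht : ∀ v, 1 ≤ v → v ≤ 2*n → (b v = b (2*n+1) ↔ g v = 2*n+1))
    (hzt : b 0 ≠ b (2*n+1))
    (hm : ∀ v, 1 ≤ v → v ≤ 2*n → ∀ w, 1 ≤ w → w ≤ 2*n → b v ≠ b 0 → b v ≠ b (2*n+1) →
      (b v = b w ↔ g v = g w)) : π = PP n g := by
  apply eq_PP n g π hp
  intro x hx y hy
  have hR : (∃ B ∈ π, x ∈ B ∧ y ∈ B) ↔ b x = b y := by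
    constructor
    · rintro ⟨B, hB, h1, h2⟩
      have e1 := (hp.2.2 x ((mem_gnd _ _).2 hx)).unique ⟨hB, h1⟩ (hb x hx)
      have e2 := (hp.2.2 y ((mem_gnd _ _).2 hy)).unique ⟨hB, h2⟩ (hb y hy)
      rw [← e1, ← e2]
    · intro h
      exact ⟨b x, (hb x hx).1, (hb x hx).2, by rw [h]; exact (hb y hy).2⟩
  rw [hR]
  have Z : ∀ v ≤ 2*n+1, (b v = b 0 ↔ g v = 0) := by
    intro v hv
    by_cases a : v = 0
    · subst a; simp [h0]
    by_cases c : v = 2*n+1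
    · subst c; rw [h1]; exact ⟨fun h => absurd h.symm hzt, fun h => by omega⟩
    exact hz v (by omega) (by omega)
  have W : ∀ v ≤ 2*n+1, (b v = b (2*n+1) ↔ g v = 2*n+1) := by
    intro v hv
    by_cases a : v = 0
    · subst a; rw [h0]; exact ⟨fun h => absurd h hzt, fun h => by omega⟩
    by_cases c : v = 2*n+1
    · subst c; simp [h1]
    exact ht v (by omega) (by omega)
  by_cases c1 : b x = b 0
  · have e := (Z x hx).1 c1
    rw [c1, e, eq_comm, Z y hy, eq_comm]
  by_cases c2 : b x = b (2*n+1)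
  · have e := (W x hx).1 c2
    rw [c2, e, eq_comm, W y hy, eq_comm]
  have hx0 : x ≠ 0 := by rintro rfl; exact c1 rfl
  have hx1 : x ≠ 2*n+1 := by rintro rfl; exact c2 rfl
  by_cases a : y = 0
  · subst a; rw [Z x hx, h0]
  by_cases c : y = 2*n+1
  · subst c; rw [W x hx, h1]
  exact hm x (by omega) (by omega) y (by omega) (by omega) c1 c2

lemma surj (n : ℕ) (hn : 2 ≤ n) (π : Finset (Finset ℕ))
    (h : IsCCP (hatCrownGround n) (hatCrownLe n) π) (hcard : 2 ≤ π.card) :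
    (∃ c, (c = 0 ∨ c = 1 ∨ c = 2*n+1) ∧ π = PP n (tl n c)) ∨
      ∃ S T, Good n S T ∧ π = PP n (gl n S T) := by
  classical
  obtain ⟨⟨hp, hconn⟩, hcomp⟩ := h
  have hex : ∀ x, ∃ B, x ≤ 2*n+1 → B ∈ π ∧ x ∈ B := by
    intro x
    by_cases hx : x ≤ 2*n+1
    · obtain ⟨B, hB, _⟩ := hp.2.2 x ((mem_gnd _ _).2 hx)
      exact ⟨B, fun _ => hB⟩
    · exact ⟨∅, fun h => absurd h hx⟩
  choose b hb using hex
  have huniq : ∀ B ∈ π, ∀ x ∈ B, B = b x := by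
    intro B hB x hx
    have hxg := hp.2.1 B hB hx
    exact (hp.2.2 x hxg).unique ⟨hB, hx⟩ (hb x ((mem_gnd _ _).1 hxg))
  have hstep : ∀ x ≤ 2*n+1, ∀ y ≤ 2*n+1, hatCrownLe n x y →
      Relation.TransGen (blockRel (hatCrownLe n) π) (b x) (b y) := by
    intro x hx y hy hle
    exact Relation.TransGen.single ⟨(hb x hx).1, (hb y hy).1, x, (hb x hx).2, y, (hb y hy).2, hle⟩
  have hanti : ∀ x ≤ 2*n+1, ∀ y ≤ 2*n+1, Relation.TransGen (blockRel (hatCrownLe n) π) (b x) (b y) →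
      Relation.TransGen (blockRel (hatCrownLe n) π) (b y) (b x) → b x = b y :=
    fun x hx y hy => hcomp _ (hb x hx).1 _ (hb y hy).1
  have hle0 : ∀ x, hatCrownLe n 0 x := fun x => Or.inr (Or.inl rfl)
  have hle1 : ∀ x, hatCrownLe n x (2*n+1) := fun x => Or.inr (Or.inr (Or.inl rfl))
  have hdown : ∀ x ≤ 2*n+1, ∀ y ≤ 2*n+1, hatCrownLe n x y → b y = b 0 → b x = b 0 := by
    intro x hx y hy hle e
    have := hstep x hx y hy hle
    rw [e] at this
    exact hanti x hx 0 (by omega) this (hstep 0 (by omega) x hx (hle0 x))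
  have hup : ∀ x ≤ 2*n+1, ∀ y ≤ 2*n+1, hatCrownLe n x y → b x = b (2*n+1) → b y = b (2*n+1) := by
    intro x hx y hy hle e
    have := hstep x hx y hy hle
    rw [e] at this
    exact hanti y hy _ le_rfl (hstep y hy _ le_rfl (hle1 y)) this
  have hzt : b 0 ≠ b (2*n+1) := by
    intro e
    have : π ⊆ {b 0} := by
      intro B hB
      obtain ⟨x, hx⟩ := hp.1 B hB
      have hxg := (mem_gnd _ _).1 (hp.2.1 B hB hx)
      rw [Finset.mem_singleton, huniq B hB x hx]
      exact hdown x hxg _ le_rfl (hle1 x) e.symm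
    have := Finset.card_le_card this
    simp at this; omega
  set S := (Finset.Icc 1 (2*n)).filter (fun s => b s ≠ b (sc n s)) with hSdef
  have hS : ∀ s ∈ S, 1 ≤ s ∧ s ≤ 2*n := fun s hs => Finset.mem_Icc.1 (Finset.mem_filter.1 hs).1
  have hScut : ∀ s ∈ S, b s ≠ b (sc n s) := fun s hs => (Finset.mem_filter.1 hs).2
  have hSun : ∀ s, 1 ≤ s → s ≤ 2*n → s ∉ S → b s = b (sc n s) := by
    intro s h1 h2 h3
    by_contra hc
    exact h3 (Finset.mem_filter.2 ⟨Finset.mem_Icc.2 ⟨h1, h2⟩, hc⟩)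
  have hscr := sc_range n
  rcases S.eq_empty_or_nonempty with hemp | hne
  · left
    have hall : ∀ v, 1 ≤ v → v ≤ 2*n → b v = b 1 := by
      intro v h1
      induction v, h1 using Nat.le_induction with
      | base => intro _; rfl
      | succ v h1 ih =>
        intro h2
        have e : sc n v = v + 1 := by unfold sc; split_ifs <;> omega
        rw [← e, ← hSun v h1 (by omega) (by rw [hemp]; simp)]
        exact ih (by omega)
    refine ⟨if b 1 = b 0 then 0 else if b 1 = b (2*n+1) then 2*n+1 else 1, ?_, ?_⟩
    · split_ifs <;> simp
    · apply cls n π hp b hb _ (tl_zero _ _) (tl_top _ _) _ _ hzt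
      · intro v h1 h2 w h3 h4 _ _
        rw [hall v h1 h2, hall w h3 h4, tl_mid _ _ _ h1 h2, tl_mid _ _ _ h3 h4]
        simp
      · intro v h1 h2
        rw [hall v h1 h2, tl_mid _ _ _ h1 h2]
        split_ifs with a c
        · simp [a]
        · exact iff_of_false a (by clear * - hn; first | omega | simp)
        · exact iff_of_false a (by clear * - hn; first | omega | simp)
      · intro v h1 h2
        rw [hall v h1 h2, tl_mid _ _ _ h1 h2]
        split_ifs with a c
        · rw [a]; exact iff_of_false hzt (by clear * - hn; first | omega | simp)
        · simp [c]
        · exact iff_of_false c (by clear * - hn; first | omega | simp)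
  · right
    -- steps around the cycle
    have hodd : ∃ s ∈ S, s % 2 = 1 := by
      by_contra hno
      push Not at hno
      have st1 : ∀ v, 1 ≤ v → v ≤ 2*n →
          Relation.TransGen (blockRel (hatCrownLe n) π) (b (sc n v)) (b v) := by
        intro v h1 h2
        have := hscr v h1 h2
        by_cases hv : v ∈ S
        · have := hno v hv
          exact hstep _ (by omega) _ (by omega) (edge_le_even n v h1 h2 (by omega))
        · rw [hSun v h1 h2 hv]
          exact hstep _ (by omega) _ (by omega) (Or.inl rfl)
      have up : ∀ v, 1 ≤ v → v ≤ 2*n → Relation.TransGen (blockRel (hatCrownLe n) π) (b v) (b 1) := by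
        intro v h1
        induction v, h1 using Nat.le_induction with
        | base => intro _; exact hstep _ (by omega) _ (by omega) (Or.inl rfl)
        | succ v h1 ih =>
          intro h2
          have e : sc n v = v + 1 := by unfold sc; split_ifs <;> omega
          rw [← e]
          exact (st1 v h1 (by omega)).trans (ih (by omega))
      have e : sc n (2*n) = 1 := by simp [sc]
      have dn : ∀ w, w < 2*n → Relation.TransGen (blockRel (hatCrownLe n) π) (b 1) (b (2*n-w)) := by
        intro w
        induction w with
        | zero => intro _; have := st1 (2*n) (by omega) le_rfl; rw [e] at this; exact this
        | succ w ih =>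
          intro h2
          have := st1 (2*n-(w+1)) (by omega) (by omega)
          have e : sc n (2*n-(w+1)) = 2*n-w := by unfold sc; split_ifs <;> omega
          rw [e] at this
          exact (ih (by omega)).trans this
      obtain ⟨s, hs⟩ := hne
      have hr := hS s hs
      have hr' := hscr s hr.1 hr.2
      have all1 : ∀ v, 1 ≤ v → v ≤ 2*n → b v = b 1 := by
        intro v h1 h2
        have := dn (2*n-v) (by omega)
        rw [show 2*n-(2*n-v) = v by omega] at this
        exact hanti v (by omega) 1 (by omega) (up v h1 h2) this
      apply hScut s hs
      rw [all1 s hr.1 hr.2, all1 _ hr'.1 hr'.2]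
    have heven : ∃ s ∈ S, s % 2 = 0 := by
      by_contra hno
      push Not at hno
      have st1 : ∀ v, 1 ≤ v → v ≤ 2*n →
          Relation.TransGen (blockRel (hatCrownLe n) π) (b v) (b (sc n v)) := by
        intro v h1 h2
        have := hscr v h1 h2
        by_cases hv : v ∈ S
        · have := hno v hv
          exact hstep _ (by omega) _ (by omega) (edge_le_odd n v h1 h2 (by omega))
        · rw [hSun v h1 h2 hv]
          exact hstep _ (by omega) _ (by omega) (Or.inl rfl)
      have up : ∀ v, 1 ≤ v → v ≤ 2*n → Relation.TransGen (blockRel (hatCrownLe n) π) (b 1) (b v) := by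
        intro v h1
        induction v, h1 using Nat.le_induction with
        | base => intro _; exact hstep _ (by omega) _ (by omega) (Or.inl rfl)
        | succ v h1 ih =>
          intro h2
          have e : sc n v = v + 1 := by unfold sc; split_ifs <;> omega
          rw [← e]
          exact (ih (by omega)).trans (st1 v h1 (by omega))
      have e : sc n (2*n) = 1 := by simp [sc]
      have dn : ∀ w, w < 2*n → Relation.TransGen (blockRel (hatCrownLe n) π) (b (2*n-w)) (b 1) := by
        intro w
        induction w with
        | zero => intro _; have := st1 (2*n) (by omega) le_rfl; rw [e] at this; exact this
        | succ w ih =>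
          intro h2
          have := st1 (2*n-(w+1)) (by omega) (by omega)
          have e : sc n (2*n-(w+1)) = 2*n-w := by unfold sc; split_ifs <;> omega
          rw [e] at this
          exact this.trans (ih (by omega))
      obtain ⟨s, hs⟩ := hne
      have hr := hS s hs
      have hr' := hscr s hr.1 hr.2
      have all1 : ∀ v, 1 ≤ v → v ≤ 2*n → b v = b 1 := by
        intro v h1 h2
        have := dn (2*n-v) (by omega)
        rw [show 2*n-(2*n-v) = v by omega] at this
        exact hanti v (by omega) 1 (by omega) this (up v h1 h2)
      apply hScut s hs
      rw [all1 s hr.1 hr.2, all1 _ hr'.1 hr'.2]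
    have hoddL : (oddL S).Nonempty := by
      obtain ⟨a, ha, ha'⟩ := heven
      obtain ⟨c, hc, hc'⟩ := hodd
      exact (oddR_nonempty S a c ha hc ha' hc').image _
    have harc : ∀ v, 1 ≤ v → v ≤ 2*n → b v = b (sc n (pr S v)) := by
      intro v h1 h2
      have hps := (pr_spec S hne v).1
      exact arc_ind n S hS (pr S v) hps (fun w => b w = b (sc n (pr S v))) rfl
        (fun w h3 h4 h5 _ h7 => by rw [← hSun w h3 h4 h5]; exact h7) v h1 h2 rfl
    -- cuts next to the bottom block
    have cR0 : ∀ s ∈ S, b (sc n s) = b 0 → s % 2 = 0 := by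
      intro s hs e
      have hr := hS s hs
      have hr' := hscr s hr.1 hr.2
      by_contra ho
      have := hdown s (by omega) _ (by omega) (edge_le_odd n s hr.1 hr.2 (by omega)) e
      exact hScut s hs (by rw [this, e])
    have cL0 : ∀ s ∈ S, b s = b 0 → s % 2 = 1 := by
      intro s hs e
      have hr := hS s hs
      have hr' := hscr s hr.1 hr.2
      by_contra ho
      have := hdown (sc n s) (by omega) _ (by omega) (edge_le_even n s hr.1 hr.2 (by omega)) e
      exact hScut s hs (by rw [this, e])
    have cR1 : ∀ s ∈ S, b (sc n s) = b (2*n+1) → s % 2 = 1 := by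
      intro s hs e
      have hr := hS s hs
      have hr' := hscr s hr.1 hr.2
      by_contra ho
      have := hup (sc n s) (by omega) _ (by omega) (edge_le_even n s hr.1 hr.2 (by omega)) e
      exact hScut s hs (by rw [this, e])
    have cL1 : ∀ s ∈ S, b s = b (2*n+1) → s % 2 = 0 := by
      intro s hs e
      have hr := hS s hs
      have hr' := hscr s hr.1 hr.2
      by_contra ho
      have := hup s (by omega) _ (by omega) (edge_le_odd n s hr.1 hr.2 (by omega)) e
      exact hScut s hs (by rw [this, e])
    set T := S.filter (fun s => b (sc n s) = b 0 ∨ b (sc n s) = b (2*n+1)) with hTdef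
    have hG : Good n S T := by
      refine ⟨hS, ?_, hoddL⟩
      intro s hsT
      obtain ⟨hs, hh⟩ := Finset.mem_filter.1 hsT
      obtain ⟨t, ht, rfl⟩ := pr_surj S s hs
      refine Finset.mem_image.2 ⟨t, Finset.mem_filter.2 ⟨ht, ?_⟩, rfl⟩
      have hr := hS t ht
      have e := harc t hr.1 hr.2
      rcases hh with hh | hh
      · have := cR0 _ hs hh
        have := cL0 t ht (by rw [e, hh])
        omega
      · have := cR1 _ hs hh
        have := cL1 t ht (by rw [e, hh])
        omega
    refine ⟨S, T, hG, ?_⟩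
    -- classification
    have g0 : ∀ v, 1 ≤ v → v ≤ 2*n → b v = b 0 → gl n S T v = 0 := by
      intro v h1 h2 e
      have hps := (pr_spec S hne v).1
      rw [harc v h1 h2] at e
      rw [gl_mid _ _ _ _ h1 h2]
      unfold GG
      rw [if_pos (Finset.mem_filter.2 ⟨hps, Or.inl e⟩), if_pos (cR0 _ hps e)]
    have g1 : ∀ v, 1 ≤ v → v ≤ 2*n → b v = b (2*n+1) → gl n S T v = 2*n+1 := by
      intro v h1 h2 e
      have hps := (pr_spec S hne v).1
      rw [harc v h1 h2] at e
      rw [gl_mid _ _ _ _ h1 h2]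
      unfold GG
      have := cR1 _ hps e
      rw [if_pos (Finset.mem_filter.2 ⟨hps, Or.inr e⟩), if_neg (by omega)]
    have gm : ∀ v, 1 ≤ v → v ≤ 2*n → b v ≠ b 0 → b v ≠ b (2*n+1) → gl n S T v = pr S v := by
      intro v h1 h2 e1 e2
      rw [harc v h1 h2] at e1 e2
      rw [gl_mid _ _ _ _ h1 h2]
      unfold GG
      rw [if_neg]
      intro hh
      rcases (Finset.mem_filter.1 hh).2 with hh | hh
      · exact e1 hh
      · exact e2 hh
    have prr : ∀ v, 1 ≤ pr S v ∧ pr S v ≤ 2*n := fun v => hS _ (pr_spec S hne v).1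
    apply cls n π hp b hb _ (gl_zero _ _ _) (gl_top _ _ _) _ _ hzt
    · intro v h1 h2 w h3 h4 e1 e2
      rw [gm v h1 h2 e1 e2]
      constructor
      · intro e
        rw [gm w h3 h4 (by rw [← e]; exact e1) (by rw [← e]; exact e2)]
        have hv := hb v (by omega)
        have hw := hb w (by omega)
        refine const_of_conn _ (b v) (pr S) (hconn _ hv.1) ?_ v hv.2 w (by rw [e]; exact hw.2)
        have key : ∀ a ∈ b v, ∀ c ∈ b v, a ≠ c → hatCrownLe n a c → pr S a = pr S c := by
          intro a ha c hc hac hle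
          have ea := huniq _ hv.1 a ha
          have ec := huniq _ hv.1 c hc
          have ra := (mem_gnd _ _).1 (hp.2.1 _ hv.1 ha)
          have rc := (mem_gnd _ _).1 (hp.2.1 _ hv.1 hc)
          have a0 : a ≠ 0 := by rintro rfl; exact e1 ea
          have a1 : a ≠ 2*n+1 := by rintro rfl; exact e2 ea
          have c0 : c ≠ 0 := by rintro rfl; exact e1 ec
          have c1 : c ≠ 2*n+1 := by rintro rfl; exact e2 ec
          obtain ⟨f, f1, f2, hf⟩ := le_edge n a c (by omega) (by omega) (by omega) (by omega) hac hle
          have hfS : f ∉ S := by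
            intro hfS
            apply hScut f hfS
            rcases hf with ⟨_, rfl, rfl⟩ | ⟨_, rfl, rfl⟩
            · rw [← ea, ← ec]
            · rw [← ea, ← ec]
          have := pr_sc_notMem n S hS hne f f2 hfS
          rcases hf with ⟨_, rfl, rfl⟩ | ⟨_, rfl, rfl⟩
          · exact this.symm
          · exact this
        intro a ha c hc hadj
        unfold compGraph at hadj
        rw [SimpleGraph.fromRel_adj] at hadj
        rcases hadj with ⟨hac, hl | hl⟩
        · exact key a ha c hc hac hl
        · exact (key c hc a ha hac.symm hl).symm
      · intro e
        have := prr v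
        by_cases c0 : b w = b 0
        · rw [g0 w h3 h4 c0] at e; omega
        by_cases c1 : b w = b (2*n+1)
        · rw [g1 w h3 h4 c1] at e; omega
        rw [gm w h3 h4 c0 c1] at e
        rw [harc v h1 h2, harc w h3 h4, e]
    · intro v h1 h2
      refine ⟨g0 v h1 h2, fun hh => ?_⟩
      by_contra c0
      by_cases c1 : b v = b (2*n+1)
      · rw [g1 v h1 h2 c1] at hh; omega
      · rw [gm v h1 h2 c0 c1] at hh; have := prr v; omega
    · intro v h1 h2
      refine ⟨g1 v h1 h2, fun hh => ?_⟩
      by_contra c1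
      by_cases c0 : b v = b 0
      · rw [g0 v h1 h2 c0] at hh; omega
      · rw [gm v h1 h2 c0 c1] at hh; have := prr v; omega
open Classical in
/-- nontrivial data -/
noncomputable def dat (n k : ℕ) : Finset ((_ : Finset ℕ) × Finset ℕ) :=
  ((Finset.Icc 1 (2*n)).powerset.filter (fun S => (oddL S).Nonempty)).sigma
    (fun S => (oddL S).powerset.filter (fun T => T.card + k = S.card))

lemma mem_dat (n k : ℕ) (d : (_ : Finset ℕ) × Finset ℕ) :
    d ∈ dat n k ↔ Good n d.1 d.2 ∧ d.2.card + k = d.1.card := by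
  unfold dat
  simp only [Finset.mem_sigma, Finset.mem_filter, Finset.mem_powerset]
  constructor
  · rintro ⟨⟨a, b⟩, c, e⟩
    exact ⟨⟨fun s hs => Finset.mem_Icc.1 (a hs), c, b⟩, e⟩
  · rintro ⟨⟨a, b, c⟩, e⟩
    exact ⟨⟨fun s hs => Finset.mem_Icc.2 (a s hs), c⟩, b, e⟩

/-- trivial data -/
def tdat (n k : ℕ) : Finset ℕ := if k = 0 then {0, 2*n+1} else if k = 1 then {1} else ∅

lemma mem_tdat (n k c : ℕ) : c ∈ tdat n k ↔
    (c = 0 ∨ c = 1 ∨ c = 2*n+1) ∧ (if c = 1 then 1 else 0) = k ∨ (n = 0 ∧ k = 0 ∧ c = 1) := by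
  unfold tdat
  split_ifs with h1 h2 h3 <;> simp <;> omega

open Classical in
lemma ccps_eq (n k : ℕ) (hn : 2 ≤ n) : hatCCPs n (k+2) =
    (((dat n k).image (fun d => PP n (gl n d.1 d.2)) ∪ (tdat n k).image (fun c => PP n (tl n c)) :
      Finset (Finset (Finset ℕ))) : Set (Finset (Finset ℕ))) := by
  ext π
  simp only [hatCCPs, Set.mem_setOf_eq, Finset.mem_coe, Finset.mem_union, Finset.mem_image]
  constructor
  · rintro ⟨h, hc⟩
    rcases surj n hn π h (by omega) with ⟨c, hcc, rfl⟩ | ⟨S, T, hG, rfl⟩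
    · right
      refine ⟨c, (mem_tdat n k c).2 (Or.inl ⟨hcc, ?_⟩), rfl⟩
      rw [triv_card n c hn hcc] at hc
      split_ifs at hc ⊢ <;> omega
    · left
      refine ⟨⟨S, T⟩, (mem_dat n k _).2 ⟨hG, ?_⟩, rfl⟩
      have := good_card hG
      simp only; omega
  · rintro (⟨d, hd, rfl⟩ | ⟨c, hc, rfl⟩)
    · obtain ⟨hG, e⟩ := (mem_dat n k _).1 hd
      refine ⟨good_ccp hG, ?_⟩
      have := good_card hG
      omega
    · rcases (mem_tdat n k c).1 hc with ⟨hcc, e⟩ | ⟨h, _⟩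
      · refine ⟨triv_ccp n c hn hcc, ?_⟩
        rw [triv_card n c hn hcc]
        split_ifs at e ⊢ <;> omega
      · omega

lemma ncard_eq (n k : ℕ) (hn : 2 ≤ n) : (hatCCPs n (k+2)).ncard =
    (dat n k).card + if k = 0 then 2 else if k = 1 then 1 else 0 := by
  classical
  rw [ccps_eq n k hn, Set.ncard_coe_finset, Finset.card_union_of_disjoint]
  · congr 1
    · apply Finset.card_image_of_injOn
      rintro ⟨S, T⟩ h1 ⟨S', T'⟩ h2 e
      have h1 := ((mem_dat n k _).1 h1).1
      have h2 := ((mem_dat n k _).1 h2).1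
      obtain ⟨rfl, rfl⟩ := good_inj h1 h2 e
      rfl
    · rw [Finset.card_image_of_injOn]
      · unfold tdat
        split_ifs <;> simp
      · intro c hc c' hc' e
        rcases (mem_tdat n k c).1 hc with ⟨hcc, _⟩ | ⟨h, _⟩
        · rcases (mem_tdat n k c').1 hc' with ⟨hcc', _⟩ | ⟨h, _⟩
          · exact triv_inj n c c' hn hcc hcc' e
          · omega
        · omega
  · rw [Finset.disjoint_left]
    intro π h1 h2
    obtain ⟨d, hd, rfl⟩ := Finset.mem_image.1 h1
    obtain ⟨c, hc, e⟩ := Finset.mem_image.1 h2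
    exact triv_good n c _ _ ((mem_dat n k _).1 hd).1 e.symm

lemma dat_card (n k : ℕ) : (dat n k).card =
    ∑ S ∈ (Finset.Icc 1 (2*n)).powerset.filter (fun S => (oddL S).Nonempty),
      if k ≤ S.card then (oddL S).card.choose (S.card - k) else 0 := by
  classical
  unfold dat
  rw [Finset.card_sigma]
  have hf : ∀ S : Finset ℕ, ((oddL S).powerset.filter (fun T => T.card + k = S.card)).card =
      if k ≤ S.card then (oddL S).card.choose (S.card - k) else 0 := by
    intro S
    split_ifs with h
    · rw [← Finset.card_powersetCard]
      congr 1
      ext T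
      simp only [Finset.mem_filter, Finset.mem_powerset, Finset.mem_powersetCard]
      constructor
      · rintro ⟨a, b⟩; exact ⟨a, by omega⟩
      · rintro ⟨a, b⟩; exact ⟨a, by omega⟩
    · rw [Finset.card_eq_zero, Finset.filter_eq_empty_iff]
      intro T _; omega
  apply Finset.sum_congr
  · congr
  · intro S _
    convert hf S

lemma oddL_even (S : Finset ℕ) : (oddL S).card % 2 = 0 := by
  rw [card_oddL]
  rcases S.eq_empty_or_nonempty with rfl | hne
  · simp [oddR]
  · obtain ⟨x, hx, h⟩ := Finset.exists_min_image S id hne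
    rw [card_oddR (x % 2) S ⟨x, hx, h, rfl⟩]
    omega

/-- Theorem 3.7: the number of `(k+2)`-CCPs of `Ĉ_{2n}` (equivalently, the
number `f_k` of `k`-dimensional faces of the order polytope `O(C_{2n})`) equals
`δ_k + Σ_{i=2}^{2n} Σ_{m=1}^{⌊i/2⌋} (2n/i) C(i,2m) C(n+m−1,i−1) C(2m,i−k)`. -/
theorem fvector_formula (n : ℕ) (hn : 2 ≤ n) (k : ℕ) :
    ((hatCCPs n (k + 2)).ncard : ℚ)
      = (if k = 0 then 2 else if k = 1 then 1 else 0)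
        + ∑ i ∈ Finset.Icc 2 (2 * n), ∑ m ∈ Finset.Icc 1 (i / 2),
            (2 * n : ℚ) / i * (i.choose (2 * m) : ℚ) * ((n + m - 1).choose (i - 1) : ℚ)
              * (if k ≤ i then ((2 * m).choose (i - k) : ℚ) else 0) := by
  classical
  rw [ncard_eq n k hn, dat_card]
  push_cast
  rw [add_comm]
  congr 1
  have hmaps : ∀ S ∈ (Finset.Icc 1 (2*n)).powerset.filter (fun S => (oddL S).Nonempty),
      (⟨S.card, (oddL S).card / 2⟩ : (_ : ℕ) × ℕ) ∈
        (Finset.Icc 2 (2*n)).sigma (fun i => Finset.Icc 1 (i/2)) := by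
    intro S hS
    obtain ⟨h1, h2⟩ := Finset.mem_filter.1 hS
    have a := oddL_even S
    have b := Finset.card_pos.2 h2
    have c := Finset.card_le_card (oddL_sub S)
    have d := Finset.card_le_card (Finset.mem_powerset.1 h1)
    rw [Nat.card_Icc] at d
    simp only [Finset.mem_sigma, Finset.mem_Icc]
    omega
  rw [← Finset.sum_fiberwise_of_maps_to hmaps, Finset.sum_sigma]
  apply Finset.sum_congr rfl
  intro i hi
  apply Finset.sum_congr rfl
  intro m hm
  rw [Finset.mem_Icc] at hi hm
  rw [← count_formula n i m hi.1 hm.1 (by omega), Finset.card_eq_sum_ones, Nat.cast_sum,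
    Finset.sum_mul]
  apply Finset.sum_congr
  · ext S
    simp only [Finset.mem_filter, Sigma.mk.injEq, heq_eq_eq]
    have a := oddL_even S
    constructor
    · rintro ⟨⟨h1, h2⟩, h3, h4⟩
      exact ⟨h1, h3, by omega⟩
    · rintro ⟨h1, h3, h4⟩
      exact ⟨⟨h1, Finset.card_pos.1 (by omega)⟩, h3, by omega⟩
  · intro S hS
    obtain ⟨_, h3, h4⟩ := Finset.mem_filter.1 hS
    rw [h3, h4]
    push_cast
    ring
end

section
/- Let n ≥ 2 and let L be the Lucas sequence defined by L(0) = 2, L(1) = 1, and L(k) = L(k−1) + L(k−2) for k > 1. Then the number of antichains of the crown poset C_{2n} equals L(2n), and moreover L(2n) = 2 + Σ_{i=2}^{2n} Σ_{m=1}^{⌊i/2⌋} (2n/i) · C(i, 2m) · C(n+m−1, i−1) · C(2m, i), where the identity holds in ℚ. -/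
/-- The Lucas sequence: `L(0) = 2`, `L(1) = 1`, `L(k) = L(k−1) + L(k−2)`. -/
def lucas : ℕ → ℕ
  | 0 => 2
  | 1 => 1
  | k + 2 => lucas (k + 1) + lucas k

def pathInd (a k : ℕ) : Finset (Finset ℕ) :=
  (Finset.Ico a (a + k)).powerset.filter (fun A => ∀ x ∈ A, x + 1 ∉ A)

theorem mem_pathInd (a k : ℕ) (A : Finset ℕ) :
    A ∈ pathInd a k ↔ (∀ x ∈ A, a ≤ x ∧ x < a + k) ∧ ∀ x ∈ A, x + 1 ∉ A := by
  simp [pathInd, Finset.subset_iff]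

theorem card_union_insert (S T : Finset (Finset ℕ)) (z : ℕ)
    (hS : ∀ A ∈ S, z ∉ A) (hT : ∀ A ∈ T, z ∉ A) :
    (S ∪ T.image (insert z)).card = S.card + T.card := by
  rw [Finset.card_union_of_disjoint, Finset.card_image_of_injOn]
  · intro A hA B hB h
    have h1 := congrArg (fun X => Finset.erase X z) h
    simpa [Finset.erase_insert (hT A hA), Finset.erase_insert (hT B hB)] using h1
  · rw [Finset.disjoint_left]
    intro A hA hB
    obtain ⟨B, _, rfl⟩ := Finset.mem_image.1 hB
    exact hS _ hA (Finset.mem_insert_self _ _)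

theorem pathInd_succ (a k : ℕ) :
    pathInd a (k + 2) = pathInd a (k + 1) ∪ (pathInd a k).image (insert (a + k + 1)) := by
  ext A
  simp only [Finset.mem_union, Finset.mem_image, mem_pathInd]
  constructor
  · rintro ⟨h1, h2⟩
    by_cases h : a + k + 1 ∈ A
    · right
      refine ⟨A.erase (a + k + 1), ⟨?_, ?_⟩, Finset.insert_erase h⟩
      · intro x hx
        rw [Finset.mem_erase] at hx
        have := h1 x hx.2
        have h3 : x ≠ a + k := by
          rintro rfl
          exact h2 _ hx.2 h
        omega
      · intro x hx hx'
        exact h2 x (Finset.mem_of_mem_erase hx) (Finset.mem_of_mem_erase hx')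
    · left
      refine ⟨?_, h2⟩
      intro x hx
      have := h1 x hx
      have h3 : x ≠ a + k + 1 := by
        rintro rfl
        exact h hx
      omega
  · rintro (⟨h1, h2⟩ | ⟨B, ⟨h1, h2⟩, rfl⟩)
    · refine ⟨fun x hx => ?_, h2⟩
      have := h1 x hx
      omega
    · constructor
      · intro x hx
        rcases Finset.mem_insert.1 hx with rfl | hx
        · omega
        · have := h1 x hx
          omega
      · intro x hx hx'
        rcases Finset.mem_insert.1 hx with h | hx <;> rcases Finset.mem_insert.1 hx' with h' | hx'
        · omega
        · have := h1 _ hx'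
          omega
        · have := h1 _ hx
          omega
        · exact h2 x hx hx'

theorem pathInd_zero (a : ℕ) : pathInd a 0 = {∅} := by
  ext A
  rw [mem_pathInd, Finset.mem_singleton]
  constructor
  · rintro ⟨h1, -⟩
    rw [Finset.eq_empty_iff_forall_notMem]
    intro x hx
    have := h1 x hx
    omega
  · rintro rfl
    simp

theorem pathInd_one (a : ℕ) : pathInd a 1 = {∅, {a}} := by
  ext A
  rw [mem_pathInd, Finset.mem_insert, Finset.mem_singleton, ← Finset.subset_singleton_iff]
  constructor
  · rintro ⟨h1, -⟩ x hx
    have := h1 x hx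
    rw [Finset.mem_singleton]
    omega
  · intro h
    have h' : ∀ x ∈ A, x = a := fun x hx => Finset.mem_singleton.1 (h hx)
    refine ⟨fun x hx => ?_, fun x hx hx' => ?_⟩
    · have := h' x hx
      omega
    · have := h' x hx
      have := h' _ hx'
      omega

theorem card_pathInd (a k : ℕ) : (pathInd a k).card = Nat.fib (k + 2) := by
  induction k using Nat.twoStepInduction with
  | zero => simp [pathInd_zero]
  | one =>
    rw [pathInd_one, Finset.card_pair (Finset.singleton_ne_empty a).symm]
    rfl
  | more k ih1 ih2 =>
    rw [pathInd_succ, card_union_insert, ih1, ih2, Nat.fib_add_two (n := k + 2)]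
    · ring
    · intro A hA h
      have := ((mem_pathInd _ _ _).1 hA).1 _ h
      omega
    · intro A hA h
      have := ((mem_pathInd _ _ _).1 hA).1 _ h
      omega

theorem lucas_eq_fib (k : ℕ) : lucas (k + 1) = Nat.fib k + Nat.fib (k + 2) := by
  induction k using Nat.twoStepInduction with
  | zero => rfl
  | one => rfl
  | more k ih1 ih2 =>
    have h0 : Nat.fib (k + 2) = Nat.fib k + Nat.fib (k + 1) := Nat.fib_add_two
    have h1 : Nat.fib (k + 4) = Nat.fib (k + 2) + Nat.fib (k + 3) := Nat.fib_add_two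
    have e : lucas (k + 2 + 1) = lucas (k + 1 + 1) + lucas (k + 1) := by rw [lucas]
    rw [e, ih1, ih2]
    simp only [add_assoc, Nat.reduceAdd]
    omega

theorem crown_iff (n : ℕ) (hn : 2 ≤ n) (A : Finset ℕ) :
    (A ⊆ crownGround n ∧ ∀ x ∈ A, ∀ y ∈ A, x ≠ y → ¬ crownLe n x y) ↔
    (∀ x ∈ A, 1 ≤ x ∧ x ≤ 2 * n) ∧ (∀ x ∈ A, x + 1 ∉ A) ∧ ¬ (1 ∈ A ∧ 2 * n ∈ A) := by
  have e : A ⊆ crownGround n ↔ ∀ x ∈ A, 1 ≤ x ∧ x ≤ 2 * n := by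
    simp [crownGround, Finset.subset_iff]
  rw [e]
  refine and_congr_right fun _ => ?_
  constructor
  · intro h
    constructor
    · intro x hx hx'
      rcases Nat.even_or_odd x with hp | hp
      · exact h _ hx' _ hx (by omega) (Or.inr ⟨hp.add_one, hp, Or.inr (Or.inl rfl)⟩)
      · exact h _ hx _ hx' (by omega) (Or.inr ⟨hp, hp.add_one, Or.inl rfl⟩)
    · rintro ⟨h1, h2⟩
      exact h _ h1 _ h2 (by omega)
        (Or.inr ⟨odd_one, even_two_mul n, Or.inr (Or.inr ⟨rfl, rfl⟩)⟩)
  · rintro ⟨h1, h2⟩ x hx y hy hxy (h | ⟨-, -, h | h | ⟨h, h'⟩⟩)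
    · exact hxy h
    · exact h1 x hx (h ▸ hy)
    · exact h1 y hy (h ▸ hx)
    · exact h2 ⟨h ▸ hx, h' ▸ hy⟩

theorem crown_set (n : ℕ) :
    {A : Finset ℕ | A ⊆ crownGround (n + 2) ∧
        ∀ x ∈ A, ∀ y ∈ A, x ≠ y → ¬ crownLe (n + 2) x y} =
    ((pathInd 1 (2 * n + 3) ∪ (pathInd 2 (2 * n + 1)).image (insert (2 * n + 4)) :
      Finset (Finset ℕ)) : Set (Finset ℕ)) := by
  ext A
  rw [Set.mem_ofPred_eq, crown_iff _ (by omega)]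
  simp only [Finset.coe_union, Finset.coe_image, Set.mem_union, Finset.mem_coe, Set.mem_image,
    mem_pathInd, show 2 * (n + 2) = 2 * n + 4 by ring]
  constructor
  · rintro ⟨h1, h2, h3⟩
    by_cases h : 2 * n + 4 ∈ A
    · right
      refine ⟨A.erase (2 * n + 4), ⟨?_, ?_⟩, Finset.insert_erase h⟩
      · intro x hx
        rw [Finset.mem_erase] at hx
        have := h1 x hx.2
        have h4 : x ≠ 2 * n + 3 := by
          rintro rfl
          exact h2 _ hx.2 h
        have h5 : x ≠ 1 := by
          rintro rfl
          exact h3 ⟨hx.2, h⟩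
        omega
      · intro x hx hx'
        exact h2 x (Finset.mem_of_mem_erase hx) (Finset.mem_of_mem_erase hx')
    · left
      refine ⟨?_, h2⟩
      intro x hx
      have := h1 x hx
      have h4 : x ≠ 2 * n + 4 := by
        rintro rfl
        exact h hx
      omega
  · rintro (⟨h1, h2⟩ | ⟨B, ⟨h1, h2⟩, rfl⟩)
    · refine ⟨fun x hx => ?_, h2, fun h => ?_⟩
      · have := h1 x hx
        omega
      · have := h1 _ h.2
        omega
    · refine ⟨?_, ?_, ?_⟩
      · intro x hx
        rcases Finset.mem_insert.1 hx with rfl | hx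
        · omega
        · have := h1 x hx
          omega
      · intro x hx hx'
        rcases Finset.mem_insert.1 hx with h | hx <;> rcases Finset.mem_insert.1 hx' with h' | hx'
        · omega
        · have := h1 _ hx'
          omega
        · have := h1 _ hx
          omega
        · exact h2 x hx hx'
      · rintro ⟨hx, -⟩
        rcases Finset.mem_insert.1 hx with h | hx
        · omega
        · have := h1 _ hx
          omega

theorem fib_sums (n : ℕ) : ∀ N, n < N →
    ∑ m ∈ Finset.range N, (n + m).choose (2 * m) = Nat.fib (2 * n + 1) ∧
    ∑ m ∈ Finset.range N, (n + m).choose (2 * m + 1) = Nat.fib (2 * n) := by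
  induction n with
  | zero =>
    intro N hN
    obtain ⟨M, rfl⟩ := Nat.exists_eq_add_of_lt hN
    constructor
    · rw [Finset.sum_range_succ', Finset.sum_eq_zero]
      · rfl
      · intro i _
        exact Nat.choose_eq_zero_of_lt (by omega)
    · rw [Finset.sum_eq_zero]
      · rfl
      · intro i _
        exact Nat.choose_eq_zero_of_lt (by omega)
  | succ n ih =>
    have hB : ∀ N, n < N → ∑ m ∈ Finset.range N, (n + 1 + m).choose (2 * m + 1)
        = Nat.fib (2 * n + 2) := by
      intro N hN
      have : ∀ m, (n + 1 + m).choose (2 * m + 1)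
          = (n + m).choose (2 * m) + (n + m).choose (2 * m + 1) := fun m => by
        rw [show n + 1 + m = (n + m) + 1 by ring, Nat.choose_succ_succ]
      simp_rw [this]
      rw [Finset.sum_add_distrib, (ih N hN).1, (ih N hN).2, Nat.fib_add_two]
      ring
    intro N hN
    refine ⟨?_, hB N (by omega)⟩
    obtain ⟨M, rfl⟩ : ∃ M, N = M + 1 := ⟨N - 1, by omega⟩
    have h1 := (ih (M + 1) (by omega)).1
    rw [Finset.sum_range_succ'] at h1 ⊢
    have : ∀ m, (n + 1 + (m + 1)).choose (2 * (m + 1))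
        = (n + 1 + m).choose (2 * m + 1) + (n + (m + 1)).choose (2 * (m + 1)) := fun m => by
      rw [show n + 1 + (m + 1) = (n + 1 + m) + 1 by ring, show 2 * (m + 1) = (2 * m + 1) + 1 by ring,
        Nat.choose_succ_succ, show n + 1 + m = n + (m + 1) by ring]
    simp_rw [this]
    rw [Finset.sum_add_distrib, hB M (by omega), show 2 * (n + 1) + 1 = (2 * n + 1) + 2 by ring,
      Nat.fib_add_two (n := 2 * n + 1), show 2 * n + 1 + 1 = 2 * n + 2 by ring]
    simp at h1 ⊢
    omega

theorem term_eq (n m : ℕ) :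
    (2 * (n + 1 : ℕ) : ℚ) / ((2 * (m + 1) : ℕ) : ℚ) * ((n + 1 + m).choose (2 * m + 1) : ℚ)
      = ((n + 1 + (m + 1)).choose (2 * (m + 1)) : ℚ) + ((n + (m + 1)).choose (2 * (m + 1)) : ℚ) := by
  have h1 := Nat.add_one_mul_choose_eq (n + 1 + m) (2 * m + 1)
  have h2 := Nat.choose_succ_succ (n + 1 + m) (2 * m + 1)
  have h1' : ((n + 1 + m + 1 : ℚ)) * ((n + 1 + m).choose (2 * m + 1) : ℚ)
      = ((n + 1 + m + 1).choose (2 * m + 1 + 1) : ℚ) * (2 * m + 1 + 1) := by exact_mod_cast h1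
  have h2' : ((n + 1 + m + 1).choose (2 * m + 1 + 1) : ℚ)
      = ((n + 1 + m).choose (2 * m + 1) : ℚ) + ((n + 1 + m).choose (2 * m + 1 + 1) : ℚ) := by
    exact_mod_cast h2
  rw [show n + 1 + (m + 1) = n + 1 + m + 1 by ring, show 2 * (m + 1) = 2 * m + 1 + 1 by ring,
    show n + (m + 1) = n + 1 + m by ring]
  have h3 : (2 * m + 1 + 1 : ℚ) ≠ 0 := by positivity
  push_cast
  field_simp
  linear_combination 2 * h1' + (2 * m + 1 + 1) * h2'

theorem inner_collapse (n i : ℕ) (hi : 2 ≤ i) :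
    ∑ m ∈ Finset.Icc 1 (i / 2),
            (2 * n : ℚ) / i * (i.choose (2 * m) : ℚ) * ((n + m - 1).choose (i - 1) : ℚ)
              * ((2 * m).choose i : ℚ)
    = if Even i then (2 * n : ℚ) / i * ((n + i / 2 - 1).choose (i - 1) : ℚ) else 0 := by
  split_ifs with h
  · obtain ⟨k, rfl⟩ := h
    have hk : (k + k) / 2 = k := by omega
    rw [hk, Finset.sum_eq_single k]
    · simp [two_mul]
    · intro b hb hbk
      rw [Finset.mem_Icc] at hb
      rw [Nat.choose_eq_zero_of_lt (show 2 * b < k + k by omega)]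
      simp
    · intro h
      exact absurd (Finset.mem_Icc.2 ⟨by omega, le_rfl⟩) h
  · apply Finset.sum_eq_zero
    intro b hb
    rw [Finset.mem_Icc] at hb
    rw [Nat.not_even_iff] at h
    rw [Nat.choose_eq_zero_of_lt (show 2 * b < i by omega)]
    simp

theorem double_sum (n : ℕ) :
    ∑ i ∈ Finset.Icc 2 (2 * n), ∑ m ∈ Finset.Icc 1 (i / 2),
            (2 * n : ℚ) / i * (i.choose (2 * m) : ℚ) * ((n + m - 1).choose (i - 1) : ℚ)
              * ((2 * m).choose i : ℚ)
    = ∑ m ∈ Finset.range n, (2 * n : ℚ) / ((2 * (m + 1) : ℕ) : ℚ)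
        * ((n + m).choose (2 * m + 1) : ℚ) := by
  rw [Finset.sum_congr rfl (fun i hi => inner_collapse n i (Finset.mem_Icc.1 hi).1),
    ← Finset.sum_filter]
  symm
  apply Finset.sum_bij (fun m _ => 2 * (m + 1))
  · intro m hm
    rw [Finset.mem_range] at hm
    rw [Finset.mem_filter, Finset.mem_Icc]
    exact ⟨by omega, even_two_mul _⟩
  · intro a _ b _ h
    omega
  · intro b hb
    rw [Finset.mem_filter, Finset.mem_Icc] at hb
    obtain ⟨hb, k, rfl⟩ := hb
    exact ⟨k - 1, Finset.mem_range.2 (by omega), by omega⟩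
  · intro m _
    rw [show n + 2 * (m + 1) / 2 - 1 = n + m by omega, show 2 * (m + 1) - 1 = 2 * m + 1 by omega]

/-- The number of antichains of the crown poset `C_{2n}` is the Lucas number
`L(2n)`, and `L(2n) = 2 + Σ_{i=2}^{2n} Σ_{m=1}^{⌊i/2⌋} (2n/i) C(i,2m) C(n+m−1,i−1) C(2m,i)`. -/
theorem crown_antichains_lucas (n : ℕ) (hn : 2 ≤ n) :
    {A : Finset ℕ | A ⊆ crownGround n ∧
        ∀ x ∈ A, ∀ y ∈ A, x ≠ y → ¬ crownLe n x y}.ncard = lucas (2 * n) ∧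
      (lucas (2 * n) : ℚ)
        = 2 + ∑ i ∈ Finset.Icc 2 (2 * n), ∑ m ∈ Finset.Icc 1 (i / 2),
            (2 * n : ℚ) / i * (i.choose (2 * m) : ℚ) * ((n + m - 1).choose (i - 1) : ℚ)
              * ((2 * m).choose i : ℚ) := by
  obtain ⟨k, rfl⟩ : ∃ k, n = k + 2 := ⟨n - 2, by omega⟩
  constructor
  · rw [crown_set, Set.ncard_coe_finset, card_union_insert, card_pathInd, card_pathInd,
      show 2 * (k + 2) = (2 * k + 3) + 1 by ring, lucas_eq_fib]
    · ring
    · intro A hA h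
      have := ((mem_pathInd _ _ _).1 hA).1 _ h
      omega
    · intro A hA h
      have := ((mem_pathInd _ _ _).1 hA).1 _ h
      omega
  · rw [double_sum, Finset.sum_congr rfl (fun m _ => term_eq (k + 1) m),
      Finset.sum_add_distrib, show 2 * (k + 2) = (2 * k + 3) + 1 by ring, lucas_eq_fib]
    have h1 := (fib_sums (k + 1 + 1) (k + 2 + 1) (by omega)).1
    have h2 := (fib_sums (k + 1) (k + 2 + 1) (by omega)).1
    rw [Finset.sum_range_succ'] at h1 h2
    rw [show 2 * k + 3 + 2 = 2 * (k + 1 + 1) + 1 by ring, show 2 * k + 3 = 2 * (k + 1) + 1 by ring,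
      ← h1, ← h2]
    push_cast
    simp
    ring
end

section
/- Let n ≥ 2. For every integer m ≥ 1, Ω_{C_{2n}}(m) = Ω_{C_{2n}}(m−1) + n · Ω_{Z_{2n−1}}(m−1) + Ω_{Z_{2n−3}}(m) + Σ_{1 ≤ i < j ≤ n} Ω_{Z_{2(n−j+i)−1}}(m−1) · Ω_{Z_{2(j−i)−1}}(m). -/
/-- Cover relations of the zigzag poset: `2i−1 ≺ 2i` and `2i+1 ≺ 2i`. -/
def zigCover (x y : ℕ) : Prop :=
  Odd x ∧ Even y ∧ (y = x + 1 ∨ x = y + 1)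

/-- The order relation of the zigzag poset `Z_k` (restricted to `{1,…,k}`). -/
def zigLe (x y : ℕ) : Prop := x = y ∨ zigCover x y

/-- The number of order-preserving maps from the poset with ground set `s` and
order relation `le` to the chain `{1,…,m}` (a map is recorded as a function
`ℕ → ℕ` vanishing outside `s`). -/
noncomputable def omegaOn (s : Finset ℕ) (le : ℕ → ℕ → Prop) (m : ℕ) : ℕ :=
  Set.ncard {f : ℕ → ℕ |
    (∀ x, x ∉ s → f x = 0) ∧ (∀ x ∈ s, f x ∈ Finset.Icc 1 m) ∧
    ∀ x ∈ s, ∀ y ∈ s, le x y → f x ≤ f y}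

/-- The order polynomial value `Ω_{C_{2n}}(m)`. -/
noncomputable def omegaCrown (n m : ℕ) : ℕ := omegaOn (crownGround n) (crownLe n) m

/-- The order polynomial value `Ω_{Z_k}(m)`. -/
noncomputable def omegaZig (k m : ℕ) : ℕ := omegaOn (Finset.Icc 1 k) zigLe m

def crownSet (n m : ℕ) : Set (ℕ → ℕ) :=
  {f | (∀ x, (x = 0 ∨ 2 * n < x) → f x = 0) ∧ (∀ x, 1 ≤ x → x ≤ 2 * n → 1 ≤ f x ∧ f x ≤ m) ∧
    ∀ x y, 1 ≤ x → x ≤ 2 * n → 1 ≤ y → y ≤ 2 * n → x % 2 = 1 → y % 2 = 0 →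
      (y = x + 1 ∨ x = y + 1 ∨ (x = 1 ∧ y = 2 * n)) → f x ≤ f y}

def zigSet (k m : ℕ) : Set (ℕ → ℕ) :=
  {f | (∀ x, (x = 0 ∨ k < x) → f x = 0) ∧ (∀ x, 1 ≤ x → x ≤ k → 1 ≤ f x ∧ f x ≤ m) ∧
    ∀ x y, 1 ≤ x → x ≤ k → 1 ≤ y → y ≤ k → x % 2 = 1 → y % 2 = 0 →
      (y = x + 1 ∨ x = y + 1) → f x ≤ f y}

lemma omegaCrown_eq (n m : ℕ) : omegaCrown n m = (crownSet n m).ncard := by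
  unfold omegaCrown omegaOn crownSet crownLe crownCover crownGround
  congr 1
  ext f
  simp only [Set.mem_setOf_eq, Finset.mem_Icc, Nat.odd_iff, Nat.even_iff]
  constructor
  · rintro ⟨h1, h2, h3⟩
    exact ⟨fun x hx => h1 x (by omega), fun x a b => h2 x ⟨a, b⟩,
      fun x y a b c d e f g => h3 x ⟨a, b⟩ y ⟨c, d⟩ (Or.inr ⟨e, f, g⟩)⟩
  · rintro ⟨h1, h2, h3⟩
    refine ⟨fun x hx => h1 x (by omega), fun x a => h2 x a.1 a.2, ?_⟩
    rintro x ⟨a, b⟩ y ⟨c, d⟩ (rfl | ⟨e, f, g⟩)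
    · exact le_rfl
    · exact h3 x y a b c d e f g

lemma omegaZig_eq (n m : ℕ) : omegaZig n m = (zigSet n m).ncard := by
  unfold omegaZig omegaOn zigSet zigLe zigCover
  congr 1
  ext f
  simp only [Set.mem_setOf_eq, Finset.mem_Icc, Nat.odd_iff, Nat.even_iff]
  constructor
  · rintro ⟨h1, h2, h3⟩
    exact ⟨fun x hx => h1 x (by omega), fun x a b => h2 x ⟨a, b⟩,
      fun x y a b c d e f g => h3 x ⟨a, b⟩ y ⟨c, d⟩ (Or.inr ⟨e, f, g⟩)⟩
  · rintro ⟨h1, h2, h3⟩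
    refine ⟨fun x hx => h1 x (by omega), fun x a => h2 x a.1 a.2, ?_⟩
    rintro x ⟨a, b⟩ y ⟨c, d⟩ (rfl | ⟨e, f, g⟩)
    · exact le_rfl
    · exact h3 x y a b c d e f g

lemma finite_crown (n m : ℕ) : (crownSet n m).Finite := by
  have : (Set.pi Set.univ (fun x : Fin (2*n+1) => Set.Iic m)).Finite :=
    Set.Finite.pi' (fun _ => Set.finite_Iic m) |>.subset (by intro f hf i; exact hf i trivial)
  refine Set.Finite.of_finite_image (f := fun (f : ℕ → ℕ) (x : Fin (2*n+1)) => f x)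
    (this.subset ?_) ?_
  · rintro _ ⟨f, ⟨h1, h2, -⟩, rfl⟩ x -
    by_cases hx : (x : ℕ) = 0
    · simp [h1 x (Or.inl hx)]
    · exact (h2 x (by omega) (by omega)).2
  · intro f hf g hg hfg
    funext x
    by_cases hx : x < 2*n+1
    · exact congrFun hfg ⟨x, hx⟩
    · rw [hf.1 x (by omega), hg.1 x (by omega)]

lemma zig_zero (m : ℕ) : (zigSet 0 m).ncard = 1 := by
  rw [Set.ncard_eq_one]
  refine ⟨fun _ => 0, ?_⟩
  ext f
  simp only [Set.mem_singleton_iff]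
  constructor
  · intro h; funext x; exact h.1 x (by omega)
  · rintro rfl
    exact ⟨fun _ _ => rfl, fun x _ _ => by omega, fun x y _ _ => by omega⟩

lemma zig_one (m : ℕ) : (zigSet 1 m).ncard = m := by
  have : zigSet 1 m = (fun (a : ℕ) (x : ℕ) => if x = 1 then a else 0) '' (Finset.Icc 1 m : Finset ℕ) := by
    ext f
    simp only [Set.mem_image, Finset.coe_Icc, Set.mem_Icc]
    constructor
    · intro h
      refine ⟨f 1, h.2.1 1 le_rfl le_rfl, ?_⟩
      funext x
      split_ifs with hx
      · rw [hx]
      · rw [h.1 x (by omega)]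
    · rintro ⟨a, ha, rfl⟩
      refine ⟨fun x hx => if_neg (by omega), fun x h1 h2 => ?_, fun x y _ _ => by omega⟩
      have : x = 1 := by omega
      simpa [this] using ha
  rw [this, Set.ncard_image_of_injective, Set.ncard_coe_finset]
  · simp
  · intro a b h
    simpa using congrFun h 1

def S (n m i j : ℕ) : Set (ℕ → ℕ) :=
  {f | f ∈ crownSet n m ∧ f (2 * i) = m ∧ f (2 * j) = m ∧
    (∀ k, 1 ≤ k → k ≤ n → (k < i ∨ j < k) → f (2 * k) < m)}

def glue (n m i j : ℕ) (g h : ℕ → ℕ) (y : ℕ) : ℕ :=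
  if y = 2 * i ∨ y = 2 * j then m
  else if 2 * i < y ∧ y < 2 * j then h (y - 2 * i)
  else if 2 * j < y ∧ y ≤ 2 * n then g (y - 2 * j)
  else if 1 ≤ y ∧ y < 2 * i then g (y + 2 * n - 2 * j)
  else 0

lemma card_S (n m i j b : ℕ) (hn : 2 ≤ n) (hm : 1 ≤ m) (hi : 1 ≤ i) (hij : i ≤ j) (hj : j ≤ n)
    (hb : (b + 1 = m ∧ ¬ (i = 1 ∧ j = n)) ∨ (b = m ∧ i = 1 ∧ j = n)) :
    (S n m i j).ncard = (zigSet (2 * (n - j + i) - 1) b).ncard * (zigSet (2 * (j - i) - 1) m).ncard := by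
  rw [← Set.ncard_prod]
  refine Set.ncard_congr (fun f _ =>
    (fun x => if 1 ≤ x ∧ x ≤ 2 * (n - j + i) - 1 then
        (if 2 * j + x ≤ 2 * n then f (2 * j + x) else f (2 * j + x - 2 * n)) else 0,
     fun x => if 1 ≤ x ∧ x ≤ 2 * (j - i) - 1 then f (2 * i + x) else 0)) ?_ ?_ ?_
  · rintro f ⟨⟨h1, h2, h3⟩, hfi, hfj, h4⟩
    have h5 : ∀ y, 1 ≤ y → y ≤ 2 * n → (y < 2 * i ∨ 2 * j < y) → f y ≤ b := by
      intro y hy1 hy2 hy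
      rcases hb with ⟨hb, hne⟩ | ⟨rfl, rfl, rfl⟩
      · rcases Nat.even_or_odd' y with ⟨k, rfl | rfl⟩
        · have := h4 k (by omega) (by omega) (by omega); omega
        · by_cases hk : k + 1 < i ∨ j < k + 1 ∧ k + 1 ≤ n
          · have a := h4 (k + 1) (by omega) (by omega) (by omega)
            have := h3 (2*k+1) (2*(k+1)) (by omega) (by omega) (by omega) (by omega) (by omega)
              (by omega) (by omega)
            omega
          · by_cases hk0 : k = 0
            · subst hk0
              have a := h4 n (by omega) (by omega) (by omega)
              have := h3 (2*0+1) (2*n) (by omega) (by omega) (by omega) (by omega) (by omega)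
                (by omega) (by omega)
              omega
            · have a := h4 k (by omega) (by omega) (by omega)
              have := h3 (2*k+1) (2*k) (by omega) (by omega) (by omega) (by omega) (by omega)
                (by omega) (by omega)
              omega
      · exact (h2 y hy1 hy2).2
    refine Set.mk_mem_prod ⟨?_, ?_, ?_⟩ ⟨?_, ?_, ?_⟩
    · intro x hx
      exact if_neg (by omega)
    · intro x hx1 hx2
      simp only [hx1, hx2, and_self, if_true]
      split_ifs with h
      · exact ⟨(h2 _ (by omega) h).1, h5 _ (by omega) h (by omega)⟩
      · exact ⟨(h2 _ (by omega) (by omega)).1, h5 _ (by omega) (by omega) (by omega)⟩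
    · intro x y hx1 hx2 hy1 hy2 hx hy hxy
      simp only [hx1, hx2, hy1, hy2, and_self, if_true]
      split_ifs with h h' h' <;>
        exact h3 _ _ (by omega) (by omega) (by omega) (by omega) (by omega) (by omega) (by omega)
    · intro x hx
      exact if_neg (by omega)
    · intro x hx1 hx2
      simp only [hx1, hx2, and_self, if_true]
      exact h2 _ (by omega) (by omega)
    · intro x y hx1 hx2 hy1 hy2 hx hy hxy
      simp only [hx1, hx2, hy1, hy2, and_self, if_true]
      exact h3 _ _ (by omega) (by omega) (by omega) (by omega) (by omega) (by omega) (by omega)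
  · rintro f f' ⟨⟨h1, h2, h3⟩, hfi, hfj, h4⟩ ⟨⟨h1', h2', h3'⟩, hfi', hfj', h4'⟩ he
    rw [Prod.mk.injEq] at he
    obtain ⟨e1, e2⟩ := he
    funext y
    by_cases hy : y = 0 ∨ 2 * n < y
    · rw [h1 y hy, h1' y hy]
    by_cases c1 : y = 2 * i
    · rw [c1, hfi, hfi']
    by_cases c2 : y = 2 * j
    · rw [c2, hfj, hfj']
    by_cases c3 : 2 * i < y ∧ y < 2 * j
    · have := congrFun e2 (y - 2 * i)
      beta_reduce at this
      rw [if_pos (by omega), if_pos (by omega)] at this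
      rwa [show 2 * i + (y - 2 * i) = y by omega] at this
    by_cases c4 : 2 * j < y
    · have := congrFun e1 (y - 2 * j)
      beta_reduce at this
      rw [if_pos (by omega), if_pos (by omega), if_pos (by omega), if_pos (by omega)] at this
      rwa [show 2 * j + (y - 2 * j) = y by omega] at this
    · have := congrFun e1 (y + 2 * n - 2 * j)
      beta_reduce at this
      rw [if_pos (by omega), if_neg (by omega), if_pos (by omega), if_neg (by omega)] at this
      rwa [show 2 * j + (y + 2 * n - 2 * j) - 2 * n = y by omega] at this
  · rintro ⟨g, h⟩ ⟨⟨g1, g2, g3⟩, ⟨h1, h2, h3⟩⟩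
    simp only at g1 g2 g3 h1 h2 h3
    have E0 : ∀ y, (y = 2 * i ∨ y = 2 * j) → glue n m i j g h y = m := fun y hy => if_pos hy
    have E1 : ∀ y, 2 * i < y → y < 2 * j → glue n m i j g h y = h (y - 2 * i) := by
      intro y a b; unfold glue; rw [if_neg (by omega), if_pos (by omega)]
    have E2 : ∀ y, 2 * j < y → y ≤ 2 * n → glue n m i j g h y = g (y - 2 * j) := by
      intro y a b; unfold glue; rw [if_neg (by omega), if_neg (by omega), if_pos (by omega)]
    have E3 : ∀ y, 1 ≤ y → y < 2 * i → glue n m i j g h y = g (y + 2 * n - 2 * j) := by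
      intro y a b; unfold glue
      rw [if_neg (by omega), if_neg (by omega), if_neg (by omega), if_pos (by omega)]
    have E4 : ∀ y, (y = 0 ∨ 2 * n < y) → glue n m i j g h y = 0 := by
      intro y a; unfold glue
      rw [if_neg (by omega), if_neg (by omega), if_neg (by omega), if_neg (by omega)]
    have B : ∀ y, 1 ≤ y → y ≤ 2 * n → 1 ≤ glue n m i j g h y ∧ glue n m i j g h y ≤ m := by
      intro y hy1 hy2
      by_cases c1 : y = 2 * i ∨ y = 2 * j
      · rw [E0 y c1]; omega
      by_cases c3 : 2 * i < y ∧ y < 2 * j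
      · rw [E1 y c3.1 c3.2]; exact h2 _ (by omega) (by omega)
      by_cases c4 : 2 * j < y
      · rw [E2 y c4 hy2]; have := g2 (y - 2 * j) (by omega) (by omega); omega
      · rw [E3 y hy1 (by omega)]
        have := g2 (y + 2 * n - 2 * j) (by omega) (by omega); omega
    refine ⟨glue n m i j g h, ⟨⟨E4, B, ?_⟩, E0 _ (Or.inl rfl), E0 _ (Or.inr rfl), ?_⟩, ?_⟩
    · intro x y hx1 hx2 hy1 hy2 hx hy hxy
      by_cases c1 : y = 2 * i ∨ y = 2 * j
      · rw [E0 y c1]; exact (B x hx1 hx2).2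
      by_cases c3 : 2 * i < y ∧ y < 2 * j
      · rw [E1 y c3.1 c3.2, E1 x (by omega) (by omega)]
        exact h3 _ _ (by omega) (by omega) (by omega) (by omega) (by omega) (by omega) (by omega)
      by_cases c4 : 2 * j < y
      · rw [E2 y c4 hy2]
        by_cases c5 : 2 * j < x
        · rw [E2 x c5 hx2]
          exact g3 _ _ (by omega) (by omega) (by omega) (by omega) (by omega) (by omega) (by omega)
        · rw [E3 x hx1 (by omega)]
          exact g3 _ _ (by omega) (by omega) (by omega) (by omega) (by omega) (by omega) (by omega)
      · rw [E3 y hy1 (by omega), E3 x hx1 (by omega)]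
        exact g3 _ _ (by omega) (by omega) (by omega) (by omega) (by omega) (by omega) (by omega)
    · intro k hk1 hk2 hk
      rcases hk with hk | hk
      · rw [E3 _ (by omega) (by omega)]
        have := g2 (2 * k + 2 * n - 2 * j) (by omega) (by omega); omega
      · rw [E2 _ (by omega) (by omega)]
        have := g2 (2 * k - 2 * j) (by omega) (by omega); omega
    · refine Prod.ext (funext fun x => ?_) (funext fun x => ?_)
      · simp only
        split_ifs with c1 c2
        · rw [E2 _ (by omega) c2]; congr 1; omega
        · rw [E3 _ (by omega) (by omega)]; congr 1; omega
        · rw [g1 x (by omega)]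
      · simp only
        split_ifs with c1
        · rw [E1 _ (by omega) (by omega)]; congr 1; omega
        · rw [h1 x (by omega)]

def pairs (n : ℕ) : Finset ((_ : ℕ) × ℕ) := (Finset.Icc 1 n).sigma (fun i => Finset.Icc i n)

lemma crown_split (n m : ℕ) (hm : 1 ≤ m) :
    crownSet n m = crownSet n (m - 1) ∪ ⋃ p ∈ pairs n, S n m p.1 p.2 := by
  ext f
  simp only [Set.mem_union, Set.mem_iUnion, exists_prop, pairs, Finset.mem_sigma, Finset.mem_Icc]
  constructor
  · intro hf
    by_cases hT : ∃ k, (1 ≤ k ∧ k ≤ n) ∧ f (2 * k) = m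
    · right
      let T := (Finset.Icc 1 n).filter (fun k => f (2 * k) = m)
      have hTn : T.Nonempty := by
        obtain ⟨k, hk, e⟩ := hT
        exact ⟨k, by simp [T, hk, e]⟩
      have hmin := Finset.min'_mem T hTn
      have hmax := Finset.max'_mem T hTn
      have hle := Finset.min'_le T _ hmax
      have a1 : ∀ k ∈ T, T.min' hTn ≤ k := fun k hk => Finset.min'_le T k hk
      have a2 : ∀ k ∈ T, k ≤ T.max' hTn := fun k hk => Finset.le_max' T k hk
      generalize T.min' hTn = i at *
      generalize T.max' hTn = j at *
      simp only [T, Finset.mem_filter, Finset.mem_Icc] at hmin hmax a1 a2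
      refine ⟨⟨i, j⟩, ⟨hmin.1, hle, hmax.1.2⟩, hf, hmin.2, hmax.2, ?_⟩
      intro k hk1 hk2 hk
      change k < i ∨ j < k at hk
      refine lt_of_le_of_ne (hf.2.1 _ (by omega) (by omega)).2 fun e => ?_
      have := a1 k ⟨⟨hk1, hk2⟩, e⟩
      have := a2 k ⟨⟨hk1, hk2⟩, e⟩
      omega
    · left
      push Not at hT
      obtain ⟨h1, h2, h3⟩ := hf
      refine ⟨h1, fun x hx1 hx2 => ⟨(h2 x hx1 hx2).1, ?_⟩, h3⟩
      rcases Nat.even_or_odd' x with ⟨k, rfl | rfl⟩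
      · have := hT k (by omega)
        have := h2 (2 * k) hx1 hx2
        omega
      · have := hT (k + 1) (by omega)
        have := h2 (2 * (k + 1)) (by omega) (by omega)
        have := h3 (2*k+1) (2*(k+1)) (by omega) (by omega) (by omega) (by omega) (by omega)
          (by omega) (by omega)
        omega
  · rintro (⟨h1, h2, h3⟩ | ⟨p, hp, hf, -⟩)
    · exact ⟨h1, fun x a b => by have := h2 x a b; omega, h3⟩
    · exact hf

lemma crown_count (n m : ℕ) (hm : 1 ≤ m) :
    (crownSet n m).ncard = (crownSet n (m - 1)).ncard
      + ∑ i ∈ Finset.Icc 1 n, ∑ j ∈ Finset.Icc i n, (S n m i j).ncard := by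
  classical
  have fS : ∀ i j, (S n m i j).Finite := fun i j => (finite_crown n m).subset fun f hf => hf.1
  have e : (⋃ p ∈ pairs n, S n m p.1 p.2)
      = (((pairs n).biUnion fun p => (fS p.1 p.2).toFinset : Finset (ℕ → ℕ)) : Set (ℕ → ℕ)) := by
    ext f; simp
  have hd : Disjoint (crownSet n (m - 1)) (⋃ p ∈ pairs n, S n m p.1 p.2) := by
    rw [Set.disjoint_left]
    intro f hf hf'
    simp only [Set.mem_iUnion, exists_prop, pairs, Finset.mem_sigma, Finset.mem_Icc] at hf'
    obtain ⟨p, hp, -, h, -⟩ := hf'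
    have := hf.2.1 (2 * p.1) (by omega) (by omega)
    omega
  rw [crown_split n m hm, Set.ncard_union_eq hd (finite_crown _ _) (by rw [e]; exact Finset.finite_toSet _),
    e, Set.ncard_coe_finset, Finset.card_biUnion, pairs, Finset.sum_sigma]
  · congr 1
    refine Finset.sum_congr rfl fun i _ => Finset.sum_congr rfl fun j _ => ?_
    rw [Set.ncard_eq_toFinset_card _ (fS i j)]
  · rintro ⟨i, j⟩ hp ⟨i', j'⟩ hp' hne
    replace hp := Finset.mem_sigma.1 (Finset.mem_coe.1 hp)
    replace hp' := Finset.mem_sigma.1 (Finset.mem_coe.1 hp')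
    simp only [Finset.mem_Icc] at hp hp'
    change Disjoint _ _
    rw [Finset.disjoint_left]
    intro f hf hf'
    simp only [Set.Finite.mem_toFinset] at hf hf'
    obtain ⟨-, a1, a2, a3⟩ := hf
    obtain ⟨-, b1, b2, b3⟩ := hf'
    apply hne
    have c1 : ¬ i < i' := fun h => by have := b3 i (by omega) (by omega) (by omega); omega
    have c2 : ¬ i' < i := fun h => by have := a3 i' (by omega) (by omega) (by omega); omega
    have c3 : ¬ j < j' := fun h => by have := a3 j' (by omega) (by omega) (by omega); omega
    have c4 : ¬ j' < j := fun h => by have := b3 j (by omega) (by omega) (by omega); omega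
    obtain rfl : i = i' := by omega
    obtain rfl : j = j' := by omega
    rfl

lemma card_S' (n m i j : ℕ) (hn : 2 ≤ n) (hm : 1 ≤ m) (hi : 1 ≤ i) (hij : i ≤ j) (hj : j ≤ n) :
    (S n m i j).ncard = omegaZig (2 * (n - j + i) - 1) (m - 1) * omegaZig (2 * (j - i) - 1) m
      + if i = 1 then (if j = n then omegaZig (2 * n - 3) m else 0) else 0 := by
  simp only [omegaZig_eq]
  by_cases h : i = 1 ∧ j = n
  · obtain ⟨rfl, rfl⟩ := h
    rw [card_S j m 1 j m hn hm hi hij hj (by omega)]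
    simp only [if_true, Nat.sub_self, zero_add, mul_one, Nat.add_one_sub_one, zig_one]
    rw [show 2 * (j - 1) - 1 = 2 * j - 3 by omega]
    obtain ⟨k, rfl⟩ : ∃ k, m = k + 1 := ⟨m - 1, by omega⟩
    simp only [Nat.add_one_sub_one]
    ring
  · rw [card_S n m i j (m - 1) hn hm hi hij hj (by omega)]
    split_ifs <;> first | omega | rfl

/-- Theorem 4.3, Equation (1): the recursion for the order polynomial of the
crown poset in terms of order polynomials of zigzags, evaluated at `m ≥ 1`. -/
theorem crown_order_polynomial_recursion (n : ℕ) (hn : 2 ≤ n) (m : ℕ) (hm : 1 ≤ m) :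
    omegaCrown n m
      = omegaCrown n (m - 1) + n * omegaZig (2 * n - 1) (m - 1) + omegaZig (2 * n - 3) m
        + ∑ i ∈ Finset.Icc 1 n, ∑ j ∈ Finset.Icc (i + 1) n,
            omegaZig (2 * (n - j + i) - 1) (m - 1) * omegaZig (2 * (j - i) - 1) m := by
  rw [omegaCrown_eq, omegaCrown_eq, crown_count n m hm]
  have key : ∀ i ∈ Finset.Icc 1 n, ∑ j ∈ Finset.Icc i n, (S n m i j).ncard
      = omegaZig (2 * n - 1) (m - 1) + (if i = 1 then omegaZig (2 * n - 3) m else 0)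
        + ∑ j ∈ Finset.Icc (i + 1) n,
            omegaZig (2 * (n - j + i) - 1) (m - 1) * omegaZig (2 * (j - i) - 1) m := by
    intro i hi
    rw [Finset.mem_Icc] at hi
    have : ∀ j ∈ Finset.Icc i n, (S n m i j).ncard = _ := fun j hj =>
      card_S' n m i j hn hm hi.1 (Finset.mem_Icc.1 hj).1 (Finset.mem_Icc.1 hj).2
    rw [Finset.sum_congr rfl this, Finset.sum_add_distrib]
    have e2 : (∑ j ∈ Finset.Icc i n,
        if i = 1 then (if j = n then omegaZig (2 * n - 3) m else 0) else 0)
        = if i = 1 then omegaZig (2 * n - 3) m else 0 := by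
      split_ifs
      · rw [Finset.sum_ite_eq', if_pos (Finset.mem_Icc.2 ⟨hi.2, le_rfl⟩)]
      · simp
    rw [e2, ← Finset.add_sum_Ioc_eq_sum_Icc hi.2]
    have e3 : Finset.Ioc i n = Finset.Icc (i + 1) n := by
      ext; simp only [Finset.mem_Ioc, Finset.mem_Icc]; omega
    rw [e3, Nat.sub_add_cancel hi.2, Nat.sub_self, Nat.mul_zero, Nat.zero_sub,
      omegaZig_eq 0, zig_zero]
    ring
  rw [Finset.sum_congr rfl key, Finset.sum_add_distrib, Finset.sum_add_distrib,
    Finset.sum_ite_eq', if_pos (Finset.mem_Icc.2 ⟨le_rfl, by omega⟩), Finset.sum_const,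
    Nat.card_Icc, smul_eq_mul, Nat.add_sub_cancel]
  ring
end

section
/- Let n ≥ 1 and let p ∈ ℚ[t] be the unique polynomial of degree at most 2n such that p(m) equals the number of order-preserving maps from the crown poset C_{2n} to the chain {1,…,m} for every integer m ≥ 1 (the order polynomial of C_{2n}). Then the coefficient of t in p equals 1 / C(2n, n). -/
open Polynomial in
noncomputable def Dz : ℕ → Polynomial ℝ
  | 0 => 1
  | 1 => 1 - X
  | (m+2) => (2 - X) * Dz (m+1) - Dz m

noncomputable def Kmat (m : ℕ) (z : ℝ) : Matrix (Fin m) (Fin m) ℝ := fun i j =>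
  if i = j then (if (i:ℕ) + 1 = m then 1 else 2) - z
  else if (j:ℕ) = i + 1 ∨ (i:ℕ) = j + 1 then -1 else 0

noncomputable def Mmat (m : ℕ) : Matrix (Fin m) (Fin m) ℝ := fun i j => ((min (i:ℕ) j + 1 : ℕ) : ℝ)

lemma Kmat_sub (m : ℕ) (z : ℝ) : (Kmat (m+1) z).submatrix Fin.succ Fin.succ = Kmat m z := by
  ext i j
  simp [Kmat, Matrix.submatrix_apply]

lemma det_Kmat_rec (m : ℕ) (z : ℝ) :
    (Kmat (m+2) z).det = (2 - z) * (Kmat (m+1) z).det - (Kmat m z).det := by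
  rw [Matrix.det_succ_row_zero, Fin.sum_univ_succ, Fin.sum_univ_succ]
  have h0 : ∑ i : Fin m, (-1 : ℝ) ^ ((i.succ.succ : Fin (m+2)) : ℕ) * Kmat (m+2) z 0 i.succ.succ *
      ((Kmat (m+2) z).submatrix Fin.succ (i.succ.succ : Fin (m+2)).succAbove).det = 0 := by
    apply Finset.sum_eq_zero
    intro i _
    have : Kmat (m+2) z 0 i.succ.succ = 0 := by
      simp [Kmat, Fin.ext_iff]
    rw [this]; ring
  rw [h0]
  have h1 : ((Kmat (m+2) z).submatrix Fin.succ (Fin.succ 0 : Fin (m+2)).succAbove).det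
      = - (Kmat m z).det := by
    rw [Matrix.det_succ_column_zero, Fin.sum_univ_succ]
    rw [Finset.sum_eq_zero]
    · have e : (((Kmat (m+2) z).submatrix Fin.succ (Fin.succ 0 : Fin (m+2)).succAbove).submatrix
          (Fin.succAbove 0) Fin.succ) = Kmat m z := by
        rw [← Kmat_sub m z, ← Kmat_sub (m+1) z]
        ext i j
        simp [Matrix.submatrix_apply]
      rw [e]
      simp [Kmat, Fin.ext_iff]
    · intro i _
      have : ((Kmat (m+2) z).submatrix Fin.succ (Fin.succ 0 : Fin (m+2)).succAbove) i.succ 0 = 0 := by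
        simp [Kmat, Fin.ext_iff]
      rw [this]; ring
  rw [h1]
  have h2 : (Kmat (m+2) z).submatrix Fin.succ (Fin.succAbove 0) = Kmat (m+1) z := by
    rw [← Kmat_sub (m+1) z]; simp
  rw [h2]
  simp [Kmat, Fin.ext_iff]
  ring

lemma det_Kmat (m : ℕ) (z : ℝ) : (Kmat m z).det = (Dz m).eval z := by
  induction m using Nat.twoStepInduction with
  | zero => simp [Dz]
  | one => simp [Dz, Kmat]
  | more m h1 h2 => rw [det_Kmat_rec, h1, h2]; simp [Dz]

lemma Dz_coeff (m j : ℕ) : (Dz m).coeff j = (-1)^j * ((m+j).choose (2*j) : ℝ) := by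
  induction m using Nat.twoStepInduction generalizing j with
  | zero =>
    rcases j with _ | j
    · simp [Dz]
    · rw [Nat.choose_eq_zero_of_lt (by omega)]; simp [Dz, Polynomial.coeff_one]
  | one =>
    rcases j with _ | _ | j
    · simp [Dz]
    · simp [Dz, Polynomial.coeff_one]
    · rw [Nat.choose_eq_zero_of_lt (by omega)]; simp [Dz, Polynomial.coeff_one, Polynomial.coeff_X]
  | more m h1 h2 =>
    have e : Dz (m+2) = Polynomial.C 2 * Dz (m+1) - Polynomial.X * Dz (m+1) - Dz m := by
      simp only [Dz, Polynomial.C_ofNat]; ring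
    rw [e, Polynomial.coeff_sub, Polynomial.coeff_sub, Polynomial.coeff_C_mul]
    rcases j with _ | j
    · simp [h1, h2]; norm_num
    · rw [Polynomial.coeff_X_mul, h1, h2, h2]
      have a : (m+2+(j+1)).choose (2*(j+1)) + (m+(j+1)).choose (2*(j+1))
          = 2 * (m+1+(j+1)).choose (2*(j+1)) + (m+1+j).choose (2*j) := by
        rw [show m+2+(j+1) = (m+j+1)+1+1 by ring, show 2*(j+1) = (2*j)+1+1 by ring,
          show m+1+(j+1) = (m+j+1)+1 by ring, show m+(j+1) = m+j+1 by ring,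
          show m+1+j = m+j+1 by ring]
        simp only [Nat.choose_succ_succ (m+j+1+1), Nat.choose_succ_succ (m+j+1)]
        ring
      have a' : ((m+2+(j+1)).choose (2*(j+1)) : ℝ) + (m+(j+1)).choose (2*(j+1))
          = 2 * (m+1+(j+1)).choose (2*(j+1)) + (m+1+j).choose (2*j) := by exact_mod_cast a
      rw [eq_sub_of_add_eq a']
      ring

lemma Kmat_row (m : ℕ) (i : Fin m) (f : ℕ → ℝ) :
    ∑ j : Fin m, Kmat m 0 i j * f j = (if (i:ℕ) + 1 = m then 1 else 2) * f i
      - (if (i:ℕ) = 0 then 0 else f (i-1)) - (if (i:ℕ)+1 = m then 0 else f (i+1)) := by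
  have hi := i.2
  obtain ⟨g, hg⟩ : ∃ g : ℕ → ℝ, g = (fun j : ℕ => (if j = i then (if (i:ℕ) + 1 = m then 1 else 2) * f i else 0)
      - (if j = (i:ℕ)-1 then (if (i:ℕ) = 0 then 0 else f (i-1)) else 0)
      - (if j = (i:ℕ)+1 then f (i+1) else 0)) := ⟨_, rfl⟩
  have : ∀ j : Fin m, Kmat m 0 i j * f j = g j := by
    intro j
    rw [hg]
    simp only [Kmat, Fin.ext_iff]
    by_cases h : (j:ℕ) = i
    · rw [h]
      by_cases h0 : (i:ℕ) = 0
      · simp [h0]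
      · have : (i:ℕ) ≠ i - 1 := by omega
        simp [this]
    · have h' : (i:ℕ) ≠ j := fun e => h e.symm
      by_cases h1 : (j:ℕ) = i + 1
      · have : (i:ℕ)+1 ≠ i - 1 := by omega
        simp [h1, this]
      · by_cases h2 : (i:ℕ) = j + 1
        · have h3 : (j:ℕ) ≠ j + 1 + 1 := by omega
          simp [h2, h3]
        · have : (j:ℕ) = i - 1 → (i:ℕ) = 0 := by omega
          by_cases h3 : (j:ℕ) = i - 1
          · exact absurd (h3.trans (by have := this h3; omega)) h
          · simp [h1, h2, h, h', h3]
  rw [Finset.sum_congr rfl (fun j _ => this j)]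
  rw [Fin.sum_univ_eq_sum_range g m, hg]
  rw [Finset.sum_sub_distrib, Finset.sum_sub_distrib]
  simp only [Finset.sum_ite_eq', Finset.mem_range]
  rw [if_pos hi, if_pos (by omega : (i:ℕ) - 1 < m)]
  congr 1
  by_cases hm : (i:ℕ) + 1 = m
  · rw [if_pos hm, if_neg (by omega)]
  · rw [if_neg hm, if_pos (by omega)]

lemma Kmat_mul_Mmat (m : ℕ) : Kmat m 0 * Mmat m = 1 := by
  ext i k
  rw [Matrix.mul_apply]
  have := Kmat_row m i (fun j => ((min j (k:ℕ) + 1 : ℕ) : ℝ))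
  simp only [Mmat]
  rw [this, Matrix.one_apply]
  simp only [Fin.ext_iff]
  have hi := i.2
  have hk := k.2
  generalize (i:ℕ) = a at *
  generalize (k:ℕ) = b at *
  rcases lt_trichotomy a b with h | h | h
  · have e1 : min a b = a := by omega
    have e2 : min (a-1) b = a-1 := by omega
    have e3 : min (a+1) b = a+1 := by omega
    have hm : ¬ a + 1 = m := by omega
    rw [e1, e2, e3, if_neg hm, if_neg hm, if_neg (by omega : ¬ a = b)]
    rcases a with _ | a
    · norm_num
    · simp; ring
  · subst h
    have e1 : min a a = a := by omega
    have e2 : min (a-1) a = a-1 := by omega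
    have e3 : min (a+1) a = a := by omega
    rw [e1, e2, e3]
    rcases a with _ | a
    · simp; split_ifs <;> norm_num
    · simp; split_ifs <;> ring
  · have e1 : min a b = b := by omega
    have e2 : min (a-1) b = b := by omega
    have e3 : min (a+1) b = b := by omega
    rw [e1, e2, e3, if_neg (by omega : ¬ a = b), if_neg (by omega : ¬ a = 0)]
    split_ifs <;> ring

lemma det_one_sub (m : ℕ) (z : ℝ) : (1 - z • Mmat m).det = (Dz m).eval z := by
  have h : Kmat m z = Kmat m 0 * (1 - z • Mmat m) := by
    rw [mul_sub, mul_one, Matrix.mul_smul, Kmat_mul_Mmat]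
    ext i j
    by_cases h : i = j <;> simp [Kmat, h, Matrix.one_apply]
  have h1 : (Kmat m 0).det = 1 := by
    rw [det_Kmat, ← Polynomial.coeff_zero_eq_eval_zero, Dz_coeff]; simp
  rw [← det_Kmat, h, Matrix.det_mul, h1, one_mul]

lemma spec (m : ℕ) : ∃ l : Fin m → ℝ, (∀ k, (Mmat m ^ k).trace = ∑ i, l i ^ k) ∧
    Dz m = ∏ i, (1 - Polynomial.C (l i) * Polynomial.X) := by
  have hA : (Mmat m).IsHermitian := by
    ext i j; simp [Mmat, min_comm]
  obtain ⟨U, V, hUV, hM⟩ : ∃ U V : Matrix (Fin m) (Fin m) ℝ, V * U = 1 ∧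
      Mmat m = U * Matrix.diagonal hA.eigenvalues * V := by
    refine ⟨hA.eigenvectorUnitary, star (hA.eigenvectorUnitary : Matrix (Fin m) (Fin m) ℝ),
      Unitary.coe_star_mul_self _, ?_⟩
    have := hA.spectral_theorem
    rw [Unitary.conjStarAlgAut_apply] at this
    exact this
  have hVU : U * V = 1 := mul_eq_one_comm.mp hUV
  refine ⟨hA.eigenvalues, ?_, ?_⟩
  · intro k
    have : Mmat m ^ k = U * Matrix.diagonal hA.eigenvalues ^ k * V := by
      induction k with
      | zero => simp [hVU]
      | succ k ih =>
        rw [pow_succ, ih, pow_succ]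
        nth_rewrite 2 [hM]
        calc _ = U * Matrix.diagonal hA.eigenvalues ^ k * (V * U) * Matrix.diagonal hA.eigenvalues * V := by
              simp only [mul_assoc]
          _ = _ := by rw [hUV, mul_one]; simp only [mul_assoc]
    rw [this, Matrix.trace_mul_comm, ← mul_assoc, hUV, one_mul, Matrix.diagonal_pow,
      Matrix.trace_diagonal]
    rfl
  · apply Polynomial.funext
    intro z
    rw [← det_one_sub]
    have : 1 - z • Mmat m = U * Matrix.diagonal (fun i => 1 - hA.eigenvalues i * z) * V := by
      have e : Matrix.diagonal (fun i => 1 - hA.eigenvalues i * z)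
          = 1 - z • Matrix.diagonal hA.eigenvalues := by
        ext i j
        by_cases h : i = j <;> simp [h, Matrix.one_apply, mul_comm]
      rw [e, mul_sub, sub_mul, mul_one, hVU, Matrix.mul_smul, Matrix.smul_mul, ← hM]
    rw [this, Matrix.det_mul_right_comm, hVU, one_mul, Matrix.det_diagonal, Polynomial.eval_prod]
    simp

open PowerSeries in
lemma newton_ser {ι : Type*} (s : Finset ι) (l : ι → ℝ) :
    -(X * d⁄dX ℝ (∏ i ∈ s, (1 - C (l i) * X : ℝ⟦X⟧)))
      = (∏ i ∈ s, (1 - C (l i) * X : ℝ⟦X⟧)) * ∑ i ∈ s, (mk (fun k => l i ^ k) - 1) := by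
  classical
  induction s using Finset.induction_on with
  | empty => simp
  | insert a s ha ih =>
    rw [Finset.prod_insert ha, Finset.sum_insert ha, Derivation.leibniz]
    have h1 : (1 - C (l a) * X : ℝ⟦X⟧) * mk (fun k => l a ^ k) = 1 := by
      ext k
      rw [sub_mul, one_mul, mul_assoc, map_sub, coeff_C_mul]
      rcases k with _ | k
      · simp
      · rw [coeff_succ_X_mul]; simp [coeff_one, pow_succ']
    have h2 : d⁄dX ℝ (1 - C (l a) * X : ℝ⟦X⟧) = - C (l a) := by
      rw [map_sub, Derivation.leibniz]; simp
    rw [h2]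
    simp only [smul_eq_mul]
    generalize (∏ i ∈ s, (1 - C (l i) * X : ℝ⟦X⟧)) = P at *
    generalize (∑ i ∈ s, (mk (fun k => l i ^ k) - 1 : ℝ⟦X⟧)) = S at *
    linear_combination (1 - C (l a) * X) * ih - P * h1

noncomputable def Dp : ℕ → Polynomial ℝ
  | 0 => 1
  | (j+1) => Dp j * ((Polynomial.X + Polynomial.C ((j:ℝ)+1)) * (Polynomial.C (j:ℝ) - Polynomial.X)
      * Polynomial.C (1 / ((2*(j:ℝ)+1)*(2*j+2))))

lemma Dp_eval (m j : ℕ) : (Dp j).eval (m:ℝ) = (-1)^j * ((m+j).choose (2*j) : ℝ) := by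
  induction j with
  | zero => simp [Dp]
  | succ j ih =>
    simp only [Dp, Polynomial.eval_mul, ih]
    simp only [Polynomial.eval_add, Polynomial.eval_sub, Polynomial.eval_X, Polynomial.eval_C]
    have key : ((m+(j+1)).choose (2*(j+1)) : ℝ) * ((2*(j:ℝ)+1)*(2*j+2))
        = (m+j).choose (2*j) * (m+j+1) * (m - j) := by
      have a := Nat.add_one_mul_choose_eq (m+j) (2*j+1)
      have b := Nat.choose_succ_right_eq (m+j) (2*j)
      rw [show m+(j+1) = m+j+1 by ring, show 2*(j+1) = 2*j+1+1 by ring]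
      have a' : ((m:ℝ)+j+1) * (m+j).choose (2*j+1) = (m+j+1).choose (2*j+1+1) * (2*j+1+1) := by
        exact_mod_cast a
      have b' : ((m+j).choose (2*j+1) : ℝ) * (2*j+1) = (m+j).choose (2*j) * (m - j) := by
        by_cases h : j ≤ m
        · rw [show m + j - 2*j = m - j by omega] at b
          rw [← Nat.cast_sub h]; exact_mod_cast b
        · rw [Nat.choose_eq_zero_of_lt (by omega), Nat.choose_eq_zero_of_lt (by omega)]; simp
      linear_combination (-(2*(j:ℝ)+1)) * a' + (m+j+1) * b'
    have h1 : (2*(j:ℝ)+1) ≠ 0 := by positivity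
    have h2 : (2*(j:ℝ)+2) ≠ 0 := by positivity
    rw [pow_succ, eq_div_of_mul_eq (mul_ne_zero h1 h2) key]
    ring

lemma Dp_coeff_zero (j : ℕ) : (Dp (j+1)).coeff 0 = 0 := by
  induction j with
  | zero => simp [Dp]
  | succ j ih => rw [Dp, Polynomial.mul_coeff_zero, ih, zero_mul]

lemma Dp_coeff_one (j : ℕ) : -((j:ℝ)+1) * (Dp (j+1)).coeff 1 = 1 / ((2*(j+1)).choose (j+1) : ℝ) := by
  induction j with
  | zero =>
    simp [Dp, Polynomial.mul_coeff_one, Polynomial.coeff_one, Polynomial.coeff_X]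
  | succ j ih =>
    rw [Dp, Polynomial.mul_coeff_one, Dp_coeff_zero, zero_mul, zero_add]
    simp only [Polynomial.mul_coeff_zero, Polynomial.coeff_add, Polynomial.coeff_sub,
      Polynomial.coeff_C_zero, Polynomial.coeff_X_zero]
    have a := Nat.succ_mul_centralBinom_succ (j+1)
    have c := Nat.centralBinom_pos (j+1)
    have c' := Nat.centralBinom_pos (j+1+1)
    rw [← Nat.centralBinom_eq_two_mul_choose] at *
    have a' : ((j:ℝ)+1+1) * (j+1+1).centralBinom = 2*(2*(j+1)+1) * (j+1).centralBinom := by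
      exact_mod_cast a
    have hc : ((j+1).centralBinom : ℝ) ≠ 0 := by exact_mod_cast c.ne'
    have hc' : ((j+1+1).centralBinom : ℝ) ≠ 0 := by exact_mod_cast c'.ne'
    have hj : ((j:ℝ)+1) ≠ 0 := by positivity
    have ih' : (Dp (j+1)).coeff 1 = -(1 / ((j+1).centralBinom : ℝ)) / (j+1) := by
      rw [← ih]; field_simp
    rw [ih']
    have h1 : (2*((j:ℝ)+1)+1) ≠ 0 := by positivity
    have h2 : (2*((j:ℝ)+1)+2) ≠ 0 := by positivity
    push_cast
    field_simp
    linear_combination ((j:ℝ)+1) * a'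

open PowerSeries in
lemma exists_poly (k : ℕ) : ∃ P : Polynomial ℝ,
    P.coeff 1 = 1 / ((2*(k+1)).choose (k+1) : ℝ) ∧
    ∀ m : ℕ, P.eval (m:ℝ) = (Mmat m ^ (k+1)).trace := by
  let D : (Polynomial ℝ)⟦X⟧ := mk Dp
  let P : (Polynomial ℝ)⟦X⟧ := -(X * d⁄dX _ D) * invOfUnit D 1
  have hDP : D * P = -(X * d⁄dX _ D) := by
    have : D * invOfUnit D 1 = 1 := mul_invOfUnit D 1 (by simp [D, Dp])
    calc D * P = -(X * d⁄dX _ D) * (D * invOfUnit D 1) := by simp only [P]; ring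
      _ = _ := by rw [this, mul_one]
  have hco : ∀ j, coeff j (-(X * d⁄dX _ D)) = - (Dp j * (j : Polynomial ℝ)) := by
    intro j
    rcases j with _ | j
    · simp
    · rw [map_neg, coeff_succ_X_mul, coeff_derivative]; simp [D]
  have h0 : ∀ j, (coeff j P).coeff 0 = 0 := by
    intro j
    have h := congrArg (PowerSeries.map (Polynomial.evalRingHom (0:ℝ))) hDP
    rw [map_mul] at h
    have e1 : PowerSeries.map (Polynomial.evalRingHom (0:ℝ)) D = 1 := by
      ext i
      rcases i with _ | i
      · simp [D, Dp]
      · have := Dp_coeff_zero i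
        rw [Polynomial.coeff_zero_eq_eval_zero] at this
        simp [D, coeff_one, this]
    rw [e1, one_mul] at h
    have h' := congrArg (coeff j) h
    rw [coeff_map, coeff_map, hco] at h'
    rw [Polynomial.coeff_zero_eq_eval_zero]
    simp only [Polynomial.coe_evalRingHom] at h'
    rw [h']
    rcases j with _ | j
    · simp
    · have := Dp_coeff_zero j
      rw [Polynomial.coeff_zero_eq_eval_zero] at this
      simp [this]
  refine ⟨coeff (k+1) P, ?_, ?_⟩
  · have h := congrArg (fun q => (coeff (k+1) q).coeff 1) hDP
    simp only [hco, coeff_mul, Polynomial.finsetSum_coeff] at h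
    rw [Finset.sum_eq_single (0, k+1)] at h
    · rw [← Dp_coeff_one]
      have e : (Dp (k+1) * ((k+1:ℕ) : Polynomial ℝ)).coeff 1 = (Dp (k+1)).coeff 1 * ((k+1 : ℕ):ℝ) := by
        rw [← Polynomial.C_eq_natCast, Polynomial.coeff_mul_C]
      simp only [Polynomial.coeff_neg, e] at h
      rw [show coeff (0, k+1).1 D = 1 by simp [D, Dp], one_mul] at h
      rw [h]; push_cast; ring
    · rintro ⟨i, j⟩ hij hne
      have hij : i + j = k + 1 := by simpa using hij
      have hi : i ≠ 0 := by
        rintro rfl; apply hne; simp at hij; simp [hij]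
      obtain ⟨i, rfl⟩ := Nat.exists_eq_succ_of_ne_zero hi
      rw [Polynomial.mul_coeff_one, h0]
      simp [D, Dp_coeff_zero]
    · simp
  · intro m
    obtain ⟨l, hl, hD⟩ := spec m
    rw [hl]
    have h := congrArg (PowerSeries.map (Polynomial.evalRingHom (m:ℝ))) hDP
    rw [map_mul] at h
    have hD' : PowerSeries.map (Polynomial.evalRingHom (m:ℝ)) D = ∏ i, (1 - C (l i) * X : ℝ⟦X⟧) := by
      have : (∏ i, (1 - C (l i) * X : ℝ⟦X⟧)) = ((Dz m : Polynomial ℝ) : ℝ⟦X⟧) := by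
        rw [hD, ← Polynomial.coeToPowerSeries.ringHom_apply, map_prod]
        simp
      rw [this]
      ext j
      simp [D, Dp_eval, Dz_coeff]
    have hX : PowerSeries.map (Polynomial.evalRingHom (m:ℝ)) (-(X * d⁄dX _ D)) =
        -(X * d⁄dX ℝ (∏ i, (1 - C (l i) * X : ℝ⟦X⟧))) := by
      rw [← hD']
      ext j
      rw [coeff_map, hco]
      rcases j with _ | j
      · simp
      · rw [map_neg, map_neg, coeff_succ_X_mul, coeff_derivative]; simp [D]
    rw [hX, newton_ser, hD'] at h
    have hne : (∏ i, (1 - C (l i) * X : ℝ⟦X⟧)) ≠ 0 := by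
      intro hz
      have := congrArg constantCoeff hz
      simp [map_prod] at this
    have h2 := congrArg (coeff (k+1)) (mul_left_cancel₀ hne h)
    rw [coeff_map, map_sum] at h2
    simpa [coeff_one] using h2

lemma path_sum {ι : Type*} [Fintype ι] [DecidableEq ι] (M : Matrix ι ι ℝ) (k : ℕ) (F : ι → ι → ℝ) :
    ∑ x : Fin (k+1) → ι, F (x 0) (x (Fin.last k)) * ∏ i : Fin k, M (x i.castSucc) (x i.succ)
      = ∑ a, ∑ b, F a b * (M ^ k) a b := by
  induction k generalizing F with
  | zero =>
    rw [← (Equiv.funUnique (Fin 1) ι).symm.sum_comp]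
    simp [Matrix.one_apply, Equiv.funUnique]
  | succ k ih =>
    rw [← (Fin.consEquiv (fun _ : Fin (k+1+1) => ι)).sum_comp, Fintype.sum_prod_type]
    have h : ∀ a : ι, ∀ x : Fin (k+1) → ι,
        F (Fin.consEquiv (fun _ : Fin (k+1+1) => ι) (a, x) 0)
          (Fin.consEquiv (fun _ : Fin (k+1+1) => ι) (a, x) (Fin.last (k+1))) *
        ∏ i : Fin (k+1), M (Fin.consEquiv (fun _ : Fin (k+1+1) => ι) (a, x) i.castSucc)
          (Fin.consEquiv (fun _ : Fin (k+1+1) => ι) (a, x) i.succ)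
        = (fun c b => F a b * M a c) (x 0) (x (Fin.last k)) *
          ∏ i : Fin k, M (x i.castSucc) (x i.succ) := by
      intro a x
      rw [Fin.prod_univ_succ]
      simp only [Fin.consEquiv, Equiv.coe_fn_mk, ← Fin.succ_last, Fin.cons_succ, Fin.cons_zero,
        Fin.castSucc_zero, ← Fin.succ_castSucc]
      ring
    apply Finset.sum_congr rfl
    intro a _
    rw [Finset.sum_congr rfl (fun x _ => h a x), ih (fun c b => F a b * M a c), Finset.sum_comm]
    apply Finset.sum_congr rfl
    intro b _
    rw [pow_succ', Matrix.mul_apply, Finset.mul_sum]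
    apply Finset.sum_congr rfl
    intro c _
    ring

def prevF {k : ℕ} (i : Fin (k+1)) : Fin (k+1) := Fin.cases (Fin.last k) Fin.castSucc i

lemma cyc_sum (m k : ℕ) :
    ((∑ x : Fin (k+1) → Fin m, ∏ i, (min (x i : ℕ) (x (prevF i)) + 1) : ℕ) : ℝ)
      = (Mmat m ^ (k+1)).trace := by
  have h := path_sum (Mmat m) k (fun a b => Mmat m b a)
  rw [Matrix.trace, pow_succ]
  simp only [Matrix.diag_apply, Matrix.mul_apply]
  rw [Nat.cast_sum]
  simp only [mul_comm (Mmat m _ _) ((Mmat m ^ k) _ _)] at h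
  rw [← h]
  apply Finset.sum_congr rfl
  intro x _
  rw [Nat.cast_prod, Fin.prod_univ_succ]
  simp only [prevF, Fin.cases_zero, Fin.cases_succ, Mmat]
  simp only [min_comm]

def encF (m k : ℕ) (q : (Fin (k+1) → Fin m) × (Fin (k+1) → Fin m)) (t : ℕ) : ℕ :=
  if h : 1 ≤ t ∧ t ≤ 2*(k+1) then
    (if t % 2 = 1 then (q.2 ⟨(t-1)/2, by omega⟩ : ℕ) + 1 else (q.1 ⟨(t-1)/2, by omega⟩ : ℕ) + 1)
  else 0

lemma encF_odd (m k : ℕ) (q) (i : Fin (k+1)) : encF m k q (2*i+1) = q.2 i + 1 := by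
  have hi := i.2
  rw [encF, dif_pos (by omega), if_pos (by omega)]
  congr 3
  ext; simp

lemma encF_even (m k : ℕ) (q) (i : Fin (k+1)) : encF m k q (2*i+2) = q.1 i + 1 := by
  have hi := i.2
  rw [encF, dif_pos (by omega), if_neg (by omega)]
  have : (⟨(2*(i:ℕ)+2-1)/2, by omega⟩ : Fin (k+1)) = i := by ext; simp; omega
  rw [this]

lemma omegaCrown_eq_s9 (m k : ℕ) : omegaCrown (k+1) m =
    ∑ x : Fin (k+1) → Fin m, ∏ i, (min (x i : ℕ) (x (prevF i)) + 1) := by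
  classical
  let T : Finset ((Fin (k+1) → Fin m) × (Fin (k+1) → Fin m)) :=
    Finset.univ.filter (fun q => ∀ i, q.2 i ≤ q.1 i ∧ q.2 i ≤ q.1 (prevF i))
  have hT : T.card = ∑ x : Fin (k+1) → Fin m, ∏ i, (min (x i : ℕ) (x (prevF i)) + 1) := by
    rw [Finset.card_filter, Fintype.sum_prod_type]
    apply Finset.sum_congr rfl
    intro x _
    rw [← Finset.card_filter]
    have : (Finset.univ.filter (fun y : Fin (k+1) → Fin m => ∀ i, y i ≤ x i ∧ y i ≤ x (prevF i)))
        = Fintype.piFinset (fun i => Finset.Iic (min (x i) (x (prevF i)))) := by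
      ext y; simp
    rw [this, Fintype.card_piFinset]
    apply Finset.prod_congr rfl
    intro i _
    rw [Fin.card_Iic]
    simp
  rw [← hT, omegaCrown, omegaOn, ← Set.ncard_coe_finset T]
  symm
  have hinj : Function.Injective (encF m k) := by
    intro q r h
    have h1 : ∀ i, q.1 i = r.1 i := by
      intro i
      have := congrFun h (2*i+2)
      rw [encF_even, encF_even] at this
      ext; omega
    have h2 : ∀ i, q.2 i = r.2 i := by
      intro i
      have := congrFun h (2*i+1)
      rw [encF_odd, encF_odd] at this
      ext; omega
    exact Prod.ext (funext h1) (funext h2)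
  rw [← Set.ncard_image_of_injective _ hinj]
  congr 1
  have cases_t : ∀ t, t ∈ crownGround (k+1) →
      ∃ i : Fin (k+1), t = 2*i+1 ∨ t = 2*i+2 := by
    intro t ht
    rw [crownGround, Finset.mem_Icc] at ht
    exact ⟨⟨(t-1)/2, by omega⟩, by simp only; omega⟩
  have hprev0 : prevF (0 : Fin (k+1)) = Fin.last k := rfl
  have hprevs : ∀ j : Fin k, prevF (j.succ) = j.castSucc := fun j => rfl
  ext f
  simp only [Set.mem_image, Finset.mem_coe, Set.mem_ofPred_eq]
  constructor
  · rintro ⟨q, hq, rfl⟩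
    have hq : ∀ i, q.2 i ≤ q.1 i ∧ q.2 i ≤ q.1 (prevF i) := by simpa [T] using hq
    refine ⟨?_, ?_, ?_⟩
    · intro t ht
      rw [crownGround, Finset.mem_Icc] at ht
      rw [encF, dif_neg ht]
    · intro t ht
      obtain ⟨i, rfl | rfl⟩ := cases_t t ht
      · rw [encF_odd, Finset.mem_Icc]; omega
      · rw [encF_even, Finset.mem_Icc]; omega
    · intro x hx y hy hxy
      rcases hxy with rfl | ⟨hox, hey, hc⟩
      · exact le_rfl
      · obtain ⟨i, rfl | rfl⟩ := cases_t x hx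
        swap
        · rcases hox with ⟨a, ha⟩; omega
        obtain ⟨j, rfl | rfl⟩ := cases_t y hy
        · rcases hey with ⟨a, ha⟩; omega
        rw [encF_odd, encF_even]
        have := hq i
        have hij : q.2 i ≤ q.1 j := by
          rcases hc with h | h | ⟨h, h'⟩
          · have : j = i := by ext; omega
            rw [this]; exact (hq i).1
          · have : j = prevF i := by
              obtain ⟨i', rfl⟩ : ∃ i' : Fin k, i = i'.succ :=
                Fin.exists_succ_eq.mpr (by rintro rfl; simp at h) |>.imp (fun _ h => h.symm)
              rw [hprevs]; ext; simp at h ⊢; omega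
            rw [this]; exact (hq i).2
          · have hi : i = 0 := by
              apply Fin.ext; show (i:ℕ) = 0; omega
            have : j = prevF i := by
              rw [hi, hprev0]; ext; rw [Fin.val_last]; omega
            rw [this]; exact (hq i).2
        have : (q.2 i : ℕ) ≤ q.1 j := hij
        omega
  · rintro ⟨hz, hr, hle⟩
    have mo : ∀ i : Fin (k+1), 2*(i:ℕ)+1 ∈ crownGround (k+1) := by
      intro i; rw [crownGround, Finset.mem_Icc]; omega
    have me : ∀ i : Fin (k+1), 2*(i:ℕ)+2 ∈ crownGround (k+1) := by
      intro i; rw [crownGround, Finset.mem_Icc]; omega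
    have ro := fun i => Finset.mem_Icc.mp (hr _ (mo i))
    have re := fun i => Finset.mem_Icc.mp (hr _ (me i))
    refine ⟨(fun i => ⟨f (2*i+2) - 1, by have := re i; omega⟩,
      fun i => ⟨f (2*i+1) - 1, by have := ro i; omega⟩), ?_, ?_⟩
    · simp only [T, Finset.mem_filter, Finset.mem_univ, true_and, Fin.mk_le_mk]
      intro i
      refine ⟨Nat.sub_le_sub_right (hle _ (mo i) _ (me i) (Or.inr ⟨⟨i, rfl⟩, ⟨i+1, by ring⟩, Or.inl rfl⟩)) 1,
        Nat.sub_le_sub_right (hle _ (mo i) _ (me _) (Or.inr ⟨⟨i, rfl⟩, ⟨prevF i+1, by ring⟩, Or.inr ?_⟩)) 1⟩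
      induction i using Fin.cases with
      | zero => right; rw [hprev0]; simp; ring
      | succ j => left; rw [hprevs]; simp; ring
    · funext t
      by_cases ht : t ∈ crownGround (k+1)
      · obtain ⟨i, rfl | rfl⟩ := cases_t t ht
        · rw [encF_odd]; have := ro i; simp only; omega
        · rw [encF_even]; have := re i; simp only; omega
      · rw [hz t ht]
        rw [crownGround, Finset.mem_Icc] at ht
        rw [encF, dif_neg ht]

/-- Corollary 4.6: the linear coefficient of the order polynomial of the crown
poset `C_{2n}` is `1 / C(2n, n)`. -/
theorem crown_order_polynomial_linear_coeff (n : ℕ) (hn : 1 ≤ n)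
    (p : Polynomial ℚ) (hdeg : p.degree ≤ (2 * n : ℕ))
    (heval : ∀ m : ℕ, 1 ≤ m → p.eval (m : ℚ) = omegaCrown n m) :
    p.coeff 1 = 1 / ((2 * n).choose n : ℚ) := by
  obtain ⟨k, rfl⟩ : ∃ k, n = k + 1 := ⟨n - 1, by omega⟩
  obtain ⟨P, hP1, hP⟩ := exists_poly k
  have hEq : p.map (algebraMap ℚ ℝ) = P := by
    apply Polynomial.eq_of_infinite_eval_eq
    apply Set.Infinite.mono (s := Set.range (fun m : ℕ => ((m + 1 : ℕ) : ℝ)))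
    · rintro _ ⟨m, rfl⟩
      have h := heval (m+1) (by omega)
      simp only [Set.mem_ofPred_eq]
      rw [hP, ← cyc_sum, ← omegaCrown_eq_s9, Polynomial.eval_natCast_map, h]
      simp
    · apply Set.infinite_range_of_injective
      intro a b hab
      simpa using hab
  rw [← hEq, Polynomial.coeff_map] at hP1
  have : ((p.coeff 1 : ℚ) : ℝ) = ((1 / ((2 * (k+1)).choose (k+1) : ℚ) : ℚ) : ℝ) := by
    push_cast; exact hP1
  exact_mod_cast this
end

section
/- Let n ≥ 1 and let p ∈ ℚ[t] be the unique polynomial of degree at most 2n such that p(m) equals the number of order-preserving maps from the crown poset C_{2n} to the chain {1,…,m} for every integer m ≥ 1 (the order polynomial of C_{2n}). Then every coefficient of p is nonnegative. -/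
namespace Crown
open PowerSeries Finset

noncomputable section

/-! ### Formal trigonometry -/

def wc : ℕ → ℚ
  | 0 => 1
  | 1 => 0
  | (k+2) => ((k:ℚ)+1)/((k:ℚ)+2) * wc k

lemma wc_nonneg : ∀ k, 0 ≤ wc k
  | 0 => by simp [wc]
  | 1 => by simp [wc]
  | (k+2) => by
    have := wc_nonneg k
    rw [wc]; positivity

abbrev A := PowerSeries ℚ

def w : A := PowerSeries.mk wc
def s : A := PowerSeries.X
def c : A := (1 - s^2) * w

lemma w_ode : (1 - s^2) * d⁄dX ℚ w = s * w := by
  ext k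
  rw [sub_mul, one_mul]
  rcases k with _ | _ | k
  · have h := PowerSeries.coeff_derivative w 0
    simp only [s, pow_two, mul_assoc, map_sub, PowerSeries.coeff_zero_X_mul, h]
    simp [w, wc]
  · simp [s, w, PowerSeries.coeff_derivative, pow_two, mul_assoc, PowerSeries.coeff_succ_X_mul, wc]
    norm_num
  · simp only [s, w, PowerSeries.coeff_derivative, pow_two, mul_assoc, PowerSeries.coeff_succ_X_mul, wc, map_sub, PowerSeries.coeff_mk]
    push_cast
    field_simp
    ring

lemma w_sq : (1 - s^2) * w^2 = 1 := by
  apply PowerSeries.derivative.ext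
  · have h : d⁄dX ℚ ((1 - s^2) * w^2) = (-2) * s * w^2 + (1-s^2) * (2 * w * d⁄dX ℚ w) := by
      have : d⁄dX ℚ s = 1 := PowerSeries.derivative_X
      simp only [Derivation.leibniz, Derivation.leibniz_pow, map_sub, this, smul_eq_mul, Derivation.map_one_eq_zero, nsmul_eq_mul]
      push_cast
      ring
    rw [h, Derivation.map_one_eq_zero]
    linear_combination 2 * w * w_ode
  · simp [s, w, wc, ← PowerSeries.coeff_zero_eq_constantCoeff_apply, -PowerSeries.coeff_zero_eq_constantCoeff]
    simp [wc]

lemma cw : c * w = 1 := by rw [← w_sq, c]; ring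
lemma c_sq : c^2 = 1 - s^2 := by
  rw [c]; linear_combination (1 - s^2) * w_sq
lemma ds : d⁄dX ℚ s = 1 := PowerSeries.derivative_X
lemma dc : d⁄dX ℚ c = - (s * w) := by
  have : d⁄dX ℚ c = (-2) * s * w + (1-s^2) * d⁄dX ℚ w := by
    rw [c]
    simp only [Derivation.leibniz, Derivation.leibniz_pow, map_sub, ds, smul_eq_mul, Derivation.map_one_eq_zero, nsmul_eq_mul]
    push_cast
    ring
  rw [this, w_ode]; ring

def CS : ℕ → A × A
  | 0 => (1, 0)
  | (k+1) => ((CS k).1 * c - (CS k).2 * s, (CS k).2 * c + (CS k).1 * s)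
def Co (k : ℕ) : A := (CS k).1
def Si (k : ℕ) : A := (CS k).2
lemma Co0 : Co 0 = 1 := rfl
lemma Si0 : Si 0 = 0 := rfl
lemma Co_succ (k) : Co (k+1) = Co k * c - Si k * s := rfl
lemma Si_succ (k) : Si (k+1) = Si k * c + Co k * s := rfl
lemma Co1 : Co 1 = c := by simp [Co_succ, Co0, Si0]
lemma Si1 : Si 1 = s := by simp [Si_succ, Co0, Si0]

lemma add_formula (a b : ℕ) : Co (a+b) = Co a * Co b - Si a * Si b ∧
    Si (a+b) = Si a * Co b + Co a * Si b := by
  induction b with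
  | zero => simp [Co0, Si0]
  | succ b ih =>
    rw [← add_assoc, Co_succ (a+b), Si_succ (a+b), ih.1, ih.2, Co_succ b, Si_succ b]
    constructor <;> ring

lemma pyth (k : ℕ) : Co k ^2 + Si k^2 = 1 := by
  induction k with
  | zero => simp [Co0, Si0]
  | succ k ih =>
    rw [Co_succ, Si_succ]
    linear_combination (c^2+s^2) * ih + c_sq

lemma dCS (k : ℕ) : d⁄dX ℚ (Co k) = - (k * Si k * w) ∧ d⁄dX ℚ (Si k) = k * Co k * w := by
  induction k with
  | zero => simp [Co0, Si0]
  | succ k ih =>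
    rw [Co_succ, Si_succ]
    simp only [Derivation.leibniz, map_sub, map_add, ds, dc, smul_eq_mul, ih.1, ih.2]
    push_cast
    constructor
    · linear_combination (Si k) * cw
    · linear_combination (-Co k) * cw

lemma constCo (k : ℕ) : constantCoeff (Co k) = 1 := by
  induction k with
  | zero => simp [Co0]
  | succ k ih =>
    have h1 : constantCoeff s = 0 := by simp [s]
    have h2 : constantCoeff c = 1 := by
      have h3 : constantCoeff w = 1 := by
        rw [← PowerSeries.coeff_zero_eq_constantCoeff_apply]; simp [w, wc]
      simp [c, h1, h3]
    simp [Co_succ, ih, h1, h2]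

/-- inverse of `Co k`. -/
def ka (k : ℕ) : A := (Co k)⁻¹
lemma Co_ka (k : ℕ) : Co k * ka k = 1 := PowerSeries.mul_inv_cancel _ (by simp [constCo])

/-- `tan (k θ)`. -/
def u (k : ℕ) : A := Si k * ka k

lemma u_ode (k : ℕ) : d⁄dX ℚ (u k) = (k:A) * (w + u k * u k * w) := by
  have h := congrArg (d⁄dX ℚ) (show u k * Co k = Si k by
    rw [u]; linear_combination Si k * Co_ka k)
  rw [Derivation.leibniz, (dCS k).1, (dCS k).2, smul_eq_mul, smul_eq_mul] at h
  have h1 : u k = Si k * ka k := rfl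
  linear_combination ka k * h + (-d⁄dX ℚ (u k) + (k:A) * w) * Co_ka k + (-(k:A) * w * u k) * h1

lemma u0 (k : ℕ) : coeff 0 (u k) = 0 := by
  have : constantCoeff (Si k) = 0 := by
    induction k with
    | zero => simp [Si0]
    | succ k ih => simp [Si_succ, ih, s]
  simp [u, this]

def v : A := s * w
lemma u1 : u 1 = v := by
  rw [u, Si1, v]
  have h := Co_ka 1
  rw [Co1] at h
  linear_combination s * w * h - s * ka 1 * cw

/-! ### nonnegative polynomials -/

def NP (f : ℕ → ℚ) : Prop := ∃ P : Polynomial ℚ, (∀ k, 0 ≤ P.coeff k) ∧ ∀ m : ℕ, f m = P.eval (m:ℚ)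

lemma NP.add {f g} (hf : NP f) (hg : NP g) : NP (fun m => f m + g m) := by
  obtain ⟨P, hP, h⟩ := hf
  obtain ⟨Q, hQ, h'⟩ := hg
  exact ⟨P+Q, fun k => by simpa using add_nonneg (hP k) (hQ k), fun m => by simp [h, h']⟩

lemma NP.mul {f g} (hf : NP f) (hg : NP g) : NP (fun m => f m * g m) := by
  obtain ⟨P, hP, h⟩ := hf
  obtain ⟨Q, hQ, h'⟩ := hg
  refine ⟨P*Q, fun k => ?_, fun m => by simp [h, h']⟩
  rw [Polynomial.coeff_mul]
  exact Finset.sum_nonneg fun x _ => mul_nonneg (hP _) (hQ _)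

lemma NP.const {a : ℚ} (ha : 0 ≤ a) : NP (fun _ => a) := by
  refine ⟨Polynomial.C a, fun k => ?_, fun m => by simp⟩
  rw [Polynomial.coeff_C]; split_ifs <;> simp [ha]

lemma NP.lin : NP (fun m => ((2*m+1 : ℕ) : ℚ)) := by
  refine ⟨Polynomial.C 2 * Polynomial.X + Polynomial.C 1, fun k => ?_, fun m => by simp⟩
  rw [Polynomial.coeff_add, Polynomial.coeff_C_mul, Polynomial.coeff_X, Polynomial.coeff_C]
  split_ifs <;> norm_num

lemma NP.sum {ι : Type*} (S : Finset ι) (f : ι → ℕ → ℚ) (h : ∀ i ∈ S, NP (f i)) :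
    NP (fun m => ∑ i ∈ S, f i m) := by
  classical
  induction S using Finset.induction_on with
  | empty => simpa using NP.const le_rfl
  | insert a S ha ih =>
    simp only [Finset.sum_insert ha]
    exact (h a (by simp)).add (ih fun i hi => h i (by simp [hi]))

lemma u_NP (k : ℕ) : NP (fun m => coeff k (u (2*m+1))) := by
  induction k using Nat.strong_induction_on with
  | _ k ih =>
    rcases k with _ | k
    · simpa only [u0] using NP.const le_rfl
    have key : ∀ m : ℕ, coeff (k+1) (u (2*m+1)) = (1/((k:ℚ)+1)) * (((2*m+1:ℕ):ℚ) *
        (wc k + ∑ x ∈ antidiagonal k, (∑ y ∈ antidiagonal x.1,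
          coeff y.1 (u (2*m+1)) * coeff y.2 (u (2*m+1))) * wc x.2)) := by
      intro m
      have h := congrArg (coeff k) (u_ode (2*m+1))
      rw [PowerSeries.coeff_derivative, ← nsmul_eq_mul, map_nsmul, map_add, PowerSeries.coeff_mul, nsmul_eq_mul] at h
      simp only [PowerSeries.coeff_mul, w, PowerSeries.coeff_mk] at h
      rw [← h]; field_simp
    simp only [key]
    refine (NP.const (by positivity)).mul (NP.lin.mul ((NP.const (wc_nonneg k)).add ?_))
    refine NP.sum _ _ fun x hx => (NP.sum _ _ fun y hy => ?_).mul (NP.const (wc_nonneg _))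
    have h1 := (mem_antidiagonal.1 hx)
    have h2 := (mem_antidiagonal.1 hy)
    exact (ih _ (by omega)).mul (ih _ (by omega))

lemma v_coeff_nonneg (k : ℕ) : 0 ≤ coeff k v := by
  rcases k with _ | k
  · simp [v, s]
  · rw [v, s, PowerSeries.coeff_succ_X_mul, w, PowerSeries.coeff_mk]; exact wc_nonneg _

lemma main_NP (k : ℕ) : NP (fun m => coeff k (v * (((2*m+1:ℕ):A) * u (2*m+1)))) := by
  have : ∀ m : ℕ, coeff k (v * (((2*m+1:ℕ):A) * u (2*m+1))) = ∑ x ∈ antidiagonal k, coeff x.1 v * (((2*m+1:ℕ):ℚ) * coeff x.2 (u (2*m+1))) := by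
    intro m
    rw [PowerSeries.coeff_mul]
    simp only [← nsmul_eq_mul, map_nsmul]
  simp only [this]
  exact NP.sum _ _ fun x _ => (NP.const (v_coeff_nonneg _)).mul (NP.lin.mul (u_NP _))

/-- final step: from the generating function identity to the coefficients. -/
lemma finish (n : ℕ) (Om : ℕ → ℕ) 
    (h : ∀ m, 1 ≤ m → 2 * 4^n * (Om m : ℚ) = coeff (2*n) (v * (((2*m+1:ℕ):A) * u (2*m+1) - v)))
    (p : Polynomial ℚ) (hp : ∀ m : ℕ, 1 ≤ m → p.eval (m : ℚ) = Om m) : ∀ k, 0 ≤ p.coeff k := by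
  obtain ⟨P, hP, hPe⟩ := main_NP (2*n)
  have e : Polynomial.C (2*4^n) * p = P - Polynomial.C (P.coeff 0) := by
    have h0 : P.coeff 0 = coeff (2*n) (v*v) := by
      have := hPe 0
      rw [Polynomial.coeff_zero_eq_eval_zero]
      simpa [u1] using this.symm
    apply Polynomial.eq_of_infinite_eval_eq
    refine Set.Infinite.mono (s := (fun m : ℕ => (m:ℚ)) '' Set.Ici 1) ?_ ((Set.Ici_infinite 1).image Nat.cast_injective.injOn)
    rintro _ ⟨m, hm, rfl⟩
    simp only [Set.mem_ofPred_eq, Polynomial.eval_mul, Polynomial.eval_C, Polynomial.eval_sub]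
    rw [hp m hm, h m hm, ← hPe, h0, mul_sub, map_sub]
  intro k
  have h2 := congrArg (fun q => Polynomial.coeff q k) e
  simp only [Polynomial.coeff_C_mul, Polynomial.coeff_sub, Polynomial.coeff_C] at h2
  have h3 : 0 ≤ (2 * 4^n : ℚ) * p.coeff k := by
    rw [h2]; split_ifs with hk
    · simp [hk]
    · simpa using hP k
  exact nonneg_of_mul_nonneg_right h3 (by positivity)

/-! ### resolvent -/

lemma abel (e : ℕ → A) (i r : ℕ) : ∑ k ∈ range (i+1+r), ((min i k + 1 : ℕ) : A) * (e k - e (k+1))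
    = ∑ l ∈ range (i+1), e l - ((i+1:ℕ):A) * e (i+1+r) := by
  induction r with
  | zero =>
    have : ∀ j, j ≤ i + 1 → ∑ k ∈ range j, ((min i k + 1 : ℕ) : A) * (e k - e (k+1))
      = ∑ l ∈ range j, e l - ((j:ℕ):A) * e j := by
      intro j
      induction j with
      | zero => simp
      | succ j ih =>
        intro hj
        rw [sum_range_succ, sum_range_succ, ih (by omega), min_eq_right (by omega)]
        push_cast; ring
    exact this (i+1) le_rfl
  | succ r ih =>
    rw [← add_assoc, sum_range_succ, ih, min_eq_left (by omega)]
    push_cast; ring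

lemma sC (k : ℕ) : 2 * s * Co (2*k+1) = Si (2*k+2) - Si (2*k) := by
  rw [Si_succ (2*k+1), Si_succ (2*k), Co_succ]
  linear_combination -Si (2*k) * c_sq
lemma sS (k : ℕ) : 2 * s * Si (2*k+2) = Co (2*k+1) - Co (2*k+3) := by
  rw [Co_succ (2*k+2), Si_succ (2*k+1), Co_succ (2*k+1)]
  linear_combination Co (2*k+1) * c_sq

lemma mid (j r : ℕ) : c * Co (2*(j+1+r)+1) + 2 * s * Si (2*j+2) * Co (2*r+1) =
    Co (2*j+1) * Co (2*r+1) - Si (2*j+2) * Si (2*r) := by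
  rw [show 2*(j+1+r)+1 = (2*j+2) + (2*r+1) by ring, (add_formula _ _).1]
  rw [Co_succ (2*j+1), Si_succ (2*j+1), Co_succ (2*r), Si_succ (2*r)]
  grind [c_sq]

def ee (m j l : ℕ) : A := 
  if l ≤ j then 4 * v * s * ka (2*m+1) * Co (2*l+1) * Co (2*(m-1-j)+1)
  else 4 * v * s * ka (2*m+1) * Si (2*j+2) * Si (2*(m-l))

def bb (m i j : ℕ) : A :=
  if i ≤ j then 2 * v * ka (2*m+1) * Si (2*i+2) * Co (2*(m-1-j)+1)
  else 2 * v * ka (2*m+1) * Si (2*j+2) * Co (2*(m-1-i)+1)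

lemma bb_sum (m i j : ℕ) (hi : i < m) : ∑ l ∈ range (i+1), ee m j l = bb m i j := by
  induction i with
  | zero =>
    have := sC 0
    rw [zero_add, range_one, sum_singleton, ee, bb, if_pos (by omega), if_pos (by omega)]
    rw [mul_zero, Si0] at this
    rw [mul_zero]
    linear_combination 2 * v * ka (2*m+1) * Co (2*(m-1-j)+1) * this
  | succ i ih =>
    rw [sum_range_succ, ih (by omega)]
    rcases lt_trichotomy i j with h | h | h
    · rw [ee, bb, bb, if_pos h.le, if_pos (by omega), if_pos (by omega)]
      have := sC (i+1)
      rw [show 2 * (i+1) = 2 * i + 2 by ring] at *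
      linear_combination 2 * v * ka (2*m+1) * Co (2*(m-1-j)+1) * this
    · subst h
      obtain ⟨r, rfl⟩ := Nat.exists_eq_add_of_lt hi
      rw [ee, bb, bb, if_pos le_rfl, if_neg (by omega), if_neg (by omega)]
      rw [show i+1+r+1 - (i+1) = r+1 by omega, show i+1+r+1-1-(i+1) = r by omega, show i+1+r+1-1-i = r+1 by omega]
      have := sS r
      rw [show 2 * (r+1) + 1 = 2 * r + 3 by ring, show 2 * (r+1) = 2 * r + 2 by ring]
      linear_combination 2 * v * ka (2*(i+1+r+1)+1) * Si (2*i+2) * this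
    · obtain ⟨r, rfl⟩ := Nat.exists_eq_add_of_lt hi
      rw [ee, bb, bb, if_neg (by omega), if_neg (by omega), if_neg (by omega)]
      rw [show i+1+r+1 - (i+1) = r+1 by omega, show i+1+r+1-1-(i+1) = r by omega, show i+1+r+1-1-i = r+1 by omega]
      have := sS r
      rw [show 2 * (r+1) + 1 = 2 * r + 3 by ring, show 2 * (r+1) = 2 * r + 2 by ring]
      linear_combination 2 * v * ka (2*(i+1+r+1)+1) * Si (2*j+2) * this

lemma ee_diff (m k j : ℕ) (hk : k < m) (hj : j < m) :
    4 * s^2 * ((if k = j then 1 else 0) + bb m k j) = ee m j k - ee m j (k+1) := by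
  rcases lt_trichotomy k j with h | h | h
  · rw [ee, ee, bb, if_pos h.le, if_neg (by omega), if_pos (by omega), if_pos (by omega)]
    have := sS k
    rw [show 2 * (k+1) + 1 = 2 * k + 3 by ring]
    linear_combination 4 * v * s * ka (2*m+1) * Co (2*(m-1-j)+1) * this
  · subst h
    obtain ⟨r, rfl⟩ := Nat.exists_eq_add_of_lt hk
    rw [ee, ee, bb, if_pos le_rfl, if_pos rfl, if_pos (by omega), if_neg (by omega)]
    rw [show k+r+1-1-k = r by omega, show k+r+1-(k+1) = r by omega]
    have := mid k r
    rw [show k+1+r = k+r+1 by ring] at this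
    have h2 := Co_ka (2*(k+r+1)+1)
    have h3 : v * c = s := by rw [v]; linear_combination s * cw
    linear_combination 4 * v * s * ka (2*(k+r+1)+1) * this - 4*s^2*h2 - 4 * s * Co (2*(k+r+1)+1) * ka (2*(k+r+1)+1) * h3
  · obtain ⟨r, rfl⟩ := Nat.exists_eq_add_of_lt hk
    rw [ee, ee, bb, if_neg (by omega), if_neg (by omega), if_neg (by omega), if_neg (by omega)]
    rw [show k+r+1-1-k = r by omega, show k+r+1-(k+1) = r by omega, show k+r+1-k = r+1 by omega]
    have := sC r
    rw [show 2 * (r+1) = 2 * r + 2 by ring]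
    linear_combination 4 * v * s * ka (2*(k+r+1)+1) * Si (2*j+2) * this

lemma resolvent (m i j : ℕ) (hi : i < m) (hj : j < m) :
    bb m i j = ∑ k ∈ range m, ((min i k + 1 : ℕ) : A) * (4 * s^2 * ((if k = j then 1 else 0) + bb m k j)) := by
  rw [sum_congr rfl fun k hk => by rw [ee_diff m k j (by simpa using hk) hj]]
  obtain ⟨r, hr⟩ : ∃ r, m = i+1+r := ⟨m-(i+1), by omega⟩
  have h := abel (ee m j) i r
  rw [← hr, bb_sum m i j hi] at h
  rw [h, ee, if_neg (by omega)]
  simp [Si0]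

def QQ (m : ℕ) : A := ∑ j ∈ range m, Si (2*j+2) * Co (2*(m-1-j)+1)
def PP (m : ℕ) : A := ∑ j ∈ range m, Si (2*j+2) * Si (2*(m-1-j)+1)

lemma QP_succ (m : ℕ) : QQ (m+1) = Co 2 * QQ m - Si 2 * PP m + Si (2*m+2) * c ∧
    PP (m+1) = Co 2 * PP m + Si 2 * QQ m + Si (2*m+2) * s := by
  unfold QQ PP
  rw [sum_range_succ, sum_range_succ]
  simp only [mul_sum]
  rw [← sum_sub_distrib, ← sum_add_distrib]
  simp only [Nat.add_sub_cancel, Nat.sub_self, mul_zero, zero_add, Co1, Si1]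
  constructor
  · congr 1
    refine sum_congr rfl fun j hj => ?_
    simp only [mem_range] at hj
    rw [show 2*(m-j)+1 = (2*(m-1-j)+1)+2 by omega, (add_formula _ 2).1]
    ring
  · congr 1
    refine sum_congr rfl fun j hj => ?_
    simp only [mem_range] at hj
    rw [show 2*(m-j)+1 = (2*(m-1-j)+1)+2 by omega, (add_formula (2*(m-1-j)+1) 2).2]
    ring

lemma QP (m : ℕ) : 4 * c * QQ m = (2*m+1) * c * Si (2*m+1) - s * Co (2*m+1) ∧
    4 * s * PP m = Si (2*m) - 2 * m * s * Co (2*m+1) := by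
  induction m with
  | zero => simp [QQ, PP, Si0, Si1, Co1]; ring
  | succ m ih =>
    obtain ⟨h1, h2⟩ := ih
    obtain ⟨h3, h4⟩ := QP_succ m
    have h5 := c_sq
    have e1 := Co_succ (2*m)
    have e2 := Si_succ (2*m)
    have e3 := Co_succ (2*m+1)
    have e4 := Si_succ (2*m+1)
    have e5 := Co_succ (2*m+2)
    have e6 := Si_succ (2*m+2)
    have f1 : Co 2 = c * c - s * s := by rw [Co_succ, Co1, Si1]
    have f2 : Si 2 = s * c + c * s := by rw [Si_succ, Co1, Si1]
    rw [show 2*(m+1)+1 = 2*m+2+1 by ring, show 2*(m+1) = 2*m+2 by ring]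
    simp only [show 2*m+1+1 = 2*m+2 by ring] at *
    have e7 : Si (2*m) = Si (2*m+1) * c - Co (2*m+1) * s := by
      rw [e1, e2]; linear_combination -Si (2*m) * h5
    rw [h3, h4, f1, f2, e6, e5, e3, e4]
    clear h3 h4 f1 f2 e6 e5 e3 e4 e1 e2
    push_cast
    constructor
    · linear_combination (c^2-s^2) * h1 - 2 * c^2 * h2 - 2 * c^2 * e7
    · linear_combination (c^2-s^2) * h2 + 2 * s^2 * h1 + (c^2-s^2) * e7 + (Si (2*m+1) * c + Co (2*m+1) * s) * h5

lemma trace_bb (m : ℕ) : 2 * ∑ j ∈ range m, bb m j j = v * (((2*m+1:ℕ):A) * u (2*m+1) - v) := by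
  have : ∑ j ∈ range m, bb m j j = 2 * v * ka (2*m+1) * QQ m := by
    rw [QQ, mul_sum]
    refine sum_congr rfl fun j _ => ?_
    rw [bb, if_pos le_rfl]; ring
  rw [this, u]
  have h := (QP m).1
  have h2 := Co_ka (2*m+1)
  have h3 : v = s * w := rfl
  push_cast
  rw [h3]
  linear_combination w * s * w * ka (2*m+1) * h - s^2*w^2 * h2 + (s * w * ka (2*m+1) * (((2*m+1:A)) * Si (2*m+1)) - 4 * s * w * ka (2*m+1) * QQ m) * cw

def MM (R : Type*) [CommRing R] (m : ℕ) : Matrix (Fin m) (Fin m) R := fun i j => ((min i.1 j.1 + 1 : ℕ) : R)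

def BB (m : ℕ) : Matrix (Fin m) (Fin m) A := fun i j => bb m i.1 j.1

lemma res_mat (m : ℕ) : 1 + BB m = 1 + (4 * s^2) • (MM A m * (1 + BB m)) := by
  congr 1
  ext1 i j
  rw [Matrix.smul_apply, Matrix.mul_apply, show BB m i j = bb m i.1 j.1 from rfl, resolvent m i j i.2 j.2, ← Fin.sum_univ_eq_sum_range (fun k => ((min i.1 k + 1 : ℕ) : A) * (4 * s^2 * ((if k = j.1 then 1 else 0) + bb m k j))), smul_eq_mul, mul_sum]
  refine sum_congr rfl fun k _ => ?_
  simp only [MM, BB, Matrix.add_apply, Matrix.one_apply, Fin.ext_iff]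
  ring

lemma res_iter (m K : ℕ) : 1 + BB m = ∑ n ∈ range K, (4*s^2)^n • (MM A m)^n + (4*s^2)^K • ((MM A m)^K * (1 + BB m)) := by
  induction K with
  | zero => simp
  | succ K ih =>
    rw [sum_range_succ]
    conv_lhs => rw [ih]
    conv_lhs => rw [res_mat m]
    rw [mul_add, smul_add, add_assoc, mul_one, pow_succ (MM A m), pow_succ (4*s^2), Matrix.mul_smul, smul_smul, Matrix.mul_assoc]

lemma coeff_x (n K : ℕ) (f : A) : coeff (2*n) ((4*s^2)^K * f) = if K ≤ n then 4^K * coeff (2*(n-K)) f else 0 := by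
  have : (4*s^2)^K * f = PowerSeries.X^(2*K) * (C (4^K) * f) := by
    rw [mul_pow, s, ← pow_mul, map_pow, show (C (4:ℚ) : A) = 4 from map_ofNat _ 4]; ring
  rw [this, PowerSeries.coeff_X_pow_mul']
  by_cases h : K ≤ n
  · rw [if_pos (by omega), if_pos h, PowerSeries.coeff_C_mul, Nat.mul_sub]
  · rw [if_neg (by omega), if_neg h]

lemma gen (n m : ℕ) (hn : 1 ≤ n) (t : ℕ → ℕ) (ht : ∀ n, ((t n : ℕ) : A) = ((MM A m)^n).trace) :
    2 * 4^n * (t n : ℚ) = coeff (2*n) (v * (((2*m+1:ℕ):A) * u (2*m+1) - v)) := by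
  have h := congrArg (fun M => coeff (2*n) (Matrix.trace M)) (res_iter m (n+1))
  simp only [Matrix.trace_add, Matrix.trace_sum, Matrix.trace_smul, ← ht, smul_eq_mul, map_add, map_sum, coeff_x] at h
  rw [sum_range_succ, sum_eq_zero, if_pos le_rfl, if_neg (by omega)] at h
  · have h2 : ∀ a : ℕ, coeff (2*n) (a : A) = 0 := by
      intro a
      rw [← map_natCast (C : ℚ →+* A), PowerSeries.coeff_C, if_neg (by omega)]
    have h1 : Matrix.trace (1 : Matrix (Fin m) (Fin m) A) = (m : A) := by simp
    have h3 : Matrix.trace (BB m) = ∑ j ∈ range m, bb m j j := by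
      rw [← Fin.sum_univ_eq_sum_range (fun j => bb m j j)]; rfl
    rw [h1, h2, h3] at h
    have h4 : coeff (2*(n-n)) ((t n : ℕ):A) = t n := by
      rw [← map_natCast (C : ℚ →+* A), PowerSeries.coeff_C, if_pos (by omega)]
    rw [h4] at h
    rw [← trace_bb, two_mul (∑ j ∈ range m, bb m j j), map_add]
    linarith
  · intro x hx
    simp only [mem_range] at hx
    rw [if_pos hx.le, ← map_natCast (C : ℚ →+* A), PowerSeries.coeff_C, if_neg (by omega), mul_zero]

/-! ### counting -/
open Classical in
def ZF (m : ℕ) : ℕ → ℕ → ℕ → Finset (ℕ → ℕ)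
  | 0, a, b => if a = b then {fun x => if x = 0 then a+1 else 0} else ∅
  | (n+1), a, b => (range m).biUnion fun k => (Icc 1 (min k b + 1)).biUnion fun d =>
      (ZF m n a k).image fun f x => if x = 2*n+1 then d else if x = 2*n+2 then b+1 else f x

lemma mem_ZF (m n a b : ℕ) (ha : a < m) (hb : b < m) (f : ℕ → ℕ) : f ∈ ZF m n a b ↔
    f 0 = a + 1 ∧ f (2*n) = b+1 ∧ (∀ x, 2*n < x → f x = 0) ∧ (∀ x, x ≤ 2*n → 1 ≤ f x ∧ f x ≤ m) ∧
    ∀ i, i < n → f (2*i+1) ≤ f (2*i) ∧ f (2*i+1) ≤ f (2*i+2) := by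
  classical
  induction n generalizing b f with
  | zero =>
    rw [ZF]
    split_ifs with h
    · subst h
      rw [mem_singleton]
      constructor
      · rintro rfl
        refine ⟨by simp, by simp, fun x hx => if_neg (by omega), fun x hx => ?_, fun i hi => by omega⟩
        beta_reduce
        rw [if_pos (by omega)]; omega
      · rintro ⟨h1, h2, h3, h4, h5⟩
        funext x
        split_ifs with hx
        · rw [hx, h1]
        · exact h3 x (by omega)
    · simp only [notMem_empty, false_iff]
      rintro ⟨h1, h2, -⟩
      rw [mul_zero] at h2; omega
  | succ n ih =>
    rw [ZF]
    simp only [mem_biUnion, mem_range, mem_image, mem_Icc]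
    constructor
    · rintro ⟨k, hk, d, hd, g, hg, rfl⟩
      rw [ih k hk] at hg
      obtain ⟨h1, h2, h3, h4, h5⟩ := hg
      refine ⟨?_, ?_, fun x hx => ?_, fun x hx => ?_, fun i hi => ?_⟩ <;> beta_reduce
      · rw [if_neg (by omega), if_neg (by omega), h1]
      · rw [if_neg (by omega), if_pos (by omega)]
      · rw [if_neg (by omega), if_neg (by omega), h3 _ (by omega)]
      · split_ifs
        · omega
        · omega
        · exact h4 x (by omega)
      · rcases Nat.lt_succ_iff_lt_or_eq.1 hi with h | rfl
        · rw [if_neg (by omega), if_neg (by omega), if_neg (by omega), if_neg (by omega), if_neg (by omega), if_neg (by omega)]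
          exact h5 i h
        · rw [if_pos rfl, if_neg (by omega), if_neg (by omega), if_neg (by omega), if_pos rfl, h2]
          omega
    · rintro ⟨h1, h2, h3, h4, h5⟩
      have a1 := h4 (2*n) (by omega)
      have a2 := h4 (2*n+1) (by omega)
      have a3 := h5 n (by omega)
      rw [show 2*(n+1) = 2*n+2 by ring] at *
      refine ⟨f (2*n) - 1, by omega, f (2*n+1), by omega, fun x => if x ≤ 2*n then f x else 0, ?_, ?_⟩
      · rw [ih _ (by omega)]
        refine ⟨?_, ?_, fun x hx => ?_, fun x hx => ?_, fun i hi => ?_⟩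
        · rw [if_pos (by omega), h1]
        · rw [if_pos le_rfl]; omega
        · rw [if_neg (by omega)]
        · rw [if_pos hx]; exact h4 x (by omega)
        · rw [if_pos (by omega), if_pos (by omega), if_pos (by omega)]; exact h5 i (by omega)
      · funext x
        beta_reduce
        split_ifs with c1 c2 c3
        · rw [c1]
        · rw [c2, h2]
        · rfl
        · exact (h3 x (by omega)).symm

lemma card_ZF (R : Type*) [CommRing R] (m n : ℕ) (a b : Fin m) : ((ZF m n a b).card : R) = ((MM R m)^n) a b := by
  classical
  induction n generalizing b with
  | zero =>
    rw [ZF, pow_zero, Matrix.one_apply]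
    simp only [Fin.ext_iff]
    split_ifs <;> simp
  | succ n ih =>
    have main : (ZF m (n+1) a b).card = ∑ k ∈ range m, (ZF m n a k).card * (min k b.1 + 1) := by
      rw [ZF, card_biUnion]
      · refine sum_congr rfl fun k hk => ?_
        rw [mem_range] at hk
        rw [card_biUnion]
        · rw [sum_congr rfl (g := fun _ => (ZF m n a k).card)]
          · simp [mul_comm]
          · intro d _
            apply card_image_of_injOn
            intro f hf g hg hfg
            rw [mem_coe, mem_ZF m n a k a.2 hk] at hf hg
            funext x
            by_cases hx : x ≤ 2*n
            · have := congrFun hfg x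
              simp only at this
              rwa [if_neg (by omega), if_neg (by omega), if_neg (by omega), if_neg (by omega)] at this
            · rw [hf.2.2.1 x (by omega), hg.2.2.1 x (by omega)]
        · intro d _ d' _ hdd
          rw [Function.onFun, disjoint_left]
          intro f hf hf'
          rw [mem_image] at hf hf'
          obtain ⟨g, _, rfl⟩ := hf
          obtain ⟨g', _, h⟩ := hf'
          have := congrFun h (2*n+1)
          simp at this
          exact hdd this.symm
      · intro k hk k' hk' hkk
        rw [mem_coe, mem_range] at hk hk'
        rw [Function.onFun, disjoint_left]
        intro f hf hf'
        simp only [mem_biUnion, mem_image] at hf hf'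
        obtain ⟨d, _, g, hg, rfl⟩ := hf
        obtain ⟨d', _, g', hg', h⟩ := hf'
        have := congrFun h (2*n)
        rw [if_neg (by omega), if_neg (by omega), if_neg (by omega), if_neg (by omega)] at this
        rw [mem_ZF m n a _ a.2 (by assumption)] at hg hg'
        rw [hg.2.1, hg'.2.1] at this
        omega
    rw [main, pow_succ, Matrix.mul_apply, Nat.cast_sum, ← Fin.sum_univ_eq_sum_range (fun k => (((ZF m n a k).card * (min k b.1 + 1) : ℕ) : R))]
    refine sum_congr rfl fun k _ => ?_
    rw [Nat.cast_mul, ih k]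
    rfl

lemma omega_eq (n m : ℕ) (hn : 1 ≤ n) : omegaCrown n m = ∑ a : Fin m, (ZF m n a a).card := by
  classical
  have h1 : ∑ a : Fin m, (ZF m n a a).card = (univ.biUnion fun a : Fin m => ZF m n a a).card := by
    rw [card_biUnion]
    intro a _ b _ hab
    rw [Function.onFun, disjoint_left]
    intro f hf hf'
    rw [mem_ZF _ _ _ _ (Fin.is_lt _) (Fin.is_lt _)] at hf hf'
    exact hab (Fin.ext (by omega))
  rw [h1, omegaCrown, omegaOn, ← Set.ncard_coe_finset]
  refine Set.ncard_congr (fun f _ => fun x => if x = 0 then f (2*n) else f x) ?_ ?_ ?_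
  · rintro f ⟨h1, h2, h3⟩
    simp only [crownGround, mem_Icc, not_and, not_le] at h1 h2 h3
    have b1 := h2 (2*n) (by omega)
    rw [mem_coe, mem_biUnion]
    refine ⟨⟨f (2*n) - 1, by omega⟩, mem_univ _, ?_⟩
    rw [mem_ZF _ _ _ _ (by simp only; omega) (by simp only; omega)]
    simp only
    refine ⟨?_, ?_, fun x hx => ?_, fun x hx => ?_, fun i hi => ⟨?_, ?_⟩⟩
    · rw [if_pos trivial]; omega
    · rw [if_neg (by omega)]; omega
    · rw [if_neg (by omega)]; exact h1 x (by omega)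
    · split_ifs
      · exact b1
      · exact h2 x (by omega)
    · rw [if_neg (by omega)]
      split_ifs with hi0
      · refine h3 _ (by omega) _ (by omega) (Or.inr ⟨⟨i, rfl⟩, ⟨n, by ring⟩, Or.inr (Or.inr ⟨by omega, rfl⟩)⟩)
      · exact h3 _ (by omega) _ (by omega) (Or.inr ⟨⟨i, rfl⟩, ⟨i, by ring⟩, Or.inr (Or.inl rfl)⟩)
    · rw [if_neg (by omega), if_neg (by omega)]
      exact h3 _ (by omega) _ (by omega) (Or.inr ⟨⟨i, rfl⟩, ⟨i+1, by ring⟩, Or.inl rfl⟩)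
  · rintro f g ⟨hf, -⟩ ⟨hg, -⟩ h
    funext x
    by_cases hx : x = 0
    · rw [hf x (by simp [crownGround, hx]), hg x (by simp [crownGround, hx])]
    · have := congrFun h x
      simpa [hx] using this
  · intro g hg
    rw [mem_coe, mem_biUnion] at hg
    obtain ⟨a, -, hg⟩ := hg
    rw [mem_ZF _ _ _ _ a.2 a.2] at hg
    obtain ⟨h1, h2, h3, h4, h5⟩ := hg
    refine ⟨fun x => if x = 0 then 0 else g x, ⟨?_, ?_, ?_⟩, ?_⟩
    · intro x hx
      simp only [crownGround, mem_Icc, not_and, not_le] at hx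
      beta_reduce
      split_ifs
      · rfl
      · exact h3 x (hx (by omega))
    · intro x hx
      simp only [crownGround, mem_Icc] at hx ⊢
      rw [if_neg (by omega)]; exact h4 x hx.2
    · intro x hx y hy hxy
      simp only [crownGround, mem_Icc] at hx hy ⊢
      rw [if_neg (by omega), if_neg (by omega)]
      rcases hxy with rfl | ⟨⟨i, rfl⟩, ⟨j, rfl⟩, h | h | ⟨h, h'⟩⟩
      · exact le_rfl
      · rw [h]; exact (h5 i (by omega)).2
      · have : i = j := by omega
        subst this
        rw [← two_mul]; exact (h5 i (by omega)).1
      · have : i = 0 := by omega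
        subst this
        rw [h', h2, ← h1]; exact (h5 0 (by omega)).1
    · funext x
      simp only
      rw [if_neg (by omega : ¬ 2*n = 0)]
      split_ifs with hx
      · rw [hx, h1, h2]
      · rfl

end
end Crown

/-- Corollary 4.9: all coefficients of the order polynomial of the crown poset
`C_{2n}` are nonnegative. -/
theorem crown_order_polynomial_nonneg_coeffs (n : ℕ) (hn : 1 ≤ n)
    (p : Polynomial ℚ) (hdeg : p.degree ≤ (2 * n : ℕ))
    (heval : ∀ m : ℕ, 1 ≤ m → p.eval (m : ℚ) = omegaCrown n m) :
    ∀ k, 0 ≤ p.coeff k := by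
  refine Crown.finish n (omegaCrown n) (fun m _ => ?_) p heval
  rw [Crown.omega_eq n m hn]
  refine Crown.gen n m hn (fun n => ∑ a : Fin m, (Crown.ZF m n a a).card) fun n => ?_
  rw [Nat.cast_sum, Matrix.trace]
  exact Finset.sum_congr rfl fun a _ => Crown.card_ZF _ m n a a
end

section
/- Let n ≥ 1 and let σ be a cyclically alternating permutation of {1,…,2n}. Suppose a, b ∈ {1,…,2n} with b < a and σ⁻¹(b) > σ⁻¹(a) + 1 (that is, the pair of positions (σ⁻¹(a), σ⁻¹(b)) is a relevant inversion of σ). Then there exists k with b ≤ k < a such that σ⁻¹(k) > σ⁻¹(k+1) + 1 (that is, k ∈ CSwap(σ)). -/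
/-- The cyclic successor of an index/value in `Fin m` (i.e. `i + 1 mod m`). -/
def cyclicSucc {m : ℕ} (i : Fin m) : Fin m := ⟨((i : ℕ) + 1) % m, Nat.mod_lt _ i.pos⟩

/-- `σ` (a permutation of `{0,…,2n−1}`, standing for `{1,…,2n}`) is cyclically
alternating: `σ_1 < σ_2 > σ_3 < ⋯ > σ_{2n−1} < σ_{2n} > σ_1` (0-indexed, with
indices taken cyclically). -/
def IsCAP {n : ℕ} (σ : Equiv.Perm (Fin (2 * n))) : Prop :=
  ∀ i : Fin (2 * n),
    (Even (i : ℕ) → σ i < σ (cyclicSucc i)) ∧ (Odd (i : ℕ) → σ (cyclicSucc i) < σ i)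

/-- The cyclic swap set of `σ`: values `k` (with `k+1` also a value, i.e.
`k ∈ {1,…,2n−1}` in 1-indexed terms) such that `σ⁻¹(k) > σ⁻¹(k+1) + 1`. -/
def CSwapSet {n : ℕ} (σ : Equiv.Perm (Fin (2 * n))) : Set (Fin (2 * n)) :=
  {k | (k : ℕ) + 1 < 2 * n ∧
    ((σ⁻¹ (cyclicSucc k) : Fin (2 * n)) : ℕ) + 1 < ((σ⁻¹ k : Fin (2 * n)) : ℕ)}

/-- The cyclic swap statistic `cswap(σ)`. -/
noncomputable def cswap {n : ℕ} (σ : Equiv.Perm (Fin (2 * n))) : ℕ := (CSwapSet σ).ncard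

theorem aux_cross (f : ℕ → ℕ) (t b d : ℕ) (h1 : t ≤ f b) (h2 : f (b + d) < t) :
    ∃ k, b ≤ k ∧ k < b + d ∧ t ≤ f k ∧ f (k + 1) < t := by
  induction d with
  | zero => simp at h2; omega
  | succ d ih =>
    by_cases h : f (b + d) < t
    · obtain ⟨k, hk⟩ := ih h
      exact ⟨k, hk.1, by omega, hk.2.2⟩
    · exact ⟨b + d, by omega, by omega, by omega, h2⟩

/-- Lemma 5.5: if `(σ⁻¹(a), σ⁻¹(b))` is a relevant inversion of the cyclically
alternating permutation `σ` (i.e. `b < a` and `σ⁻¹(b) > σ⁻¹(a) + 1`), then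
there is `k` with `b ≤ k < a` and `k ∈ CSwap(σ)`. -/
theorem cswap_exists_of_relevant_inversion (n : ℕ) (hn : 1 ≤ n)
    (σ : Equiv.Perm (Fin (2 * n))) (hσ : IsCAP σ)
    (a b : Fin (2 * n)) (hba : b < a)
    (hrel : ((σ⁻¹ a : Fin (2 * n)) : ℕ) + 1 < ((σ⁻¹ b : Fin (2 * n)) : ℕ)) :
    ∃ k : Fin (2 * n), b ≤ k ∧ k < a ∧ k ∈ CSwapSet σ := by
  by_contra hno
  push Not at hno
  have key : ∀ t : ℕ, ((σ⁻¹ a : Fin (2 * n)) : ℕ) < t → t ≤ ((σ⁻¹ b : Fin (2 * n)) : ℕ) →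
      Even t := by
    intro t hta htb
    let f : ℕ → ℕ := fun v => if h : v < 2 * n then ((σ⁻¹ ⟨v, h⟩ : Fin (2 * n)) : ℕ) else 0
    have hf : ∀ v : Fin (2 * n), f v = ((σ⁻¹ v : Fin (2 * n)) : ℕ) := by
      intro v
      simp [f]
    have hab : (b : ℕ) + ((a : ℕ) - b) = a := by
      have : (b : ℕ) < a := hba
      omega
    obtain ⟨k, hbk, hka, hk1, hk2⟩ := aux_cross f t b ((a : ℕ) - b)
      (by rw [hf]; exact htb) (by rw [hab, hf]; exact hta)
    rw [hab] at hka
    have hk : k + 1 < 2 * n := by have := a.isLt; omega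
    have e1 := hf ⟨k, by omega⟩
    have e2 := hf ⟨k + 1, hk⟩
    have hs : cyclicSucc (⟨k, by omega⟩ : Fin (2 * n)) = ⟨k + 1, hk⟩ := by
      apply Fin.ext
      simp [cyclicSucc, Nat.mod_eq_of_lt hk]
    have h3 := hno ⟨k, by omega⟩ hbk hka
    have h4 : ¬ (f (k + 1) + 1 < f k) := by
      intro h
      apply h3
      refine ⟨hk, ?_⟩
      rw [hs]
      simp only at e1 e2
      omega
    by_contra hodd
    have hev : Even (f (k + 1)) := by
      rw [Nat.not_even_iff] at hodd
      rw [Nat.even_iff]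
      omega
    simp only at e1 e2
    rw [e2] at hev
    have h5 := (hσ (σ⁻¹ ⟨k + 1, hk⟩)).1 hev
    have h6 : cyclicSucc (σ⁻¹ ⟨k + 1, hk⟩) = σ⁻¹ (⟨k, by omega⟩ : Fin (2 * n)) := by
      apply Fin.ext
      have hlt := (σ⁻¹ (⟨k, by omega⟩ : Fin (2 * n))).isLt
      have he : ((σ⁻¹ (⟨k + 1, hk⟩ : Fin (2 * n)) : Fin (2 * n)) : ℕ) + 1
          = ((σ⁻¹ (⟨k, by omega⟩ : Fin (2 * n)) : Fin (2 * n)) : ℕ) := by omega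
      simp only [cyclicSucc]
      rw [he, Nat.mod_eq_of_lt hlt]
    rw [h6, Equiv.Perm.inv_def, Equiv.apply_symm_apply, Equiv.apply_symm_apply] at h5
    have : k + 1 < k := h5
    omega
  have k1 := key ((σ⁻¹ b : Fin (2 * n)) : ℕ) (by omega) le_rfl
  have k2 := key (((σ⁻¹ b : Fin (2 * n)) : ℕ) - 1) (by omega) (by omega)
  rw [Nat.even_iff] at k1 k2
  omega
end
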